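/- arXiv:2308.11121 — 4 statements merged into one kernel-verified Lean document; each statement's English description precedes it below -/
import Mathlib

section
/- Let n ≥ 1, R > 0, ρ ∈ (0,1], and let ω ⊆ B_R be a Lebesgue measurable set with |ω| > 0, where B_r denotes the open ball of radius r centered at the origin in ℝⁿ. Then there exist constants C > 0 and θ ∈ (0,1) such that for every M > 0 and every real-analytic function ξ : B_{2R} → ℝ satisfying |∂^a ξ(x)| ≤ M · (ρR)^{−|a|} · |a|! for all x ∈ B_{2R} and all multi-indices a ∈ ℕⁿ, one has sup_{x ∈ B_R} |ξ(x)| ≤ C · M^{1−θ} · ( ∫_{ω} |ξ(x)| dx )^{θ}. -/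
open MeasureTheory Metric

/-!
Let `m = μ ω / 2`. By Markov's inequality `‖ξ‖` is at most `ε = 2 / μ ω * ∫ ω ‖ξ‖` on a subset `W`
of `ω` of measure at least `m`. Contracting the domain `Ω` towards a point `x` by a ratio close to
`1` loses little measure, so by Fubini some segment of `Ω` issued from `x` meets `W` in a set of
length bounded below in terms of `m` and `Ω` only. This reduces the theorem to one real variable.

On a short interval the Taylor polynomial of degree `k` approximates the function up to `M * qᵏ`
with `q` small, while Lagrange interpolation at well separated points of the small set bounds the
polynomial by `Kᵏ * ε`; optimising in `k` gives a power of `ε / M`. An interval of twice the length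
is covered by at most three moves between intervals overlapping in half their length, each of which
raises the power by a factor `θ`.
-/

open Set Filter Topology Polynomial
open scoped Nat

section Interpolation

variable {x : ℕ → ℝ} {s δ η y : ℝ} {j k : ℕ}

lemma exists_volume_le_add_volume_inter_Ici (hs : 0 < s) {E : Set ℝ} (hbdd : BddBelow E)
    (hne : E.Nonempty) :
    ∃ y ∈ E, volume E ≤ ENNReal.ofReal (2 * s) + volume (E ∩ Ici (y + s)) := by
  obtain ⟨y, hy, hys⟩ := exists_lt_of_csInf_lt hne (lt_add_of_pos_right (sInf E) hs)
  have hcover : E ⊆ Icc (sInf E) (sInf E + 2 * s) ∪ (E ∩ Ici (y + s)) := fun z hz ↦ by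
    rcases le_or_gt (y + s) z with h | h
    · exact .inr ⟨hz, h⟩
    · exact .inl ⟨csInf_le hbdd hz, by linarith⟩
  refine ⟨y, hy, (measure_mono hcover).trans ((measure_union_le _ _).trans_eq ?_)⟩
  rw [Real.volume_Icc, add_sub_cancel_left]

lemma exists_separated_points (hs : 0 < s) (k : ℕ) {E : Set ℝ} (hbdd : BddBelow E)
    (hE : ENNReal.ofReal (2 * k * s) < volume E) :
    ∃ x : ℕ → ℝ, (∀ i ≤ k, x i ∈ E) ∧ MonotoneOn (fun i : ℕ ↦ x i - i * s) (Iic k) := by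
  have hne : E.Nonempty := nonempty_of_measure_ne_zero (pos_of_gt hE).ne'
  induction k generalizing E with
  | zero =>
    obtain ⟨y, hy⟩ := hne
    refine ⟨fun _ ↦ y, fun _ _ ↦ hy, fun i hi j hj _ ↦ ?_⟩
    rw [Nat.le_zero.1 hi, Nat.le_zero.1 hj]
  | succ k ih =>
    obtain ⟨y, hy, hyE⟩ := exists_volume_le_add_volume_inter_Ici hs hbdd hne
    have hrest : ENNReal.ofReal (2 * k * s) < volume (E ∩ Ici (y + s)) := by
      have hlt := hE.trans_le hyE
      rw [Nat.cast_succ, show 2 * ((k : ℝ) + 1) * s = 2 * s + 2 * k * s by ring,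
        ENNReal.ofReal_add (by positivity) (by positivity)] at hlt
      exact (ENNReal.add_lt_add_iff_left ENNReal.ofReal_ne_top).1 hlt
    obtain ⟨x, hxE, hx⟩ := ih (hbdd.mono inter_subset_left) hrest
      (nonempty_of_measure_ne_zero (pos_of_gt hrest).ne')
    have hx_mono : ∀ {i j : ℕ}, i ≤ j → j ≤ k → x i - i * s ≤ x j - j * s :=
      fun hij hj ↦ hx (hij.trans hj) hj hij
    refine ⟨fun i ↦ Nat.casesOn i y x, ?_, ?_⟩
    · rintro (_ | i) hi
      · exact hy
      · exact (hxE i (Nat.le_of_succ_le_succ hi)).1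
    · rintro (_ | i) - (_ | j) hj hij
      · rfl
      · have hy0 : y + s ≤ x 0 := (hxE 0 (Nat.zero_le k)).2
        have h0j := hx_mono (Nat.zero_le j) (Nat.le_of_succ_le_succ hj)
        suffices y - (0 : ℕ) * s ≤ x j - (j + 1 : ℕ) * s from this
        push_cast at h0j ⊢
        linarith
      · exact absurd hij (by simp)
      · have hij' := hx_mono (Nat.le_of_succ_le_succ hij) (Nat.le_of_succ_le_succ hj)
        push_cast at hij' ⊢
        linarith

lemma abs_sub_mul_le_abs_sub_of_separated (hx : MonotoneOn (fun i : ℕ ↦ x i - i * s) (Iic k))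
    {i : ℕ} (hi : i ≤ k) (hj : j ≤ k) : |(j : ℝ) - i| * s ≤ |x j - x i| := by
  wlog hij : i ≤ j generalizing i j
  · rw [abs_sub_comm, abs_sub_comm (x j)]
    exact this hj hi (le_of_not_ge hij)
  · have := hx hi hj hij
    rw [abs_of_nonneg (sub_nonneg.2 (Nat.cast_le.2 hij))]
    exact le_trans (by linarith) (le_abs_self _)

lemma injOn_of_separated (hs : 0 < s) (hx : MonotoneOn (fun i : ℕ ↦ x i - i * s) (Iic k)) :
    InjOn x (Finset.range (k + 1)) := fun i hi j hj hij ↦ by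
  rw [Finset.mem_coe, Finset.mem_range_succ_iff] at hi hj
  have h := abs_sub_mul_le_abs_sub_of_separated hx hi hj
  rw [hij, sub_self, abs_zero] at h
  have := abs_nonpos_iff.1 (nonpos_of_mul_nonpos_left h hs)
  exact_mod_cast (sub_eq_zero.1 this).symm

lemma prod_range_erase_abs_sub (hj : j ≤ k) :
    ∏ i ∈ (Finset.range (k + 1)).erase j, |(j : ℝ) - i| = j ! * (k - j)! := by
  induction k, hj using Nat.le_induction with
  | base =>
    rw [Finset.range_add_one, Finset.erase_insert Finset.notMem_range_self,
      ← Finset.prod_range_reflect, ← Finset.prod_range_add_one_eq_factorial]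
    simp only [tsub_self, Nat.factorial_zero, Nat.cast_one, mul_one, Nat.cast_prod]
    refine Finset.prod_congr rfl fun i hi ↦ ?_
    have hij : i + 1 ≤ j := Finset.mem_range.1 hi
    rw [Nat.sub_sub, add_comm 1, Nat.cast_sub hij, sub_sub_cancel, Nat.abs_cast]
  | succ k hjk ih =>
    rw [Finset.range_add_one, Finset.erase_insert_of_ne (by omega),
      Finset.prod_insert (by simp), ih, Nat.succ_sub hjk, Nat.factorial_succ, abs_sub_comm,
      ← Nat.cast_sub (by omega), Nat.abs_cast, Nat.succ_sub hjk]
    push_cast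
    ring

lemma abs_eval_lagrangeBasis_le (hs : 0 < s)
    (hx : MonotoneOn (fun i : ℕ ↦ x i - i * s) (Iic k)) (hy : ∀ i ≤ k, |y - x i| ≤ δ)
    (hj : j ≤ k) :
    |(Lagrange.basis (Finset.range (k + 1)) x j).eval y| ≤ (δ / s) ^ k / k ! * k.choose j := by
  have hfactor : ∀ i ∈ (Finset.range (k + 1)).erase j,
      |(Lagrange.basisDivisor (x j) (x i)).eval y| ≤ δ / s * |(j : ℝ) - i|⁻¹ := fun i hi ↦ by
    obtain ⟨hij, hik⟩ := Finset.mem_erase.1 hi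
    rw [Finset.mem_range_succ_iff] at hik
    have hpos : 0 < |(j : ℝ) - i| := abs_pos.2 (sub_ne_zero.2 (Nat.cast_injective.ne hij.symm))
    have hsep := abs_sub_mul_le_abs_sub_of_separated hx hik hj
    rw [Lagrange.basisDivisor, eval_mul, eval_C, eval_sub, eval_X, eval_C, abs_mul, abs_inv]
    calc |x j - x i|⁻¹ * |y - x i| ≤ (|(j : ℝ) - i| * s)⁻¹ * δ := by
          gcongr
          exact hy i hik
      _ = δ / s * |(j : ℝ) - i|⁻¹ := by field_simp
  rw [Lagrange.basis, eval_prod, Finset.abs_prod]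
  calc ∏ i ∈ (Finset.range (k + 1)).erase j, |(Lagrange.basisDivisor (x j) (x i)).eval y|
      ≤ ∏ i ∈ (Finset.range (k + 1)).erase j, (δ / s * |(j : ℝ) - i|⁻¹) :=
        Finset.prod_le_prod (fun _ _ ↦ abs_nonneg _) hfactor
    _ = (δ / s) ^ k / (j ! * (k - j)!) := by
        rw [Finset.prod_mul_distrib, Finset.prod_const, Finset.prod_inv_distrib,
          prod_range_erase_abs_sub hj, Finset.card_erase_of_mem (Finset.mem_range_succ_iff.2 hj),
          Finset.card_range, Nat.succ_sub_one, ← div_eq_mul_inv]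
    _ = (δ / s) ^ k / k ! * k.choose j := by
        rw [Nat.cast_choose ℝ hj]
        field_simp

lemma abs_eval_le_of_separated {P : ℝ[X]} (hP : P.natDegree ≤ k) (hs : 0 < s)
    (hx : MonotoneOn (fun i : ℕ ↦ x i - i * s) (Iic k)) (hy : ∀ i ≤ k, |y - x i| ≤ δ)
    (hPx : ∀ i ≤ k, |P.eval (x i)| ≤ η) :
    |P.eval y| ≤ η * ((2 * δ / s) ^ k / k !) := by
  have hη : 0 ≤ η := (abs_nonneg _).trans (hPx 0 (Nat.zero_le k))
  have hdeg : P.degree < (Finset.range (k + 1)).card := by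
    rw [Finset.card_range]
    exact degree_le_natDegree.trans_lt (by exact_mod_cast Nat.lt_succ_of_le hP)
  rw [Lagrange.eq_interpolate (injOn_of_separated hs hx) hdeg, Lagrange.interpolate_apply,
    eval_finsetSum]
  calc |∑ j ∈ Finset.range (k + 1), (C (P.eval (x j)) * Lagrange.basis _ x j).eval y|
      ≤ ∑ j ∈ Finset.range (k + 1), η * ((δ / s) ^ k / k ! * k.choose j) := by
        refine (Finset.abs_sum_le_sum_abs _ _).trans (Finset.sum_le_sum fun j hj ↦ ?_)
        rw [Finset.mem_range_succ_iff] at hj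
        rw [eval_mul, eval_C, abs_mul]
        exact mul_le_mul (hPx j hj) (abs_eval_lagrangeBasis_le hs hx hy hj) (abs_nonneg _) hη
    _ = η * ((δ / s) ^ k / k ! * 2 ^ k) := by
        rw [← Finset.mul_sum, ← Finset.mul_sum, ← Nat.cast_sum, Nat.sum_range_choose]
        norm_cast
    _ = η * ((2 * δ / s) ^ k / k !) := by
        rw [mul_div_assoc, mul_pow]
        ring

lemma abs_eval_le_of_volume_le {P : ℝ[X]} (hP : P.natDegree ≤ k) {a ℓ lam : ℝ} (hℓ : 0 < ℓ)
    (hlam : 0 < lam) {E : Set ℝ} (hE : E ⊆ Icc a (a + ℓ))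
    (hvol : ENNReal.ofReal (lam * ℓ) ≤ volume E) (hPE : ∀ t ∈ E, |P.eval t| ≤ η)
    (hy : y ∈ Icc a (a + ℓ)) : |P.eval y| ≤ 3 * (12 / lam) ^ k * η := by
  set s := lam * ℓ / (2 * (k + 1)) with hs_def
  have hs : 0 < s := by positivity
  obtain ⟨x, hxE, hx⟩ := exists_separated_points hs k ⟨a, fun z hz ↦ (hE hz).1⟩ <|
    hvol.trans_lt' <| (ENNReal.ofReal_lt_ofReal_iff (by positivity)).2 <| by
      have : 2 * (k + 1) * s = lam * ℓ := by rw [hs_def]; field_simp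
      linarith
  have hη : 0 ≤ η := (abs_nonneg _).trans (hPE _ (hxE 0 (Nat.zero_le k)))
  have hdist : ∀ i ≤ k, |y - x i| ≤ ℓ := fun i hi ↦ by
    have := hE (hxE i hi)
    rw [abs_le]
    constructor <;> linarith [this.1, this.2, hy.1, hy.2]
  have hpow : ((k : ℝ) + 1) ^ k / k ! ≤ 3 ^ (k + 1) := by
    calc ((k : ℝ) + 1) ^ k / k ! ≤ Real.exp (k + 1) :=
          Real.pow_div_factorial_le_exp _ (by positivity) k
      _ = Real.exp 1 ^ (k + 1) := by rw [← Real.exp_nat_mul]; push_cast; rw [mul_one]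
      _ ≤ 3 ^ (k + 1) := by
          gcongr
          exact Real.exp_one_lt_three.le
  calc |P.eval y| ≤ η * ((2 * ℓ / s) ^ k / k !) :=
        abs_eval_le_of_separated hP hs hx hdist fun i hi ↦ hPE _ (hxE i hi)
    _ = η * ((4 / lam) ^ k * (((k : ℝ) + 1) ^ k / k !)) := by
        rw [show 2 * ℓ / s = 4 / lam * (k + 1) by rw [hs_def]; field_simp; norm_num, mul_pow,
          mul_div_assoc]
    _ ≤ η * ((4 / lam) ^ k * 3 ^ (k + 1)) := by gcongr
    _ = 3 * (12 / lam) ^ k * η := by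
        rw [show 12 / lam = 4 / lam * 3 by ring, mul_pow]
        ring

end Interpolation

lemma exists_polynomial_eval_eq_taylorWithinEval (f : ℝ → ℝ) (k : ℕ) (s : Set ℝ) (x₀ : ℝ) :
    ∃ P : ℝ[X], P.natDegree ≤ k ∧ ∀ x, P.eval x = taylorWithinEval f k s x₀ x := by
  refine ⟨∑ j ∈ Finset.range (k + 1),
    C ((j ! : ℝ)⁻¹ * iteratedDerivWithin j f s x₀) * (X - C x₀) ^ j,
    natDegree_sum_le_of_forall_le _ _ fun j hj ↦ ?_, fun x ↦ ?_⟩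
  · refine (natDegree_C_mul_le _ _).trans ?_
    rw [natDegree_pow, natDegree_X_sub_C, mul_one]
    exact Finset.mem_range_succ_iff.1 hj
  · rw [taylor_within_apply, eval_finsetSum]
    refine Finset.sum_congr rfl fun j _ ↦ ?_
    simp only [eval_mul, eval_C, eval_pow, eval_sub, eval_X, smul_eq_mul]
    ring

lemma exists_rpow_le_of_forall_pow_le {K : ℝ} (hK : 1 < K) :
    ∃ θ ∈ Ioo (0 : ℝ) 1, ∀ {B u ε : ℝ}, 0 ≤ B → 0 ≤ ε → u ≤ B →
      (∀ n : ℕ, u ≤ B * (K ^ n * ε + (1 / 2) ^ n)) → u ≤ 4 * B * ε ^ θ := by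
  have hK2 : 1 < 2 * K := by linarith
  set θ := Real.logb (2 * K) 2
  have hθ0 : 0 < θ := Real.logb_pos hK2 one_lt_two
  have hθ1 : θ < 1 := by
    rw [← Real.logb_self_eq_one hK2]
    exact Real.logb_lt_logb hK2 two_pos (by linarith)
  have hKθ : (2 * K) ^ θ = 2 := Real.rpow_logb (by positivity) hK2.ne' two_pos
  refine ⟨θ, ⟨hθ0, hθ1⟩, fun {B u ε} hB hε huB h ↦ ?_⟩
  rcases hε.eq_or_lt with rfl | hε
  · have hlim : Tendsto (fun n : ℕ ↦ B * ((1 / 2 : ℝ) ^ n)) atTop (𝓝 (B * 0)) :=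
      (tendsto_pow_atTop_nhds_zero_of_lt_one (by norm_num) (by norm_num)).const_mul B
    have hu := ge_of_tendsto' hlim fun n ↦ by simpa using h n
    simpa [Real.zero_rpow hθ0.ne'] using hu
  rcases le_or_gt 1 ε with hε1 | hε1
  · have := mul_le_mul_of_nonneg_left (Real.one_le_rpow hε1 hθ0.le) hB
    linarith
  obtain ⟨n, hn, hn'⟩ := exists_nat_pow_near ((one_le_inv₀ hε).2 hε1.le) hK2
  have hmain : K ^ n * ε ≤ (1 / 2) ^ n := by
    have : (2 * K) ^ n * ε ≤ 1 := by rwa [← one_div, le_div_iff₀ hε] at hn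
    calc K ^ n * ε = (1 / 2) ^ n * ((2 * K) ^ n * ε) := by
          rw [← mul_assoc, ← mul_pow, one_div, inv_mul_cancel_left₀ two_ne_zero]
      _ ≤ (1 / 2) ^ n := mul_le_of_le_one_right (by positivity) this
  have hεθ : (1 / 2 : ℝ) ^ (n + 1) ≤ ε ^ θ := by
    calc (1 / 2 : ℝ) ^ (n + 1) = (((2 * K) ^ (n + 1))⁻¹) ^ θ := by
          rw [Real.inv_rpow (by positivity), ← Real.rpow_pow_comm (by positivity), hKθ, one_div,
            inv_pow]
      _ ≤ ε ^ θ := by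
          gcongr
          exact inv_le_of_inv_le₀ hε hn'.le
  calc u ≤ B * ((1 / 2) ^ n + (1 / 2) ^ n) := (h n).trans (by gcongr)
    _ = 4 * B * (1 / 2) ^ (n + 1) := by ring
    _ ≤ 4 * B * ε ^ θ := by gcongr

section CauchyBound

open scoped ContDiff

variable {E F G : Type*} [NormedAddCommGroup E] [NormedSpace ℝ E] [NormedAddCommGroup F]
  [NormedSpace ℝ F] [NormedAddCommGroup G] [NormedSpace ℝ G]

/-- Cauchy estimates `‖Dᵏf‖ ≤ M * Aᵏ * k!` at every point of `s`: a quantitative form of analyticity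
with radius of convergence at least a constant times `A⁻¹`. The derivatives are full Fréchet
derivatives of `f`, not derivatives within `s`. -/
def CauchyBoundOn (M A : ℝ) (f : E → F) (s : Set E) : Prop :=
  ∀ x ∈ s, ContDiffAt ℝ ∞ f x ∧ ∀ k : ℕ, ‖iteratedFDeriv ℝ k f x‖ ≤ M * A ^ k * k !

namespace CauchyBoundOn

variable {M M' A A' : ℝ} {f : E → F} {s t : Set E} {x z : E}

lemma norm_le (hf : CauchyBoundOn M A f s) (hx : x ∈ s) : ‖f x‖ ≤ M := by
  simpa using (hf x hx).2 0

lemma nonneg (hf : CauchyBoundOn M A f s) (hx : x ∈ s) : 0 ≤ M :=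
  (norm_nonneg _).trans (hf.norm_le hx)

lemma mono (hf : CauchyBoundOn M A f s) (hMM' : M ≤ M') (hA : 0 ≤ A) (hAA' : A ≤ A')
    (hts : t ⊆ s) : CauchyBoundOn M' A' f t := fun x hx ↦
  ⟨(hf x (hts hx)).1, fun k ↦ ((hf x (hts hx)).2 k).trans <| by
    have := (hf.nonneg (hts hx)).trans hMM'
    gcongr⟩

lemma clm_comp (hf : CauchyBoundOn M A f s) (g : F →L[ℝ] G) :
    CauchyBoundOn (‖g‖ * M) A (g ∘ f) s := fun x hx ↦
  ⟨g.contDiff.contDiffAt.comp x (hf x hx).1, fun k ↦ by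
    rw [mul_assoc, mul_assoc, ← mul_assoc M]
    exact (g.norm_iteratedFDeriv_comp_left ((hf x hx).1) (by exact_mod_cast le_top)).trans
      (mul_le_mul_of_nonneg_left ((hf x hx).2 k) (norm_nonneg g))⟩

lemma integrableOn [MeasurableSpace E] [OpensMeasurableSpace E] [SecondCountableTopology E]
    {μ : Measure E} (hf : CauchyBoundOn M A f s) (hs : MeasurableSet s) (hμs : μ s ≠ ⊤) :
    IntegrableOn f s μ := by
  have hcont : ContinuousOn f s := fun x hx ↦ (hf x hx).1.continuousAt.continuousWithinAt
  exact .of_bound hμs.lt_top (hcont.aestronglyMeasurable hs) M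
    ((ae_restrict_mem hs).mono fun x hx ↦ hf.norm_le hx)

lemma comp_lineMap (hf : CauchyBoundOn M A f s) (hs : IsOpen s) (x z : E) :
    CauchyBoundOn M (A * ‖z - x‖) (f ∘ AffineMap.lineMap x z)
      (AffineMap.lineMap (k := ℝ) x z ⁻¹' s) := by
  intro t ht
  set L : ℝ →L[ℝ] E := ContinuousLinearMap.toSpanSingleton ℝ (z - x) with hL
  set s' : Set E := (x + ·) ⁻¹' s
  have hline : ∀ t : ℝ, AffineMap.lineMap x z t = x + L t := fun t ↦ by
    simp [hL, AffineMap.lineMap_apply, add_comm]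
  have hcomp : f ∘ AffineMap.lineMap x z = (fun v ↦ f (x + v)) ∘ L :=
    funext fun t ↦ congrArg f (hline t)
  have hs' : IsOpen s' := hs.preimage (by fun_prop)
  have hLs' : IsOpen (L ⁻¹' s') := hs'.preimage L.continuous
  have hLt : L t ∈ s' := by rwa [mem_preimage, hline] at ht
  have hsmooth : ContDiffOn ℝ ∞ (fun v ↦ f (x + v)) s' := fun v hv ↦
    ((hf (x + v) hv).1.comp v (by fun_prop)).contDiffWithinAt
  refine ⟨?_, fun k ↦ ?_⟩
  · rw [hcomp]
    exact (hsmooth.contDiffAt (hs'.mem_nhds hLt)).comp t L.contDiff.contDiffAt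
  · have hderiv := L.iteratedFDerivWithin_comp_right hsmooth hs'.uniqueDiffOn hLs'.uniqueDiffOn
      hLt (i := k) (by exact_mod_cast le_top)
    rw [iteratedFDerivWithin_of_isOpen k hLs' hLt, iteratedFDerivWithin_of_isOpen k hs' hLt,
      iteratedFDeriv_comp_add_left] at hderiv
    rw [hcomp, hderiv]
    calc _ ≤ ‖iteratedFDeriv ℝ k f (x + L t)‖ * ∏ _i : Fin k, ‖L‖ :=
          ContinuousMultilinearMap.norm_compContinuousLinearMap_le _ _
      _ ≤ M * A ^ k * k ! * ∏ _i : Fin k, ‖L‖ := by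
          gcongr
          exact (hf _ hLt).2 k
      _ = M * (A * ‖z - x‖) ^ k * k ! := by
          rw [Finset.prod_const, Finset.card_univ, Fintype.card_fin,
            ContinuousLinearMap.norm_toSpanSingleton, mul_pow]
          ring

end CauchyBoundOn

end CauchyBound

section RealLine

variable {M A C a b ℓ lam ε θ y : ℝ} {f : ℝ → ℝ} {E : Set ℝ}

lemma CauchyBoundOn.exists_polynomial_abs_sub_le (hf : CauchyBoundOn M A f (Icc a (a + ℓ)))
    (hA : 0 ≤ A) (hℓ : 0 < ℓ) (k : ℕ) :
    ∃ P : ℝ[X], P.natDegree ≤ k ∧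
      ∀ y ∈ Icc a (a + ℓ), |f y - P.eval y| ≤ M * (2 * A * ℓ) ^ (k + 1) := by
  obtain ⟨P, hP, hPf⟩ := exists_polynomial_eval_eq_taylorWithinEval f k (Icc a (a + ℓ)) a
  refine ⟨P, hP, fun y hy ↦ ?_⟩
  have haℓ : a < a + ℓ := lt_add_of_pos_right a hℓ
  have hM : 0 ≤ M := hf.nonneg hy
  have hsmooth : ∀ n : ℕ, ∀ t ∈ Icc a (a + ℓ), ContDiffAt ℝ n f t := fun n t ht ↦
    (hf t ht).1.of_le (by exact_mod_cast le_top)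
  have hderiv : ∀ t ∈ Icc a (a + ℓ), ‖iteratedDerivWithin (k + 1) f (Icc a (a + ℓ)) t‖ ≤
      M * A ^ (k + 1) * (k + 1)! := fun t ht ↦ by
    rw [iteratedDerivWithin_eq_iteratedDeriv (uniqueDiffOn_Icc haℓ) (hsmooth _ t ht) ht,
      ← norm_iteratedFDeriv_eq_norm_iteratedDeriv]
    exact (hf t ht).2 (k + 1)
  have htaylor := taylor_mean_remainder_bound haℓ.le
    (fun t ht ↦ (hsmooth (k + 1) t ht).contDiffWithinAt) hy hderiv
  rw [hPf, ← Real.norm_eq_abs]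
  have hy0 : 0 ≤ y - a := sub_nonneg.2 hy.1
  calc _ ≤ M * A ^ (k + 1) * (k + 1)! * (y - a) ^ (k + 1) / k ! := htaylor
    _ ≤ M * A ^ (k + 1) * (k + 1)! * ℓ ^ (k + 1) / k ! := by
        gcongr
        linarith [hy.2]
    _ = M * ((k + 1 : ℕ) * (A * ℓ) ^ (k + 1)) := by
        rw [Nat.factorial_succ, mul_pow]
        push_cast
        field_simp
    _ ≤ M * (2 ^ (k + 1) * (A * ℓ) ^ (k + 1)) := by
        gcongr
        exact_mod_cast Nat.lt_two_pow_self.le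
    _ = M * (2 * A * ℓ) ^ (k + 1) := by rw [← mul_pow, mul_assoc]

lemma CauchyBoundOn.abs_le_of_volume_le (hf : CauchyBoundOn M A f (Icc a (a + ℓ)))
    (hA : 0 ≤ A) (hℓ : 0 < ℓ) (hlam : 0 < lam) (hlam1 : lam ≤ 1)
    (hsmall : 2 * A * ℓ * (12 / lam) ≤ 1 / 2) (hE : E ⊆ Icc a (a + ℓ))
    (hvol : ENNReal.ofReal (lam * ℓ) ≤ volume E) (hfE : ∀ t ∈ E, |f t| ≤ M * ε)
    (hy : y ∈ Icc a (a + ℓ)) (k : ℕ) :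
    |f y| ≤ 3 * M * ((12 / lam) ^ k * ε + (1 / 2) ^ k) := by
  obtain ⟨P, hP, hPf⟩ := hf.exists_polynomial_abs_sub_le hA hℓ k
  have hM : 0 ≤ M := hf.nonneg hy
  set K := 12 / lam
  have hK : 1 ≤ K := (one_le_div hlam).2 (by linarith)
  set q := 2 * A * ℓ
  have hq0 : 0 ≤ q := by positivity
  have hq : q ≤ 1 / 2 := (le_mul_of_one_le_right hq0 hK).trans hsmall
  set r := M * q ^ (k + 1)
  have hr : 0 ≤ r := by positivity
  have hPE : ∀ t ∈ E, |P.eval t| ≤ M * ε + r := fun t ht ↦ by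
    have := abs_sub_abs_le_abs_sub (P.eval t) (f t)
    rw [abs_sub_comm] at this
    linarith [hPf t (hE ht), hfE t ht]
  have hPy := abs_eval_le_of_volume_le hP hℓ hlam hE hvol hPE hy
  have hKr : K ^ k * r ≤ M * (1 / 2) ^ k * (1 / 2) := by
    calc K ^ k * r = M * (q * K) ^ k * q := by rw [mul_pow]; ring
      _ ≤ M * (1 / 2) ^ k * (1 / 2) := by gcongr
  have hrK : r ≤ K ^ k * r := le_mul_of_one_le_left hr (one_le_pow₀ hK)
  calc |f y| ≤ |f y - P.eval y| + |P.eval y| := by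
        simpa using abs_add_le (f y - P.eval y) (P.eval y)
    _ ≤ r + 3 * K ^ k * (M * ε + r) := add_le_add (hPf y hy) hPy
    _ ≤ 4 * (K ^ k * r) + 3 * M * (K ^ k * ε) := by linarith
    _ ≤ 3 * M * (K ^ k * ε + (1 / 2) ^ k) := by
        have : 0 ≤ M * (1 / 2) ^ k := by positivity
        linarith

/-- On intervals of length `ℓ`, a function with Cauchy bounds `M`, `A` that is at most `M * ε` on a
subset of density at least `lam` is at most `M * (C * ε ^ θ)` everywhere. The interval and `M` are
quantified inside, so that the constants survive translation and scaling of `f`; the subset `E` may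
be non-measurable, `volume E` being its outer measure. -/
def PropagatesSmallness (A lam ℓ C θ : ℝ) : Prop :=
  ∀ ⦃M a ε : ℝ⦄ ⦃f : ℝ → ℝ⦄ ⦃E : Set ℝ⦄,
    CauchyBoundOn M A f (Icc a (a + ℓ)) → E ⊆ Icc a (a + ℓ) →
    ENNReal.ofReal (lam * ℓ) ≤ volume E → 0 ≤ ε → (∀ t ∈ E, |f t| ≤ M * ε) →
    ∀ y ∈ Icc a (a + ℓ), |f y| ≤ M * (C * ε ^ θ)

lemma exists_propagatesSmallness_of_small (hA : 0 ≤ A) (hℓ : 0 < ℓ) (hlam : 0 < lam)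
    (hlam1 : lam ≤ 1) (hsmall : 2 * A * ℓ * (12 / lam) ≤ 1 / 2) :
    ∃ C > 0, ∃ θ ∈ Ioo (0 : ℝ) 1, PropagatesSmallness A lam ℓ C θ := by
  have hK : 1 < 12 / lam := (one_lt_div hlam).2 (by linarith)
  obtain ⟨θ, hθ, h⟩ := exists_rpow_le_of_forall_pow_le hK
  refine ⟨12, by norm_num, θ, hθ, fun M a ε f E hf hE hvol hε hfE y hy ↦ ?_⟩
  have hM : 0 ≤ M := hf.nonneg hy
  have hfy : |f y| ≤ M := hf.norm_le hy
  linarith [h (by positivity : 0 ≤ 3 * M) hε (hfy.trans (by linarith))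
    (hf.abs_le_of_volume_le hA hℓ hlam hlam1 hsmall hE hvol hfE hy)]

lemma exists_half_volume_le (hlam : 0 ≤ lam) (hℓ : 0 ≤ ℓ) (hE : E ⊆ Icc a (a + 2 * ℓ))
    (hvol : ENNReal.ofReal (lam * (2 * ℓ)) ≤ volume E) :
    ∃ b, (b = a ∨ b = a + ℓ) ∧ ENNReal.ofReal (lam * ℓ) ≤ volume (E ∩ Icc b (b + ℓ)) := by
  by_contra! hlt
  have hcover : E ⊆ E ∩ Icc a (a + ℓ) ∪ E ∩ Icc (a + ℓ) (a + ℓ + ℓ) := by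
    rw [← inter_union_distrib_left, Icc_union_Icc_eq_Icc (by linarith) (by linarith), add_assoc,
      ← two_mul]
    exact subset_inter subset_rfl hE
  refine hvol.not_gt (((measure_mono hcover).trans (measure_union_le _ _)).trans_lt ?_)
  rw [mul_left_comm, two_mul, ENNReal.ofReal_add (by positivity) (by positivity)]
  exact ENNReal.add_lt_add (hlt a (.inl rfl)) (hlt (a + ℓ) (.inr rfl))

namespace PropagatesSmallness

lemma abs_le_of_overlap (h : PropagatesSmallness A lam ℓ C θ) (hlam2 : lam ≤ 1 / 2) (hℓ : 0 ≤ ℓ)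
    (hf : CauchyBoundOn M A f (Icc b (b + ℓ))) (hε : 0 ≤ ε)
    (hfa : ∀ t ∈ Icc a (a + ℓ), |f t| ≤ M * ε) (hab : |a - b| ≤ ℓ / 2) :
    ∀ t ∈ Icc b (b + ℓ), |f t| ≤ M * (C * ε ^ θ) := by
  refine h hf inter_subset_right ?_ hε fun t ht ↦ hfa t ht.1
  rw [Icc_inter_Icc, Real.volume_Icc, min_add_add_right]
  refine ENNReal.ofReal_le_ofReal ?_
  have hlamℓ : lam * ℓ ≤ 1 / 2 * ℓ := by gcongr
  have hmax := max_sub_min_eq_abs' a b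
  linarith

lemma double (h : PropagatesSmallness A lam ℓ C θ) (hlam : 0 ≤ lam) (hlam2 : lam ≤ 1 / 2)
    (hℓ : 0 ≤ ℓ) (hC : 0 ≤ C) :
    PropagatesSmallness A lam (2 * ℓ) (C * C ^ θ * C ^ (θ * θ)) (θ ^ 3) := by
  intro M a ε f E hf hE hvol hε hfE y hy
  have hsubf : ∀ {b}, a ≤ b → b ≤ a + ℓ → CauchyBoundOn M A f (Icc b (b + ℓ)) :=
    fun hab hba t ht ↦ hf t (Icc_subset_Icc hab (by linarith) ht)
  obtain ⟨b, hb, hbvol⟩ := exists_half_volume_le hlam hℓ hE hvol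
  obtain ⟨hab, hba, hbmid⟩ : a ≤ b ∧ b ≤ a + ℓ ∧ |b - (a + ℓ / 2)| ≤ ℓ / 2 := by
    rcases hb with rfl | rfl <;> refine ⟨by linarith, by linarith, abs_le.2 ⟨?_, ?_⟩⟩ <;> linarith
  -- `E` has density `lam` in one half; the middle interval shares length `ℓ / 2` with each half.
  have hhalf : ∀ t ∈ Icc b (b + ℓ), |f t| ≤ M * (C * ε ^ θ) :=
    h (hsubf hab hba) inter_subset_right hbvol hε fun t ht ↦ hfE t ht.1
  have hmid : ∀ t ∈ Icc (a + ℓ / 2) (a + ℓ / 2 + ℓ), |f t| ≤ M * (C * (C * ε ^ θ) ^ θ) :=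
    h.abs_le_of_overlap hlam2 hℓ (hsubf (by linarith) (by linarith)) (by positivity) hhalf hbmid
  have hfull : ∀ c, a ≤ c → c ≤ a + ℓ → ∀ t ∈ Icc c (c + ℓ),
      |f t| ≤ M * (C * (C * (C * ε ^ θ) ^ θ) ^ θ) := fun c hac hca ↦
    h.abs_le_of_overlap hlam2 hℓ (hsubf hac hca) (by positivity) hmid
      (abs_le.2 ⟨by linarith, by linarith⟩)
  have hpow : C * (C * (C * ε ^ θ) ^ θ) ^ θ = C * C ^ θ * C ^ (θ * θ) * ε ^ θ ^ 3 := by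
    rw [Real.mul_rpow hC (by positivity), Real.mul_rpow hC (by positivity),
      Real.mul_rpow (by positivity) (by positivity), ← Real.rpow_mul hC, ← Real.rpow_mul hε,
      ← Real.rpow_mul hε]
    ring_nf
  rw [← hpow]
  rcases le_total y (a + ℓ) with hya | hya
  · exact hfull a le_rfl (by linarith) y ⟨hy.1, hya⟩
  · exact hfull (a + ℓ) (by linarith) le_rfl y ⟨hya, by linarith [hy.2]⟩

end PropagatesSmallness

theorem exists_propagatesSmallness (hA : 0 ≤ A) (hlam : 0 < lam) (hlam2 : lam ≤ 1 / 2)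
    (hℓ : 0 < ℓ) : ∃ C > 0, ∃ θ ∈ Ioo (0 : ℝ) 1, PropagatesSmallness A lam ℓ C θ := by
  obtain ⟨k, hk⟩ := pow_unbounded_of_one_lt (2 * (2 * A * ℓ * (12 / lam))) one_lt_two
  have hsmall : 2 * A * (ℓ / 2 ^ k) * (12 / lam) ≤ 1 / 2 := by
    rw [show 2 * A * (ℓ / 2 ^ k) * (12 / lam) = 2 * A * ℓ * (12 / lam) / 2 ^ k by ring,
      div_le_iff₀ (by positivity)]
    linarith
  have hdouble : ∀ j : ℕ, ∃ C > 0, ∃ θ ∈ Ioo (0 : ℝ) 1,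
      PropagatesSmallness A lam (2 ^ j * (ℓ / 2 ^ k)) C θ := fun j ↦ by
    induction j with
    | zero =>
      rw [pow_zero, one_mul]
      exact exists_propagatesSmallness_of_small hA (by positivity) hlam (by linarith) hsmall
    | succ j ih =>
      obtain ⟨C, hC, θ, hθ, h⟩ := ih
      rw [pow_succ', mul_assoc]
      exact ⟨_, by positivity, _, ⟨pow_pos hθ.1 3, pow_lt_one₀ hθ.1.le hθ.2 three_ne_zero⟩,
        h.double hlam.le hlam2 (by positivity) hC.le⟩
  rw [← mul_div_cancel₀ ℓ (pow_ne_zero k (two_ne_zero (α := ℝ)))]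
  exact hdouble k

end RealLine

section Sublevel

variable {α F : Type*} [MeasurableSpace α] {μ : Measure α} [NormedAddCommGroup F] {f : α → F}
  {s : Set α}

lemma measure_restrict_lt_norm_le_half (hμs : μ s ≠ ⊤) (hf : IntegrableOn f s μ) :
    (μ.restrict s) {x | 2 / μ.real s * ∫ y in s, ‖f y‖ ∂μ < ‖f x‖} ≤ μ s / 2 := by
  set c := 2 / μ.real s * ∫ y in s, ‖f y‖ ∂μ with hc_def
  set B := {x | c < ‖f x‖}
  rcases eq_or_ne ((μ.restrict s) B) 0 with hB | hB
  · simp [hB]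
  have : Fact (μ s < ⊤) := ⟨hμs.lt_top⟩
  have hμB : 0 < (μ.restrict s).real B := ENNReal.toReal_pos hB (measure_ne_top _ _)
  have hV : 0 < μ.real s :=
    hμB.trans_le ((measureReal_mono (subset_univ B)).trans_eq (measureReal_restrict_apply_univ s))
  have hmarkov : (μ.restrict s).real B * c < ∫ y in s, ‖f y‖ ∂μ :=
    (setIntegral_gt_gt (by positivity) hf.norm.integrableOn hB).trans_le
      (setIntegral_le_integral hf.norm (.of_forall fun _ ↦ norm_nonneg _))
  have hreal : (μ.restrict s).real B ≤ μ.real s / 2 := by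
    by_contra! hlt
    refine hmarkov.not_ge ?_
    calc ∫ y in s, ‖f y‖ ∂μ = μ.real s / 2 * c := by rw [hc_def]; field_simp
      _ ≤ (μ.restrict s).real B * c := by gcongr
  rwa [← ENNReal.toReal_le_toReal (measure_ne_top _ _) (by finiteness), ENNReal.toReal_div]

lemma exists_half_measure_norm_le (hs : NullMeasurableSet s μ) (hμs : μ s ≠ ⊤)
    (hf : IntegrableOn f s μ) :
    ∃ t ⊆ s, MeasurableSet t ∧ μ s / 2 ≤ μ t ∧
      ∀ x ∈ t, ‖f x‖ ≤ 2 / μ.real s * ∫ y in s, ‖f y‖ ∂μ := by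
  set B := {x | 2 / μ.real s * ∫ y in s, ‖f y‖ ∂μ < ‖f x‖}
  have : Fact (μ s < ⊤) := ⟨hμs.lt_top⟩
  have hB : NullMeasurableSet B (μ.restrict s) :=
    nullMeasurableSet_lt aemeasurable_const hf.aestronglyMeasurable.norm.aemeasurable
  obtain ⟨t, hts, ht, htB⟩ :=
    ((nullMeasurableSet_restrict hs).1 hB.compl).exists_measurable_subset_ae_eq
  refine ⟨t, hts.trans inter_subset_right, ht, ?_, fun x hx ↦ not_lt.1 (hts hx).1⟩
  calc μ s / 2 = μ s - μ s / 2 := (ENNReal.sub_half hμs).symm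
    _ ≤ μ s - (μ.restrict s) B := by
        gcongr
        exact measure_restrict_lt_norm_le_half hμs hf
    _ = (μ.restrict s) Bᶜ := by
        rw [measure_compl₀ hB (measure_ne_top _ _), Measure.restrict_apply_univ]
    _ = μ t := by rw [measure_congr htB, Measure.restrict_apply₀ hB.compl]

end Sublevel

section Segments

open AffineMap

variable {E : Type*} [NormedAddCommGroup E] [NormedSpace ℝ E] [FiniteDimensional ℝ E]
  [MeasurableSpace E] [BorelSpace E] (μ : Measure E) [μ.IsAddHaarMeasure] {Ω W : Set E} {x : E}

lemma measure_le_measure_lineMap_mem_add (hΩ : Convex ℝ Ω) (hμΩ : μ Ω ≠ ⊤) (hW : W ⊆ Ω)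
    (hx : x ∈ Ω) {t : ℝ} (ht : t ∈ Icc (0 : ℝ) 1) :
    μ W ≤ μ {z ∈ Ω | lineMap x z t ∈ W} + ENNReal.ofReal (1 - t ^ Module.finrank ℝ E) * μ Ω := by
  set D : E →ᵃ[ℝ] E := homothety x t
  have hD : ∀ z, D z = lineMap x z t := homothety_eq_lineMap x t
  have hpow : t ^ Module.finrank ℝ E ≤ 1 := pow_le_one₀ ht.1 ht.2
  have hpow0 : 0 ≤ t ^ Module.finrank ℝ E := pow_nonneg ht.1 _
  have hμD : ∀ s : Set E, μ (D '' s) = ENNReal.ofReal (t ^ Module.finrank ℝ E) * μ s := fun s ↦ by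
    rw [Measure.addHaar_image_homothety, abs_of_nonneg hpow0]
  have hDΩ : D '' Ω ⊆ Ω := image_subset_iff.2 fun z hz ↦ by
    rw [mem_preimage, hD]
    exact hΩ.lineMap_mem hx hz ht
  have hcover : W ⊆ D '' {z ∈ Ω | lineMap x z t ∈ W} ∪ Ω \ D '' Ω := fun w hw ↦ by
    by_cases hwD : w ∈ D '' Ω
    · obtain ⟨z, hz, rfl⟩ := hwD
      exact .inl ⟨z, ⟨hz, by rwa [← hD]⟩, rfl⟩
    · exact .inr ⟨hW hw, hwD⟩
  have hdiff : μ (Ω \ D '' Ω) = ENNReal.ofReal (1 - t ^ Module.finrank ℝ E) * μ Ω := by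
    rw [measure_sdiff hDΩ ((hΩ.affine_image D).nullMeasurableSet μ)
      (measure_ne_top_of_subset hDΩ hμΩ), hμD, ENNReal.ofReal_sub _ hpow0, ENNReal.ofReal_one,
      ENNReal.sub_mul fun _ _ ↦ hμΩ, one_mul]
  calc μ W ≤ μ (D '' {z ∈ Ω | lineMap x z t ∈ W}) + μ (Ω \ D '' Ω) :=
        (measure_mono hcover).trans (measure_union_le _ _)
    _ ≤ _ := by
        rw [hμD, hdiff]
        gcongr
        exact mul_le_of_le_one_left' (ENNReal.ofReal_le_one.2 hpow)

lemma exists_half_le_measure_lineMap_mem (hΩ : Convex ℝ Ω) (hμΩ : μ Ω ≠ ⊤) {m : ENNReal}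
    (hm : m ≠ 0) :
    ∃ t₀ ∈ Ico (0 : ℝ) 1, ∀ x ∈ Ω, ∀ W ⊆ Ω, m ≤ μ W → ∀ t ∈ Icc t₀ 1,
      m / 2 ≤ μ {z ∈ Ω | lineMap x z t ∈ W} := by
  have hlim : Tendsto (fun t : ℝ ↦ ENNReal.ofReal (1 - t ^ Module.finrank ℝ E) * μ Ω) (𝓝[<] 1)
      (𝓝 0) := by
    have h : Tendsto (fun t : ℝ ↦ ENNReal.ofReal (1 - t ^ Module.finrank ℝ E)) (𝓝 1) (𝓝 0) :=
      (ENNReal.continuous_ofReal.comp (by fun_prop)).tendsto' _ _ (by simp)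
    simpa using ENNReal.Tendsto.mul_const (h.mono_left nhdsWithin_le_nhds) (.inr hμΩ)
  obtain ⟨t₀, ht₀m, ht₀⟩ := ((hlim.eventually_lt_const (ENNReal.half_pos hm)).and
    (Ico_mem_nhdsLT one_pos)).exists
  refine ⟨t₀, ht₀, fun x hx W hW hmW t ht ↦ ?_⟩
  have hm_top : m ≠ ⊤ := ne_top_of_le_ne_top hμΩ (hmW.trans (measure_mono hW))
  have ht01 : t ∈ Icc (0 : ℝ) 1 := ⟨ht₀.1.trans ht.1, ht.2⟩
  refine (ENNReal.add_le_add_iff_right (ENNReal.div_ne_top hm_top two_ne_zero)).1 ?_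
  calc m / 2 + m / 2 = m := ENNReal.add_halves m
    _ ≤ μ {z ∈ Ω | lineMap x z t ∈ W} + ENNReal.ofReal (1 - t ^ Module.finrank ℝ E) * μ Ω :=
        hmW.trans (measure_le_measure_lineMap_mem_add μ hΩ hμΩ hW hx ht01)
    _ ≤ μ {z ∈ Ω | lineMap x z t ∈ W} + ENNReal.ofReal (1 - t₀ ^ Module.finrank ℝ E) * μ Ω := by
        have := ht₀.1
        have := ht.1
        gcongr
    _ ≤ μ {z ∈ Ω | lineMap x z t ∈ W} + m / 2 := by gcongr

lemma exists_le_volume_preimage_lineMap (hΩ : Convex ℝ Ω) (hμΩ : μ Ω ≠ ⊤) {m : ENNReal}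
    (hm : m ≠ 0) :
    ∃ c > 0, ∀ x ∈ Ω, ∀ W ⊆ Ω, MeasurableSet W → m ≤ μ W →
      ∃ z ∈ Ω, c ≤ volume (Icc (0 : ℝ) 1 ∩ lineMap x z ⁻¹' W) := by
  obtain ⟨t₀, ht₀, hslice⟩ := exists_half_le_measure_lineMap_mem μ hΩ hμΩ hm
  have ht₀1 : volume (Icc t₀ 1) ≠ 0 := by simpa using ht₀.2
  refine ⟨m / 2 * volume (Icc t₀ 1) / μ Ω,
    ENNReal.div_pos (mul_ne_zero (ENNReal.half_pos hm).ne' ht₀1) hμΩ, fun x hx W hWΩ hW hmW ↦ ?_⟩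
  have hμΩ0 : μ Ω ≠ 0 := (hm.bot_lt.trans_le (hmW.trans (measure_mono hWΩ))).ne'
  set S : Set (E × ℝ) := {p | lineMap x p.1 p.2 ∈ W}
  have hS : MeasurableSet S := by
    refine hW.preimage (Continuous.measurable ?_)
    simp only [lineMap_apply_module]
    fun_prop
  have hfubini : ∫⁻ z in Ω, volume.restrict (Icc t₀ 1) (lineMap x z ⁻¹' W) ∂μ =
      ∫⁻ t in Icc t₀ 1, μ.restrict Ω {z | lineMap x z t ∈ W} :=
    (Measure.prod_apply hS).symm.trans (Measure.prod_apply_symm hS)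
  have hlower : m / 2 * volume (Icc t₀ 1) ≤
      ∫⁻ z in Ω, volume.restrict (Icc t₀ 1) (lineMap x z ⁻¹' W) ∂μ := by
    rw [hfubini, ← setLIntegral_const]
    refine setLIntegral_mono_ae' measurableSet_Icc (.of_forall fun t ht ↦ ?_)
    rw [Measure.restrict_apply₀' (hΩ.nullMeasurableSet μ), inter_comm]
    exact hslice x hx W hWΩ hmW t ht
  have hfin : ∫⁻ z in Ω, volume.restrict (Icc t₀ 1) (lineMap x z ⁻¹' W) ∂μ ≠ ⊤ := by
    refine ne_top_of_le_ne_top ?_ (lintegral_mono fun z ↦ measure_mono (subset_univ _))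
    rw [setLIntegral_const, Measure.restrict_apply_univ]
    exact ENNReal.mul_ne_top measure_Icc_lt_top.ne hμΩ
  obtain ⟨z, hz, hle⟩ := exists_setLAverage_le hμΩ0 (hΩ.nullMeasurableSet μ) hfin
  refine ⟨z, hz, (ENNReal.div_le_div_right hlower _).trans ?_⟩
  rw [← setLAverage_eq]
  refine hle.trans ?_
  rw [Measure.restrict_apply' measurableSet_Icc, inter_comm]
  gcongr
  exact ht₀.1

end Segments

section Convex

open AffineMap

variable {E F : Type*} [NormedAddCommGroup E] [NormedSpace ℝ E] [NormedAddCommGroup F]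
  [NormedSpace ℝ F] {Ω W ω : Set E} {ξ : E → F} {A lam C θ M ε : ℝ} {x z : E}

lemma PropagatesSmallness.norm_le_of_lineMap (h : PropagatesSmallness (A * diam Ω) lam 1 C θ)
    (hA : 0 ≤ A) (hΩ : Convex ℝ Ω) (hΩo : IsOpen Ω) (hΩb : Bornology.IsBounded Ω)
    (hξ : CauchyBoundOn M A ξ Ω) (hx : x ∈ Ω) (hz : z ∈ Ω)
    (hW : ENNReal.ofReal lam ≤ volume (Icc (0 : ℝ) 1 ∩ lineMap x z ⁻¹' W)) (hε : 0 ≤ ε)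
    (hξW : ∀ w ∈ W, ‖ξ w‖ ≤ M * ε) : ‖ξ x‖ ≤ M * (C * ε ^ θ) := by
  obtain ⟨g, hg, hgx⟩ := exists_dual_vector'' ℝ (ξ x)
  have hgξ : CauchyBoundOn M A (g ∘ ξ) Ω := (hξ.clm_comp g).mono
    (mul_le_of_le_one_left (hξ.nonneg hx) hg) hA le_rfl subset_rfl
  set f : ℝ → ℝ := (g ∘ ξ) ∘ lineMap x z
  have hf : CauchyBoundOn M (A * diam Ω) f (Icc 0 (0 + 1)) := by
    refine (hgξ.comp_lineMap hΩo x z).mono le_rfl (by positivity) ?_ fun t ht ↦ ?_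
    · rw [← dist_eq_norm]
      gcongr
      exact dist_le_diam_of_mem hΩb hz hx
    · rw [zero_add] at ht
      exact hΩ.lineMap_mem hx hz ht
  have hfW : ∀ t ∈ Icc (0 : ℝ) 1 ∩ lineMap x z ⁻¹' W, |f t| ≤ M * ε := fun t ht ↦
    (g.le_of_opNorm_le hg _).trans (by simpa using hξW _ ht.2)
  have hf0 : |f 0| = ‖ξ x‖ := by
    simp only [f, Function.comp_apply, lineMap_apply_zero, hgx, RCLike.ofReal_real_eq_id, id_eq,
      abs_norm]
  exact hf0 ▸ h hf (by simp) (by rwa [mul_one]) hε hfW 0 (by simp)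

variable [FiniteDimensional ℝ E] [MeasurableSpace E] [BorelSpace E] (μ : Measure E)
  [μ.IsAddHaarMeasure]

theorem exists_norm_le_of_le_measure (hΩ : Convex ℝ Ω) (hΩo : IsOpen Ω)
    (hΩb : Bornology.IsBounded Ω) (hA : 0 ≤ A) {m : ENNReal} (hm : m ≠ 0) :
    ∃ C > 0, ∃ θ ∈ Ioo (0 : ℝ) 1, ∀ ⦃M ε : ℝ⦄ ⦃ξ : E → F⦄ ⦃W : Set E⦄, CauchyBoundOn M A ξ Ω →
      W ⊆ Ω → MeasurableSet W → m ≤ μ W → 0 ≤ ε → (∀ w ∈ W, ‖ξ w‖ ≤ M * ε) →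
      ∀ x ∈ Ω, ‖ξ x‖ ≤ M * (C * ε ^ θ) := by
  obtain ⟨c, hc, hsegment⟩ := exists_le_volume_preimage_lineMap μ hΩ hΩb.measure_lt_top.ne hm
  obtain ⟨lam, hlam, hlam2, hlamc⟩ :
      ∃ lam : ℝ, 0 < lam ∧ lam ≤ 1 / 2 ∧ ENNReal.ofReal lam ≤ c := by
    obtain ⟨r, hr, hrc⟩ := ENNReal.lt_iff_exists_nnreal_btwn.1 hc
    refine ⟨min r (1 / 2), lt_min (by exact_mod_cast hr) one_half_pos, min_le_right _ _, ?_⟩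
    exact (ENNReal.ofReal_le_ofReal (min_le_left _ _)).trans (by simpa using hrc.le)
  obtain ⟨C, hC, θ, hθ, hprop⟩ := exists_propagatesSmallness
    (mul_nonneg hA diam_nonneg : 0 ≤ A * diam Ω) hlam hlam2 one_pos
  refine ⟨C, hC, θ, hθ, fun M ε ξ W hξ hWΩ hW hmW hε hξW x hx ↦ ?_⟩
  obtain ⟨z, hz, hcz⟩ := hsegment x hx W hWΩ hW hmW
  exact hprop.norm_le_of_lineMap hA hΩ hΩo hΩb hξ hx hz (hlamc.trans hcz) hε hξW

theorem stmt_3_general (hΩ : Convex ℝ Ω) (hΩo : IsOpen Ω) (hΩb : Bornology.IsBounded Ω)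
    (hA : 0 ≤ A) (hsub : ω ⊆ Ω) (hω : NullMeasurableSet ω μ) (hpos : 0 < μ ω) :
    ∃ C > 0, ∃ θ ∈ Ioo (0 : ℝ) 1, ∀ M > 0, ∀ ξ : E → F, CauchyBoundOn M A ξ Ω →
      ∀ x ∈ Ω, ‖ξ x‖ ≤ C * M ^ (1 - θ) * (∫ y in ω, ‖ξ y‖ ∂μ) ^ θ := by
  have hμω : μ ω ≠ ⊤ := (hΩb.subset hsub).measure_lt_top.ne
  obtain ⟨C, hC, θ, hθ, hprop⟩ :=
    exists_norm_le_of_le_measure (F := F) μ hΩ hΩo hΩb hA (ENNReal.half_pos hpos.ne').ne'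
  have hV : 0 < μ.real ω := ENNReal.toReal_pos hpos.ne' hμω
  refine ⟨C * (2 / μ.real ω) ^ θ, by positivity, θ, hθ, fun M hM ξ hξ x hx ↦ ?_⟩
  obtain ⟨W, hWω, hW, hμW, hξW⟩ := exists_half_measure_norm_le hω hμω
    ((hξ.integrableOn hΩo.measurableSet hΩb.measure_lt_top.ne).mono_set hsub)
  set I := ∫ y in ω, ‖ξ y‖ ∂μ
  have hI : 0 ≤ I := by positivity
  calc ‖ξ x‖ ≤ M * (C * (2 / μ.real ω * I / M) ^ θ) :=
        hprop hξ (hWω.trans hsub) hW hμW (by positivity)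
          (fun w hw ↦ (hξW w hw).trans_eq (mul_div_cancel₀ _ hM.ne').symm) x hx
    _ = C * (2 / μ.real ω) ^ θ * M ^ (1 - θ) * I ^ θ := by
        rw [Real.div_rpow (by positivity) hM.le, Real.mul_rpow (by positivity) hI,
          Real.rpow_sub hM, Real.rpow_one]
        ring

end Convex

theorem stmt_3 (n : ℕ) (hn : 1 ≤ n) (R : ℝ) (hR : 0 < R) (ρ : ℝ) (hρ : ρ ∈ Set.Ioc (0:ℝ) 1)
    (ω : Set (EuclideanSpace ℝ (Fin n)))
    (hsub : ω ⊆ ball (0 : EuclideanSpace ℝ (Fin n)) R)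
    (hmeas : MeasurableSet ω) (hpos : 0 < volume ω) :
    ∃ C > 0, ∃ θ ∈ Set.Ioo (0:ℝ) 1,
      ∀ M > 0, ∀ ξ : EuclideanSpace ℝ (Fin n) → ℝ,
        AnalyticOnNhd ℝ ξ (ball (0 : EuclideanSpace ℝ (Fin n)) (2 * R)) →
        (∀ x ∈ ball (0 : EuclideanSpace ℝ (Fin n)) (2 * R), ∀ k : ℕ,
          ‖iteratedFDeriv ℝ k ξ x‖ ≤ M * (ρ * R)⁻¹ ^ k * (Nat.factorial k)) →
        ∀ x ∈ ball (0 : EuclideanSpace ℝ (Fin n)) R,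
          |ξ x| ≤ C * M ^ (1 - θ) * (∫ y in ω, |ξ y|) ^ θ := by
  obtain ⟨C, hC, θ, hθ, h⟩ := stmt_3_general (F := ℝ) volume (convex_ball 0 R) isOpen_ball
    isBounded_ball (inv_nonneg.2 (mul_pos hρ.1 hR).le) hsub hmeas.nullMeasurableSet hpos
  refine ⟨C, hC, θ, hθ, fun M hM ξ hξ hbound ↦ h M hM ξ fun x hx ↦ ?_⟩
  have hx2 : x ∈ ball 0 (2 * R) := ball_subset_ball (by linarith) hx
  exact ⟨(hξ x hx2).contDiffAt, hbound x hx2⟩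
end

section
/- Let H and U be real Hilbert spaces, let (e_j)_{j∈ℕ} be a Hilbert (orthonormal) basis of H, let (λ_j)_{j∈ℕ} be a sequence of positive reals, and let B : H → U be a bounded linear operator satisfying the spectral-like condition (H) with constants N > 0 and γ ∈ (0,1). Fix T > 0 and a Lebesgue measurable set E ⊆ (0,T) with |E| > 0. For s ≥ 0 define the bounded operator S(s) : H → H by S(s)v := Σ_j e^{−λ_j s} ⟨v, e_j⟩ e_j, and let B* : U → H denote the Hilbert-space adjoint of B. Then there exists a constant C > 0 such that for every y₀ ∈ H there is a Bochner measurable control u : (0,T) → U with ‖u(t)‖_U ≤ C ‖y₀‖_H for almost every t ∈ (0,T), and S(T) y₀ + ∫_0^T χ_E(t) · S(T−t) (B* u(t)) dt = 0 (Bochner integral in H), where χ_E is the characteristic function of E. -/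
open MeasureTheory
open scoped RealInnerProductSpace

/-- The spectral projection `E_λ f = ∑_{λ_j ≤ λ} ⟨f, e_j⟩ e_j` associated with a Hilbert
basis `e` of `H` and a sequence of eigenvalues `lam`. -/
noncomputable def specProj {H : Type*} [NormedAddCommGroup H] [InnerProductSpace ℝ H]
    (e : HilbertBasis ℕ ℝ H) (lam : ℕ → ℝ) (l : ℝ) (f : H) : H :=
  ∑' j, (if lam j ≤ l then ⟪f, e j⟫ else 0) • e j

/-- The diagonal semigroup `S(s) v = ∑_j e^{-λ_j s} ⟨v, e_j⟩ e_j` associated with a Hilbert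
basis `e` of `H` and a sequence of eigenvalues `lam`. -/
noncomputable def diagSemigroup {H : Type*} [NormedAddCommGroup H] [InnerProductSpace ℝ H]
    (e : HilbertBasis ℕ ℝ H) (lam : ℕ → ℝ) (s : ℝ) (v : H) : H :=
  ∑' j, (Real.exp (-(lam j) * s) * ⟪v, e j⟫) • e j

/-! The argument is the Lebeau–Robbiano strategy on a measurable set of times. Let `t` be a density
point of `E`. On the window `[t - r, t - r / 2]` the spectral inequality makes the modes with
`λ i ≤ l` observable from the part of `E` in the first `θ r` units of time, so by duality they can
be brought to zero by a control of size `e^{O(l^γ + θ l r)} / r`. In the rest of the window the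
remaining modes decay by `e^{-(1/2 - θ) l r}`.

Take `r = 2⁻ᵏ` and `l = (2R)ᵏ`, so that `l r = Rᵏ`, while `l^γ = ((2R)^γ)ᵏ` is of lower order for
large `R` because `γ < 1`. For small `θ` the product of each contraction factor with the cost of the
next window then stays bounded, so the concatenated control is bounded and steers the state to zero
at time `t`. -/

open Filter Set Topology
open scoped ENNReal InnerProductSpace

section DiagonalOperator

variable {ι 𝕜 H : Type*} [RCLike 𝕜] [NormedAddCommGroup H] [InnerProductSpace 𝕜 H]
  (e : HilbertBasis ι 𝕜 H)

lemma norm_le_mul_norm_of_norm_repr_le {v w : H} {K : ℝ} (hK : 0 ≤ K)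
    (h : ∀ i, ‖e.repr w i‖ ≤ K * ‖e.repr v i‖) : ‖w‖ ≤ K * ‖v‖ := by
  have hnorm : ‖((K : 𝕜) • v)‖ = K * ‖v‖ := by
    rw [norm_smul, RCLike.norm_ofReal, abs_of_nonneg hK]
  rw [← hnorm, ← e.repr.norm_map w, ← e.repr.norm_map]
  refine lp.norm_mono two_ne_zero fun i => (h i).trans_eq ?_
  rw [map_smul, lp.coeFn_smul, Pi.smul_apply, norm_smul, RCLike.norm_ofReal, abs_of_nonneg hK]

/-- The diagonal operator `v ↦ ∑ i, c i • ⟪e i, v⟫ • e i` with bounded symbol `c`. -/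
noncomputable def diagonalOp (c : lp (fun _ : ι => 𝕜) ∞) : H →L[𝕜] H :=
  e.repr.symm.toContinuousLinearEquiv.toContinuousLinearMap ∘L
    lp.holderL 2 (K := 1) (fun _ : ι => ContinuousLinearMap.mul 𝕜 𝕜) (by simp) c ∘L
    e.repr.toContinuousLinearEquiv.toContinuousLinearMap

@[simp]
lemma repr_diagonalOp (c : lp (fun _ : ι => 𝕜) ∞) (v : H) (i : ι) :
    e.repr (diagonalOp e c v) i = c i * e.repr v i := by
  change e.repr (e.repr.symm _) i = _
  rw [e.repr.apply_symm_apply]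
  rfl

end DiagonalOperator

section DecaySemigroup

variable {ι H : Type*} [NormedAddCommGroup H] [InnerProductSpace ℝ H]
  (e : HilbertBasis ι ℝ H) {lam : ι → ℝ} (hlam : ∀ i, 0 ≤ lam i)

/-- The bounded symbol `i ↦ exp (-λ i * s)` of the diagonal semigroup, frozen at its value at
`s = 0` for negative times, so that it is bounded for every real `s`. -/
noncomputable def decaySymbol (s : ℝ) : lp (fun _ : ι => ℝ) ∞ :=
  ⟨fun i => Real.exp (-(lam i) * max s 0), memℓp_infty ⟨1, by
    rintro _ ⟨i, rfl⟩
    simpa using mul_nonneg (hlam i) (le_max_right s 0)⟩⟩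

/-- The semigroup generated by the diagonal operator with eigenvalues `-λ i`, as a family of
bounded operators. It is extended by the identity to negative times. -/
noncomputable def decaySemigroup (s : ℝ) : H →L[ℝ] H :=
  diagonalOp e (decaySymbol hlam s)

lemma repr_decaySemigroup (s : ℝ) (v : H) (i : ι) :
    e.repr (decaySemigroup e hlam s v) i = Real.exp (-(lam i) * max s 0) * e.repr v i :=
  repr_diagonalOp e _ v i

lemma repr_decaySemigroup_of_nonneg {s : ℝ} (hs : 0 ≤ s) (v : H) (i : ι) :
    e.repr (decaySemigroup e hlam s v) i = Real.exp (-(lam i) * s) * e.repr v i := by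
  rw [repr_decaySemigroup, max_eq_left hs]

lemma norm_decaySemigroup_apply_le (s : ℝ) (v : H) : ‖decaySemigroup e hlam s v‖ ≤ ‖v‖ := by
  rw [← one_mul ‖v‖]
  refine norm_le_mul_norm_of_norm_repr_le e zero_le_one fun i => ?_
  rw [repr_decaySemigroup, norm_mul, Real.norm_of_nonneg (Real.exp_pos _).le]
  gcongr
  simpa using mul_nonneg (hlam i) (le_max_right s 0)

lemma decaySemigroup_decaySemigroup {s t : ℝ} (hs : 0 ≤ s) (ht : 0 ≤ t) (v : H) :
    decaySemigroup e hlam s (decaySemigroup e hlam t v) = decaySemigroup e hlam (s + t) v := by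
  refine e.repr.injective (lp.ext (funext fun i => ?_))
  simp only [repr_decaySemigroup_of_nonneg, hs, ht, add_nonneg]
  rw [← mul_assoc, ← Real.exp_add, mul_add]

lemma inner_decaySemigroup_left (s : ℝ) (v w : H) :
    ⟪decaySemigroup e hlam s v, w⟫_ℝ = ⟪v, decaySemigroup e hlam s w⟫_ℝ := by
  rw [← e.repr.inner_map_map, ← e.repr.inner_map_map, lp.inner_eq_tsum, lp.inner_eq_tsum]
  refine tsum_congr fun i => ?_
  simp only [repr_decaySemigroup, RCLike.inner_apply, conj_trivial]
  ring

lemma stronglyMeasurable_decaySemigroup_apply [Countable ι] {α : Type*} [MeasurableSpace α]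
    {g : α → ℝ} {f : α → H} (hg : Measurable g) (hf : StronglyMeasurable f) :
    StronglyMeasurable fun t => decaySemigroup e hlam (g t) (f t) := by
  refine stronglyMeasurable_of_tendsto (atTop : Filter (Finset ι))
    (f := fun s t => ∑ i ∈ s, (Real.exp (-(lam i) * max (g t) 0) * ⟪e i, f t⟫_ℝ) • e i)
    (fun s => Finset.stronglyMeasurable_fun_sum s fun i _ => ?_)
    (tendsto_pi_nhds.2 fun t => ?_)
  · have hexp : Measurable fun t => Real.exp (-(lam i) * max (g t) 0) := by fun_prop
    exact (hexp.stronglyMeasurable.mul (stronglyMeasurable_const.inner hf)).smul_const _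
  · have hsum := e.hasSum_repr (decaySemigroup e hlam (g t) (f t))
    simp only [repr_decaySemigroup] at hsum
    simp only [e.repr_apply_apply] at hsum
    exact hsum

lemma diagSemigroup_eq_decaySemigroup {e : HilbertBasis ℕ ℝ H} {lam : ℕ → ℝ}
    (hlam : ∀ j, 0 ≤ lam j) {s : ℝ} (hs : 0 ≤ s) (v : H) :
    diagSemigroup e lam s v = decaySemigroup e hlam s v := by
  rw [← (e.hasSum_repr (decaySemigroup e hlam s v)).tsum_eq]
  simp only [diagSemigroup, repr_decaySemigroup_of_nonneg e hlam hs, e.repr_apply_apply,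
    real_inner_comm]

end DecaySemigroup

section LowFrequency

variable {ι H : Type*} [NormedAddCommGroup H] [InnerProductSpace ℝ H]
  (e : HilbertBasis ι ℝ H) (lam : ι → ℝ) (l : ℝ)

/-- The range of the spectral projection `E_l`: the closed span of the basis vectors `e i` with
`λ i ≤ l`, encoded as the orthogonal complement of the other basis vectors. -/
noncomputable def lowFrequencySpace : Submodule ℝ H :=
  (Submodule.span ℝ (e '' {i | l < lam i}))ᗮ

instance [CompleteSpace H] : CompleteSpace (lowFrequencySpace e lam l) :=
  inferInstanceAs (CompleteSpace (Submodule.span ℝ (e '' {i | l < lam i}))ᗮ)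

variable {e lam l}

lemma mem_lowFrequencySpace_iff {v : H} :
    v ∈ lowFrequencySpace e lam l ↔ ∀ i, l < lam i → e.repr v i = 0 := by
  simp only [lowFrequencySpace, Submodule.mem_orthogonal, e.repr_apply_apply]
  refine ⟨fun h i hi => h _ (Submodule.subset_span ⟨i, hi, rfl⟩), fun h w hw => ?_⟩
  induction hw using Submodule.span_induction with
  | mem w hw => obtain ⟨i, hi, rfl⟩ := hw; exact h i hi
  | zero => exact inner_zero_left v
  | add w w' _ _ hw hw' => rw [inner_add_left, hw, hw', add_zero]
  | smul c w _ hw => rw [inner_smul_left, hw, mul_zero]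

lemma repr_eq_zero_of_mem_lowFrequencySpace_orthogonal {v : H}
    (hv : v ∈ (lowFrequencySpace e lam l)ᗮ) {i : ι} (hi : lam i ≤ l) : e.repr v i = 0 := by
  classical
  rw [e.repr_apply_apply]
  refine hv _ (mem_lowFrequencySpace_iff.2 fun j hj => ?_)
  rw [e.repr_self, lp.single_apply_ne _ _ _ (by rintro rfl; exact hj.not_ge hi)]

lemma specProj_eq_self {e : HilbertBasis ℕ ℝ H} {lam : ℕ → ℝ} {v : H}
    (hv : v ∈ lowFrequencySpace e lam l) : specProj e lam l v = v := by
  rw [specProj, ← (e.hasSum_repr v).tsum_eq]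
  refine tsum_congr fun j => ?_
  split_ifs with hj
  · rw [(e.hasSum_repr v).tsum_eq, e.repr_apply_apply, real_inner_comm]
  · rw [mem_lowFrequencySpace_iff.1 hv j (not_le.1 hj)]

variable (hlam : ∀ i, 0 ≤ lam i)

lemma norm_le_exp_mul_norm_decaySemigroup {v : H} (hv : v ∈ lowFrequencySpace e lam l) {s : ℝ}
    (hs : 0 ≤ s) : ‖v‖ ≤ Real.exp (l * s) * ‖decaySemigroup e hlam s v‖ := by
  refine norm_le_mul_norm_of_norm_repr_le e (Real.exp_pos _).le fun i => ?_
  rw [repr_decaySemigroup_of_nonneg e hlam hs, norm_mul, Real.norm_of_nonneg (Real.exp_pos _).le,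
    ← mul_assoc, ← Real.exp_add]
  rcases le_or_gt (lam i) l with hi | hi
  · refine le_mul_of_one_le_left (norm_nonneg _) (Real.one_le_exp ?_)
    nlinarith
  · simp [mem_lowFrequencySpace_iff.1 hv i hi]

lemma decaySemigroup_mem_lowFrequencySpace {v : H} (hv : v ∈ lowFrequencySpace e lam l) (s : ℝ) :
    decaySemigroup e hlam s v ∈ lowFrequencySpace e lam l :=
  mem_lowFrequencySpace_iff.2 fun i hi => by
    rw [repr_decaySemigroup, mem_lowFrequencySpace_iff.1 hv i hi, mul_zero]

lemma norm_decaySemigroup_le_exp_mul_norm {v : H} (hv : v ∈ (lowFrequencySpace e lam l)ᗮ) {s : ℝ}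
    (hs : 0 ≤ s) : ‖decaySemigroup e hlam s v‖ ≤ Real.exp (-(l * s)) * ‖v‖ := by
  refine norm_le_mul_norm_of_norm_repr_le e (Real.exp_pos _).le fun i => ?_
  rw [repr_decaySemigroup_of_nonneg e hlam hs, norm_mul, Real.norm_of_nonneg (Real.exp_pos _).le]
  rcases le_or_gt (lam i) l with hi | hi
  · simp [repr_eq_zero_of_mem_lowFrequencySpace_orthogonal hv hi]
  · gcongr
    nlinarith

lemma norm_le_exp_mul_norm_observation {U : Type*} [NormedAddCommGroup U]
    [NormedSpace ℝ U] {B : H →L[ℝ] U} {M : ℝ} (hl : 0 ≤ l)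
    (hB : ∀ x ∈ lowFrequencySpace e lam l, ‖x‖ ≤ M * ‖B x‖) {x : H}
    (hx : x ∈ lowFrequencySpace e lam l) {a b t : ℝ}
    (ht : t ∈ Icc a b) :
    ‖x‖ ≤ Real.exp (l * (b - a)) * M * ‖B (decaySemigroup e hlam (b - t) x)‖ := by
  have hlt : l * (b - t) ≤ l * (b - a) := by nlinarith [ht.1]
  calc ‖x‖ ≤ Real.exp (l * (b - t)) * ‖decaySemigroup e hlam (b - t) x‖ :=
        norm_le_exp_mul_norm_decaySemigroup hlam hx (sub_nonneg.2 ht.2)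
    _ ≤ Real.exp (l * (b - a)) * (M * ‖B (decaySemigroup e hlam (b - t) x)‖) := by
        gcongr
        exact hB _ (decaySemigroup_mem_lowFrequencySpace hlam hx _)
    _ = _ := by ring

end LowFrequency

section ObservabilityGramian

variable {α V U : Type*} [NormedAddCommGroup V] [InnerProductSpace ℝ V]
  [NormedAddCommGroup U] [InnerProductSpace ℝ U] {Φ : α → V →L[ℝ] U} {K : ℝ}

lemma norm_inner_apply_le (hK : ∀ t, ‖Φ t‖ ≤ K) (t : α) (z x : V) :
    ‖⟪Φ t z, Φ t x⟫_ℝ‖ ≤ K * ‖z‖ * (K * ‖x‖) :=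
  (norm_inner_le_norm _ _).trans <| mul_le_mul ((Φ t).le_of_opNorm_le (hK t) z)
    ((Φ t).le_of_opNorm_le (hK t) x) (norm_nonneg _)
    (mul_nonneg ((norm_nonneg _).trans (hK t)) (norm_nonneg z))

variable [MeasurableSpace α] {μ : Measure α} [IsFiniteMeasure μ]

lemma integrable_inner_apply (hΦ : ∀ z, AEStronglyMeasurable (fun t => Φ t z) μ)
    (hK : ∀ t, ‖Φ t‖ ≤ K) (z x : V) : Integrable (fun t => ⟪Φ t z, Φ t x⟫_ℝ) μ :=
  .of_bound ((hΦ z).inner (hΦ x)) _ (ae_of_all _ fun t => norm_inner_apply_le hK t z x)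

/-- The observability Gramian `(z, x) ↦ ∫ ⟪Φ t z, Φ t x⟫ ∂μ` of a bounded family of observation
operators, as a bounded bilinear form. -/
noncomputable def observabilityGramian (hΦ : ∀ z, AEStronglyMeasurable (fun t => Φ t z) μ)
    (hK : ∀ t, ‖Φ t‖ ≤ K) : V →L[ℝ] V →L[ℝ] ℝ :=
  LinearMap.mkContinuous₂
    (LinearMap.mk₂ ℝ (fun z x => ∫ t, ⟪Φ t z, Φ t x⟫_ℝ ∂μ)
      (fun z z' x => by
        simp only [map_add, inner_add_left]
        exact integral_add (integrable_inner_apply hΦ hK z x) (integrable_inner_apply hΦ hK z' x))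
      (fun c z x => by
        simp only [map_smul, real_inner_smul_left, integral_const_mul, smul_eq_mul])
      (fun z x x' => by
        simp only [map_add, inner_add_right]
        exact integral_add (integrable_inner_apply hΦ hK z x) (integrable_inner_apply hΦ hK z x'))
      (fun c z x => by
        simp only [map_smul, real_inner_smul_right, integral_const_mul, smul_eq_mul]))
    (K * K * μ.real univ) fun z x => by
      refine (norm_integral_le_of_norm_le_const
        (ae_of_all _ fun t => norm_inner_apply_le hK t z x)).trans_eq ?_
      ring

lemma observabilityGramian_apply (hΦ : ∀ z, AEStronglyMeasurable (fun t => Φ t z) μ)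
    (hK : ∀ t, ‖Φ t‖ ≤ K) (z x : V) :
    observabilityGramian hΦ hK z x = ∫ t, ⟪Φ t z, Φ t x⟫_ℝ ∂μ :=
  rfl

lemma exists_integral_inner_eq_of_observability [CompleteSpace V]
    (hΦ : ∀ z, AEStronglyMeasurable (fun t => Φ t z) μ) (hK : ∀ t, ‖Φ t‖ ≤ K) {c : ℝ} (hc : 0 < c)
    (hobs : ∀ x, c * ‖x‖ ^ 2 ≤ ∫ t, ‖Φ t x‖ ^ 2 ∂μ) (f : StrongDual ℝ V) :
    ∃ z, c * ‖z‖ ≤ ‖f‖ ∧ ∀ x, ∫ t, ⟪Φ t z, Φ t x⟫_ℝ ∂μ = f x := by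
  have hcoer : ∀ x, c * ‖x‖ * ‖x‖ ≤ observabilityGramian hΦ hK x x := fun x => by
    simpa only [observabilityGramian_apply, real_inner_self_eq_norm_sq, mul_assoc, sq]
      using hobs x
  have hG : IsCoercive (observabilityGramian hΦ hK) := ⟨c, hc, hcoer⟩
  set z := hG.continuousLinearEquivOfBilin.symm ((InnerProductSpace.toDual ℝ V).symm f)
  have hz : ∀ x, observabilityGramian hΦ hK z x = f x := fun x => by
    rw [← hG.continuousLinearEquivOfBilin_apply, ContinuousLinearEquiv.apply_symm_apply,
      InnerProductSpace.toDual_symm_apply]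
  refine ⟨z, ?_, fun x => (observabilityGramian_apply hΦ hK z x).symm.trans (hz x)⟩
  rcases (norm_nonneg z).eq_or_lt with h0 | h0
  · rw [← h0, mul_zero]
    exact norm_nonneg f
  · refine le_of_mul_le_mul_right ?_ h0
    calc c * ‖z‖ * ‖z‖ ≤ f z := (hcoer z).trans_eq (hz z)
      _ ≤ ‖f‖ * ‖z‖ := (le_abs_self _).trans (f.le_opNorm z)

lemma exists_setIntegral_inner_eq_of_observability [CompleteSpace V] {ν : Measure α} {F : Set α}
    (hF : MeasurableSet F) (hF₀ : ν F ≠ 0) (hF_fin : ν F ≠ ∞)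
    (hΦ : ∀ z, StronglyMeasurable fun t => Φ t z) (hK : ∀ t, ‖Φ t‖ ≤ K) {κ : ℝ} (hκ : 0 < κ)
    (hobs : ∀ t ∈ F, ∀ x, ‖x‖ ≤ κ * ‖Φ t x‖) (f : StrongDual ℝ V) :
    ∃ z, ‖z‖ ≤ κ ^ 2 / ν.real F * ‖f‖ ∧ ∀ x, ∫ t in F, ⟪Φ t z, Φ t x⟫_ℝ ∂ν = f x := by
  have hpos : 0 < ν.real F := ENNReal.toReal_pos hF₀ hF_fin
  have : IsFiniteMeasure (ν.restrict F) := isFiniteMeasure_restrict.2 hF_fin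
  have hΦm : ∀ z, AEStronglyMeasurable (fun t => Φ t z) (ν.restrict F) :=
    fun z => (hΦ z).aestronglyMeasurable
  have hint : ∀ x, ν.real F / κ ^ 2 * ‖x‖ ^ 2 ≤ ∫ t in F, ‖Φ t x‖ ^ 2 ∂ν := fun x => by
    have hx : ∀ t ∈ F, ‖x‖ ^ 2 / κ ^ 2 ≤ ‖Φ t x‖ ^ 2 := fun t ht => by
      rw [div_le_iff₀' (by positivity), ← mul_pow]
      exact pow_le_pow_left₀ (norm_nonneg x) (hobs t ht x) 2
    have hsq := integrable_inner_apply hΦm hK x x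
    simp only [real_inner_self_eq_norm_sq] at hsq
    calc ν.real F / κ ^ 2 * ‖x‖ ^ 2 = ‖x‖ ^ 2 / κ ^ 2 * ν.real F := by ring
      _ ≤ ∫ t in F, ‖Φ t x‖ ^ 2 ∂ν := setIntegral_ge_of_const_le_real hF hF_fin hx hsq
  obtain ⟨z, hz, hzf⟩ :=
    exists_integral_inner_eq_of_observability hΦm hK (by positivity) hint f
  refine ⟨z, ?_, hzf⟩
  rwa [← inv_div, ← div_eq_inv_mul, le_div_iff₀' (by positivity)]

end ObservabilityGramian

section ControlledState

variable {ι H U : Type*} [NormedAddCommGroup H] [InnerProductSpace ℝ H] [CompleteSpace H]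
  [NormedAddCommGroup U] [InnerProductSpace ℝ U] [CompleteSpace U]
  (e : HilbertBasis ι ℝ H) {lam : ι → ℝ} (hlam : ∀ i, 0 ≤ lam i) (B : H →L[ℝ] U)

/-- The state at time `b` of the mild solution of `y' = -Λ y + χ_F B† u` with `y(a) = v`, where
`Λ` is the diagonal operator with eigenvalues `λ i` and `F ⊆ [a, b]`. -/
noncomputable def controlledState (F : Set ℝ) (a b : ℝ) (v : H) (u : ℝ → U) : H :=
  decaySemigroup e hlam (b - a) v +
    ∫ t in F, decaySemigroup e hlam (b - t) (ContinuousLinearMap.adjoint B (u t))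

/-- Every state `v` at time `a` is brought to norm at most `q * ‖v‖` at time `b` by a control
acting on `F` with norm at most `K * ‖v‖`. -/
def HasContractingControl (F : Set ℝ) (a b K q : ℝ) : Prop :=
  ∀ v, ∃ u : ℝ → U, StronglyMeasurable u ∧ (∀ t, ‖u t‖ ≤ K * ‖v‖) ∧
    ‖controlledState e hlam B F a b v u‖ ≤ q * ‖v‖

variable {F : Set ℝ} {a b c K : ℝ} {u : ℝ → U}

lemma norm_decaySemigroup_adjoint_apply_le (hK : ∀ t, ‖u t‖ ≤ K) (t : ℝ) :
    ‖decaySemigroup e hlam (b - t) (ContinuousLinearMap.adjoint B (u t))‖ ≤ ‖B‖ * K := by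
  refine (norm_decaySemigroup_apply_le e hlam _ _).trans ?_
  rw [← LinearIsometryEquiv.norm_map ContinuousLinearMap.adjoint B]
  exact (ContinuousLinearMap.adjoint B).le_opNorm_of_le (hK t)

lemma integrableOn_decaySemigroup_adjoint_apply [Countable ι] (hu : StronglyMeasurable u)
    (hK : ∀ t, ‖u t‖ ≤ K) (hF : volume F ≠ ∞) :
    IntegrableOn (fun t => decaySemigroup e hlam (b - t) (ContinuousLinearMap.adjoint B (u t)))
      F :=
  .of_bound hF.lt_top
    (stronglyMeasurable_decaySemigroup_apply e hlam (measurable_const.sub measurable_id)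
      ((ContinuousLinearMap.adjoint B).continuous.comp_stronglyMeasurable hu)).aestronglyMeasurable
    _ (ae_of_all _ (norm_decaySemigroup_adjoint_apply_le e hlam B hK))

lemma decaySemigroup_controlledState [Countable ι] (hF : MeasurableSet F) (hFab : F ⊆ Icc a b)
    (hab : a ≤ b) (hbc : b ≤ c) (hu : StronglyMeasurable u) (hK : ∀ t, ‖u t‖ ≤ K) (v : H) :
    decaySemigroup e hlam (c - b) (controlledState e hlam B F a b v u) =
      controlledState e hlam B F a c v u := by
  have hvol : volume F ≠ ∞ := measure_ne_top_of_subset hFab measure_Icc_lt_top.ne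
  rw [controlledState, controlledState, map_add,
    decaySemigroup_decaySemigroup e hlam (sub_nonneg.2 hbc) (sub_nonneg.2 hab), sub_add_sub_cancel,
    ← ContinuousLinearMap.integral_comp_comm _
      (integrableOn_decaySemigroup_adjoint_apply e hlam B hu hK hvol)]
  congr 1
  refine setIntegral_congr_fun hF fun t ht => ?_
  rw [decaySemigroup_decaySemigroup e hlam (sub_nonneg.2 hbc) (sub_nonneg.2 (hFab ht).2),
    sub_add_sub_cancel]

lemma norm_controlledState_le (hK : ∀ t, ‖u t‖ ≤ K) (hF : volume F ≠ ∞) (v : H) :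
    ‖controlledState e hlam B F a b v u‖ ≤ ‖v‖ + ‖B‖ * K * volume.real F :=
  norm_add_le_of_le (norm_decaySemigroup_apply_le e hlam _ v) <|
    norm_setIntegral_le_of_norm_le_const hF.lt_top
      fun t _ => norm_decaySemigroup_adjoint_apply_le e hlam B hK t

lemma inner_controlledState [Countable ι] (hu : StronglyMeasurable u) (hK : ∀ t, ‖u t‖ ≤ K)
    (hF : volume F ≠ ∞) (v x : H) :
    ⟪x, controlledState e hlam B F a b v u⟫_ℝ =
      ⟪x, decaySemigroup e hlam (b - a) v⟫_ℝ +
        ∫ t in F, ⟪u t, B (decaySemigroup e hlam (b - t) x)⟫_ℝ := by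
  rw [controlledState, inner_add_right,
    ← integral_inner (integrableOn_decaySemigroup_adjoint_apply e hlam B hu hK hF)]
  simp only [← inner_decaySemigroup_left, ContinuousLinearMap.adjoint_inner_right,
    real_inner_comm (u _)]

lemma exists_control_mem_orthogonal [Countable ι] (hF : MeasurableSet F) (hF₀ : volume F ≠ 0)
    (hF_fin : volume F ≠ ∞) {V : Submodule ℝ H} [CompleteSpace V] {κ : ℝ} (hκ : 0 < κ)
    (hobs : ∀ t ∈ F, ∀ x ∈ V, ‖x‖ ≤ κ * ‖B (decaySemigroup e hlam (b - t) x)‖) (v : H) :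
    ∃ u : ℝ → U, StronglyMeasurable u ∧ (∀ t, ‖u t‖ ≤ ‖B‖ * (κ ^ 2 / volume.real F) * ‖v‖) ∧
      controlledState e hlam B F a b v u ∈ Vᗮ := by
  let Φ : ℝ → V →L[ℝ] U := fun t => B ∘L decaySemigroup e hlam (b - t) ∘L V.subtypeL
  have hΦ : ∀ z, StronglyMeasurable fun t => Φ t z := fun z =>
    B.continuous.comp_stronglyMeasurable <| stronglyMeasurable_decaySemigroup_apply e hlam
      (measurable_const.sub measurable_id) stronglyMeasurable_const
  have hΦB : ∀ t z, ‖Φ t z‖ ≤ ‖B‖ * ‖z‖ := fun t z =>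
    B.le_opNorm_of_le (norm_decaySemigroup_apply_le e hlam _ _)
  set w := decaySemigroup e hlam (b - a) v
  have hw : ‖innerSL ℝ (-w) ∘L V.subtypeL‖ ≤ ‖v‖ := by
    refine (ContinuousLinearMap.opNorm_comp_le _ _).trans <|
      (mul_le_of_le_one_right (norm_nonneg _) V.norm_subtypeL_le).trans ?_
    rw [innerSL_apply_norm, norm_neg]
    exact norm_decaySemigroup_apply_le e hlam _ v
  obtain ⟨z, hz, hzw⟩ := exists_setIntegral_inner_eq_of_observability hF hF₀ hF_fin hΦ
    (fun t => (Φ t).opNorm_le_bound (norm_nonneg B) (hΦB t)) hκ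
    (fun t ht x => hobs t ht x x.2) (innerSL ℝ (-w) ∘L V.subtypeL)
  refine ⟨fun t => Φ t z, hΦ z, fun t => (hΦB t z).trans ?_, fun x hx => ?_⟩
  · rw [mul_assoc]
    gcongr
    exact hz.trans (by gcongr)
  · rw [inner_controlledState e hlam B (hΦ z) (hΦB · z) hF_fin v x, real_inner_comm]
    refine (congrArg (⟪w, x⟫_ℝ + ·) (hzw ⟨x, hx⟩)).trans ?_
    rw [ContinuousLinearMap.comp_apply, innerSL_apply_apply, inner_neg_left]
    exact add_neg_cancel _

lemma HasContractingControl.mono {K' q q' : ℝ} (h : HasContractingControl e hlam B F a b K q)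
    (hK : K ≤ K') (hq : q ≤ q') : HasContractingControl e hlam B F a b K' q' := fun v => by
  obtain ⟨u, hu, huK, huq⟩ := h v
  exact ⟨u, hu, fun t => (huK t).trans (by gcongr), huq.trans (by gcongr)⟩

lemma hasContractingControl_of_lowFrequency [Countable ι] (hF : MeasurableSet F)
    (hF₀ : volume F ≠ 0) (hFab : F ⊆ Icc a b) (hbc : b ≤ c) {l M : ℝ} (hl : 0 ≤ l) (hM : 0 < M)
    (hB : ∀ x ∈ lowFrequencySpace e lam l, ‖x‖ ≤ M * ‖B x‖) :
    HasContractingControl e hlam B F a c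
      (‖B‖ * ((Real.exp (l * (b - a)) * M) ^ 2 / volume.real F))
      (Real.exp (-(l * (c - b))) * (1 + (‖B‖ * (Real.exp (l * (b - a)) * M)) ^ 2)) := fun v => by
  have hF_fin : volume F ≠ ∞ := measure_ne_top_of_subset hFab measure_Icc_lt_top.ne
  have hab : a ≤ b := nonempty_Icc.1 ((nonempty_of_measure_ne_zero hF₀).mono hFab)
  set κ := Real.exp (l * (b - a)) * M
  obtain ⟨u, hu, hK, hperp⟩ := exists_control_mem_orthogonal e hlam B hF hF₀ hF_fin
    (by positivity : 0 < κ)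
    (fun t ht x hx => norm_le_exp_mul_norm_observation hlam hl hB hx (hFab ht)) v
  refine ⟨u, hu, hK, ?_⟩
  rw [← decaySemigroup_controlledState e hlam B hF hFab hab hbc hu hK, mul_assoc]
  refine (norm_decaySemigroup_le_exp_mul_norm hlam hperp (sub_nonneg.2 hbc)).trans ?_
  gcongr
  have hpos : volume.real F ≠ 0 := (ENNReal.toReal_pos hF₀ hF_fin).ne'
  refine (norm_controlledState_le e hlam B hK hF_fin v).trans_eq ?_
  field_simp

end ControlledState

section Gluing

lemma exists_stronglyMeasurable_eqOn_disjoint {α ι U : Type*} [MeasurableSpace α] [Countable ι]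
    [NormedAddCommGroup U] {F : ι → Set α} (hF : ∀ k, MeasurableSet (F k))
    (hdisj : Pairwise (Function.onFun Disjoint F)) {u : ι → α → U}
    (hu : ∀ k, StronglyMeasurable (u k)) :
    ∃ w : α → U, StronglyMeasurable w ∧ (∀ k, EqOn w (u k) (F k)) ∧
      ∀ t ∉ ⋃ k, F k, w t = 0 := by
  have hsum_of_mem : ∀ k, ∀ t ∈ F k, HasSum (fun j => (F j).indicator (u j) t) (u k t) :=
    fun k t ht => by
      rw [← indicator_of_mem ht (u k)]
      exact hasSum_single k fun j hj =>
        indicator_of_notMem (fun htj => (hdisj hj).le_bot ⟨htj, ht⟩) _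
  have hsum_of_notMem : ∀ t ∉ ⋃ k, F k, HasSum (fun j => (F j).indicator (u j) t) 0 :=
    fun t ht => by
      simp only [indicator_of_notMem fun htj => ht (mem_iUnion_of_mem _ htj), hasSum_zero]
  have hsum : ∀ t, Summable fun j => (F j).indicator (u j) t := fun t => by
    by_cases ht : t ∈ ⋃ k, F k
    · obtain ⟨k, hk⟩ := mem_iUnion.1 ht
      exact (hsum_of_mem k t hk).summable
    · exact (hsum_of_notMem t ht).summable
  refine ⟨fun t => ∑' j, (F j).indicator (u j) t, ?_, fun k t ht => (hsum_of_mem k t ht).tsum_eq,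
    fun t ht => (hsum_of_notMem t ht).tsum_eq⟩
  exact stronglyMeasurable_of_tendsto atTop
    (fun s => Finset.stronglyMeasurable_fun_sum s fun j _ => (hu j).indicator (hF j))
    (tendsto_pi_nhds.2 fun t => (hsum t).hasSum)

variable {ι H U : Type*} [NormedAddCommGroup H] [InnerProductSpace ℝ H] [CompleteSpace H]
  [NormedAddCommGroup U] [InnerProductSpace ℝ U] [CompleteSpace U]
  {e : HilbertBasis ι ℝ H} {lam : ι → ℝ} {hlam : ∀ i, 0 ≤ lam i} {B : H →L[ℝ] U}

lemma exists_trajectory_of_hasContractingControl {a K q : ℕ → ℝ} {F : ℕ → Set ℝ}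
    (hctl : ∀ k, HasContractingControl e hlam B (F k) (a k) (a (k + 1)) (K k) (q k))
    (v₀ : H) :
    ∃ (v : ℕ → H) (u : ℕ → ℝ → U), v 0 = v₀ ∧
      (∀ k, v (k + 1) = controlledState e hlam B (F k) (a k) (a (k + 1)) (v k) (u k)) ∧
      (∀ k, ‖v (k + 1)‖ ≤ q k * ‖v k‖) ∧ (∀ k, StronglyMeasurable (u k)) ∧
      ∀ k t, ‖u k t‖ ≤ K k * ‖v k‖ := by
  choose ctl hmeas hbound hcontr using hctl
  let v : ℕ → H := fun n => n.rec v₀ fun k w =>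
    controlledState e hlam B (F k) (a k) (a (k + 1)) w (ctl k w)
  exact ⟨v, fun k => ctl k (v k), rfl, fun k => rfl, fun k => hcontr k (v k),
    fun k => hmeas k (v k), fun k => hbound k (v k)⟩

lemma controlledState_iUnion_eq_zero [Countable ι] {a : ℕ → ℝ} (ha : Monotone a) {T : ℝ}
    (haT : ∀ k, a k ≤ T) {F : ℕ → Set ℝ} (hF : ∀ k, MeasurableSet (F k))
    (hFa : ∀ k, F k ⊆ Ico (a k) (a (k + 1))) {u : ℝ → U} (hu : StronglyMeasurable u)
    {C : ℝ} (hC : ∀ t, ‖u t‖ ≤ C) {v : ℕ → H} (hv : ∀ k, v (k + 1) =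
      controlledState e hlam B (F k) (a k) (a (k + 1)) (v k) u)
    (hv₀ : Tendsto v atTop (𝓝 0)) :
    controlledState e hlam B (⋃ k, F k) (a 0) T (v 0) u = 0 := by
  have hstep : ∀ k, ∫ t in F k, decaySemigroup e hlam (T - t) (ContinuousLinearMap.adjoint B (u t))
      = decaySemigroup e hlam (T - a (k + 1)) (v (k + 1)) - decaySemigroup e hlam (T - a k) (v k) :=
    fun k => by
      rw [hv, decaySemigroup_controlledState e hlam B (hF k) ((hFa k).trans Ico_subset_Icc_self)
        (ha k.le_succ) (haT _) hu hC, controlledState, add_sub_cancel_left]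
  have hdisj : Pairwise (Function.onFun Disjoint F) := fun i j hij =>
    (ha.pairwise_disjoint_on_Ico_succ hij).mono (hFa i) (hFa j)
  have hsub : ⋃ k, F k ⊆ Icc (a 0) T := iUnion_subset fun k => (hFa k).trans
    (Ico_subset_Icc_self.trans (Icc_subset_Icc (ha k.zero_le) (haT _)))
  have hvol : volume (⋃ k, F k) ≠ ∞ := measure_ne_top_of_subset hsub measure_Icc_lt_top.ne
  have hsum := (hasSum_integral_iUnion hF hdisj
    (integrableOn_decaySemigroup_adjoint_apply e hlam B (b := T) hu hC hvol)).tendsto_sum_nat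
  simp only [hstep, Finset.sum_range_sub fun k => decaySemigroup e hlam (T - a k) (v k)] at hsum
  have hlim : Tendsto (fun k => decaySemigroup e hlam (T - a k) (v k)) atTop (𝓝 0) :=
    squeeze_zero_norm (fun k => norm_decaySemigroup_apply_le e hlam _ _)
      (tendsto_norm_zero.comp hv₀)
  rw [controlledState, tendsto_nhds_unique hsum (hlim.sub_const _), zero_sub, add_neg_cancel]

lemma exists_nullControl_of_hasContractingControl [Countable ι] {a : ℕ → ℝ} (ha : Monotone a)
    {T : ℝ} (haT : ∀ k, a k ≤ T) {F : ℕ → Set ℝ} (hF : ∀ k, MeasurableSet (F k))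
    (hFa : ∀ k, F k ⊆ Ico (a k) (a (k + 1))) {K q : ℕ → ℝ} {C : ℝ}
    (hctl : ∀ k, HasContractingControl e hlam B (F k) (a k) (a (k + 1)) (K k) (q k))
    (hq : ∀ k, q k ≤ 1 / 2) (hK : ∀ k, 0 ≤ K k) (hK₀ : K 0 ≤ C) (hKq : ∀ k, K (k + 1) * q k ≤ C)
    (v₀ : H) :
    ∃ u : ℝ → U, StronglyMeasurable u ∧ (∀ t, ‖u t‖ ≤ C * ‖v₀‖) ∧ (∀ t ∉ ⋃ k, F k, u t = 0) ∧
      controlledState e hlam B (⋃ k, F k) (a 0) T v₀ u = 0 := by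
  obtain ⟨v, w, rfl, hv, hvq, hw, hwK⟩ := exists_trajectory_of_hasContractingControl hctl v₀
  have hdisj : Pairwise (Function.onFun Disjoint F) := fun i j hij =>
    (ha.pairwise_disjoint_on_Ico_succ hij).mono (hFa i) (hFa j)
  obtain ⟨u, hu, hueq, hu₀⟩ := exists_stronglyMeasurable_eqOn_disjoint hF hdisj hw
  have hC : 0 ≤ C := (hK 0).trans hK₀
  have hhalf : ∀ k, ‖v (k + 1)‖ ≤ 1 / 2 * ‖v k‖ := fun k =>
    (hvq k).trans (by gcongr; exact hq k)
  have hv_lim : Tendsto v atTop (𝓝 0) :=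
    (summable_of_ratio_norm_eventually_le one_half_lt_one (.of_forall hhalf)).tendsto_atTop_zero
  have hv_le : ∀ k, ‖v k‖ ≤ ‖v 0‖ := fun k =>
    antitone_nat_of_succ_le (f := fun k => ‖v k‖)
      (fun k => by linarith [hhalf k, norm_nonneg (v k)]) k.zero_le
  have hw_le : ∀ k t, ‖w k t‖ ≤ C * ‖v 0‖ := fun k t => by
    refine (hwK k t).trans ?_
    cases k with
    | zero => gcongr
    | succ k =>
      calc K (k + 1) * ‖v (k + 1)‖ ≤ K (k + 1) * (q k * ‖v k‖) := by gcongr; exacts [hK _, hvq k]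
        _ = K (k + 1) * q k * ‖v k‖ := by ring
        _ ≤ C * ‖v 0‖ := mul_le_mul (hKq k) (hv_le k) (norm_nonneg _) hC
  have hu_le : ∀ t, ‖u t‖ ≤ C * ‖v 0‖ := fun t => by
    by_cases ht : t ∈ ⋃ k, F k
    · obtain ⟨k, hk⟩ := mem_iUnion.1 ht
      exact (hueq k hk) ▸ hw_le k t
    · rw [hu₀ t ht, norm_zero]
      positivity
  refine ⟨u, hu, hu_le, hu₀, controlledState_iUnion_eq_zero ha haT hF hFa hu hu_le (fun k => ?_)
    hv_lim⟩
  rw [hv]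
  exact congrArg (_ + ·) (setIntegral_congr_fun (hF k) fun t ht => by simp only [hueq k ht])

end Gluing

lemma ae_eventually_le_volume_real_inter_Icc (E : Set ℝ) {θ : ℝ} (hθ : 0 < θ) :
    ∀ᵐ x ∂volume.restrict E, ∀ᶠ r in 𝓝[>] (0 : ℝ),
      θ * r / 2 ≤ volume.real (E ∩ Icc (x - r) (x - r + θ * r)) := by
  filter_upwards [IsUnifLocDoublingMeasure.ae_tendsto_measure_inter_div volume E (2 / θ + 1)]
    with x hx
  have hradius : Tendsto (fun r => θ * r / 2) (𝓝[>] 0) (𝓝[>] 0) := by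
    refine tendsto_nhdsWithin_iff.2 ⟨?_, ?_⟩
    · exact ((by fun_prop : Continuous fun r => θ * r / 2).tendsto' 0 0 (by simp)).mono_left
        nhdsWithin_le_nhds
    · filter_upwards [self_mem_nhdsWithin] with r hr
      exact half_pos (mul_pos hθ hr)
  have hmem : ∀ᶠ r in 𝓝[>] (0 : ℝ),
      x ∈ Metric.closedBall (x - r + θ * r / 2) ((2 / θ + 1) * (θ * r / 2)) := by
    filter_upwards [self_mem_nhdsWithin] with r (hr : 0 < r)
    have hball : (2 / θ + 1) * (θ * r / 2) = r + θ * r / 2 := by field_simp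
    rw [hball, Real.closedBall_eq_Icc]
    constructor <;> nlinarith [mul_pos hθ hr]
  filter_upwards [(hx _ _ hradius hmem).eventually_const_le
    (ENNReal.inv_lt_one.2 ENNReal.one_lt_two), self_mem_nhdsWithin] with r hr (hr₀ : 0 < r)
  have hIcc : Metric.closedBall (x - r + θ * r / 2) (θ * r / 2) = Icc (x - r) (x - r + θ * r) := by
    rw [Real.closedBall_eq_Icc]
    congr 1 <;> ring
  have hvol : volume (Icc (x - r) (x - r + θ * r)) = ENNReal.ofReal (θ * r) := by
    rw [Real.volume_Icc, add_sub_cancel_left]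
  have hfin : volume (E ∩ Icc (x - r) (x - r + θ * r)) / ENNReal.ofReal (θ * r) ≠ ∞ :=
    ENNReal.div_ne_top (measure_ne_top_of_subset inter_subset_right measure_Icc_lt_top.ne)
      (ENNReal.ofReal_pos.2 (mul_pos hθ hr₀)).ne'
  rw [hIcc, hvol] at hr
  have hreal := ENNReal.toReal_mono hfin hr
  rw [ENNReal.toReal_div, ENNReal.toReal_inv, ENNReal.toReal_ofReal (by positivity),
    le_div_iff₀ (by positivity), ENNReal.toReal_ofNat] at hreal
  exact (div_eq_inv_mul _ _).trans_le hreal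

lemma exists_one_lt_rpow_two_mul_lt {γ : ℝ} (hγ : γ < 1) : ∃ R : ℝ, 1 < R ∧ (2 * R) ^ γ < R := by
  have hlim : Tendsto (fun R : ℝ => R ^ (1 - γ)) atTop atTop := tendsto_rpow_atTop (sub_pos.2 hγ)
  obtain ⟨R, hR, hR₁⟩ := ((hlim.eventually_gt_atTop (2 ^ γ)).and (eventually_gt_atTop 1)).exists
  have hR₀ : 0 < R := one_pos.trans hR₁
  refine ⟨R, hR₁, ?_⟩
  calc (2 * R) ^ γ = 2 ^ γ * R ^ γ := Real.mul_rpow zero_le_two hR₀.le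
    _ < R ^ (1 - γ) * R ^ γ := by gcongr
    _ = R := by rw [← Real.rpow_add hR₀, sub_add_cancel, Real.rpow_one]

lemma eventually_mul_pow_mul_exp_le_exp {b s R : ℝ} (hb : 0 < b) (hs : 0 ≤ s) (hsR : s < R)
    (hR : 1 < R) (A N : ℝ) {ε : ℝ} (hε : 0 < ε) :
    ∀ᶠ k : ℕ in atTop, A * b ^ k * Real.exp (N * s ^ k) ≤ Real.exp (ε * R ^ k) := by
  have hR₀ : 0 < R := one_pos.trans hR
  have hgap : Tendsto (fun k : ℕ => ε - N * (s / R) ^ k - Real.log b * (k * (R⁻¹) ^ k)) atTop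
      (𝓝 (ε - N * 0 - Real.log b * 0)) :=
    (tendsto_const_nhds.sub ((tendsto_pow_atTop_nhds_zero_of_lt_one (by positivity)
      ((div_lt_one hR₀).2 hsR)).const_mul N)).sub ((tendsto_self_mul_const_pow_of_lt_one
      (by positivity) (inv_lt_one_of_one_lt₀ hR)).const_mul _)
  have hexp := (Real.tendsto_exp_neg_atTop_nhds_zero.comp
    (hgap.pos_mul_atTop (by simpa using hε) (tendsto_pow_atTop_atTop_of_one_lt hR))).const_mul A
  rw [mul_zero] at hexp
  filter_upwards [hexp.eventually_le_const one_pos] with k hk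
  have hsplit : A * b ^ k * Real.exp (N * s ^ k) =
      A * Real.exp (-((ε - N * (s / R) ^ k - Real.log b * (k * (R⁻¹) ^ k)) * R ^ k)) *
        Real.exp (ε * R ^ k) := by
    rw [mul_assoc, mul_assoc, ← Real.exp_add, ← Real.exp_log (pow_pos hb k), ← Real.exp_add,
      Real.log_pow]
    congr 2
    rw [div_pow, inv_pow]
    field_simp
    ring
  rw [hsplit]
  exact mul_le_of_le_one_left (Real.exp_pos _).le hk

/-- The constant `N e^{N l^γ}` of the spectral inequality at frequency `l`. -/
noncomputable def spectralCost (N γ l : ℝ) : ℝ := N * Real.exp (N * l ^ γ)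

lemma eventually_mul_sq_spectralCost_le_exp {R γ : ℝ} (hR : 1 < R) (hRγ : (2 * R) ^ γ < R)
    (A N : ℝ) {ε : ℝ} (hε : 0 < ε) :
    ∀ᶠ k : ℕ in atTop, A * 2 ^ k * spectralCost N γ ((2 * R) ^ k) ^ 2 ≤ Real.exp (ε * R ^ k) := by
  have hR₀ : 0 ≤ 2 * R := by linarith
  filter_upwards [eventually_mul_pow_mul_exp_le_exp two_pos (Real.rpow_nonneg hR₀ γ) hRγ hR
    (A * N ^ 2) (2 * N) hε] with k hk
  refine (Eq.trans_le ?_ hk)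
  rw [spectralCost, mul_pow, ← Real.exp_nat_mul, Real.rpow_pow_comm hR₀]
  push_cast
  ring_nf

lemma mul_exp_mul_sq_div_le_exp {β M V θ x : ℝ}
    (h : β * (M ^ 2 / V) ≤ Real.exp (θ * x)) :
    β * ((Real.exp (θ * x) * M) ^ 2 / V) ≤ Real.exp (3 * θ * x) := by
  calc β * ((Real.exp (θ * x) * M) ^ 2 / V) = Real.exp (θ * x) ^ 2 * (β * (M ^ 2 / V)) := by ring
    _ ≤ Real.exp (θ * x) ^ 2 * Real.exp (θ * x) := by gcongr
    _ = Real.exp (3 * θ * x) := by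
      rw [← pow_succ, ← Real.exp_nat_mul]
      ring_nf

lemma exp_neg_mul_one_add_sq_le_exp {β M θ x : ℝ} (h : (β * M) ^ 2 ≤ Real.exp (θ * x))
    (htwo : 2 ≤ Real.exp (θ * x)) :
    Real.exp (-((1 / 2 - θ) * x)) * (1 + (β * (Real.exp (θ * x) * M)) ^ 2) ≤
      Real.exp (-((1 / 2 - 5 * θ) * x)) := by
  set w := Real.exp (θ * x) with hw
  have hsum : 1 + (β * (w * M)) ^ 2 ≤ w ^ 4 := by
    have hsq : (β * (w * M)) ^ 2 ≤ w ^ 3 := by nlinarith [sq_nonneg w]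
    have hone : 1 ≤ w ^ 3 := one_le_pow₀ (by linarith)
    nlinarith
  calc Real.exp (-((1 / 2 - θ) * x)) * (1 + (β * (w * M)) ^ 2)
      ≤ Real.exp (-((1 / 2 - θ) * x)) * w ^ 4 := by gcongr
    _ = Real.exp (-((1 / 2 - 5 * θ) * x)) := by
      rw [hw, ← Real.exp_nat_mul, ← Real.exp_add]
      ring_nf

section NullControl

variable {ι H U : Type*} [Countable ι] [NormedAddCommGroup H] [InnerProductSpace ℝ H]
  [CompleteSpace H] [NormedAddCommGroup U] [InnerProductSpace ℝ U] [CompleteSpace U]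
  {e : HilbertBasis ι ℝ H} {lam : ι → ℝ} {hlam : ∀ i, 0 ≤ lam i} {B : H →L[ℝ] U}

lemma hasContractingControl_of_volume_ge {F : Set ℝ} (hF : MeasurableSet F) {t r θ : ℝ}
    (hr : 0 < r) (hθ : θ ∈ Ioo 0 (1 / 2)) (hFt : F ⊆ Icc (t - r) (t - r + θ * r))
    (hvol : θ * r / 2 ≤ volume.real F) {l M : ℝ} (hl : 0 ≤ l) (hM : 0 < M)
    (hB : ∀ x ∈ lowFrequencySpace e lam l, ‖x‖ ≤ M * ‖B x‖)
    (hcost : 2 * ‖B‖ / θ * r⁻¹ * M ^ 2 ≤ Real.exp (θ * (l * r)))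
    (hgain : (‖B‖ * M) ^ 2 ≤ Real.exp (θ * (l * r))) (htwo : 2 ≤ Real.exp (θ * (l * r))) :
    HasContractingControl e hlam B F (t - r) (t - r / 2)
      (Real.exp (3 * θ * (l * r))) (Real.exp (-((1 / 2 - 5 * θ) * (l * r)))) := by
  have hθr : 0 < θ * r := mul_pos hθ.1 hr
  have hF₀ : volume F ≠ 0 := fun h => by
    rw [measureReal_def, h, ENNReal.toReal_zero] at hvol
    linarith
  have hF_cost : ‖B‖ * (M ^ 2 / volume.real F) ≤ Real.exp (θ * (l * r)) :=
    calc ‖B‖ * (M ^ 2 / volume.real F) ≤ ‖B‖ * (M ^ 2 / (θ * r / 2)) := by gcongr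
      _ = 2 * ‖B‖ / θ * r⁻¹ * M ^ 2 := by have := hθ.1; field_simp
      _ ≤ _ := hcost
  have hK := mul_exp_mul_sq_div_le_exp hF_cost
  have hq := exp_neg_mul_one_add_sq_le_exp hgain htwo
  have hactive : l * (t - r + θ * r - (t - r)) = θ * (l * r) := by ring
  have hrest : l * (t - r / 2 - (t - r + θ * r)) = (1 / 2 - θ) * (l * r) := by ring
  refine (hasContractingControl_of_lowFrequency e hlam B hF hF₀ hFt (by nlinarith [hθ.2]) hl hM
    hB).mono e hlam B ?_ ?_
  · rwa [hactive]
  · rwa [hactive, hrest]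

lemma eventually_exists_hasContractingControl {E : Set ℝ} (hE : MeasurableSet E) {N γ : ℝ}
    (hN : 0 < N)
    (hB : ∀ l > 0, ∀ x ∈ lowFrequencySpace e lam l, ‖x‖ ≤ spectralCost N γ l * ‖B x‖)
    {R θ t : ℝ} (hR : 1 < R) (hRγ : (2 * R) ^ γ < R) (hθ : θ ∈ Ioo 0 (1 / 2))
    (hdens : ∀ᶠ r in 𝓝[>] 0, θ * r / 2 ≤ volume.real (E ∩ Icc (t - r) (t - r + θ * r))) :
    ∀ᶠ k : ℕ in atTop, ∃ F ⊆ E ∩ Ico (t - 2⁻¹ ^ k) (t - 2⁻¹ ^ (k + 1)), MeasurableSet F ∧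
      HasContractingControl e hlam B F (t - 2⁻¹ ^ k) (t - 2⁻¹ ^ (k + 1))
        (Real.exp (3 * θ * R ^ k)) (Real.exp (-((1 / 2 - 5 * θ) * R ^ k))) := by
  have hr : Tendsto (fun k : ℕ => (2⁻¹ : ℝ) ^ k) atTop (𝓝[>] 0) :=
    tendsto_pow_atTop_nhdsWithin_zero_of_lt_one (by norm_num) (by norm_num)
  have htwo : ∀ᶠ k : ℕ in atTop, 2 ≤ Real.exp (θ * R ^ k) :=
    (Real.tendsto_exp_atTop.comp ((tendsto_pow_atTop_atTop_of_one_lt hR).const_mul_atTop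
      hθ.1)).eventually_ge_atTop 2
  filter_upwards [hr.eventually hdens, htwo,
    eventually_mul_sq_spectralCost_le_exp hR hRγ (2 * ‖B‖ / θ) N hθ.1,
    eventually_mul_sq_spectralCost_le_exp hR hRγ (‖B‖ ^ 2) N hθ.1] with k hvol htwo hcost hgain
  have hrk : (0 : ℝ) < 2⁻¹ ^ k := by positivity
  have hx : (2 * R) ^ k * 2⁻¹ ^ k = R ^ k := by rw [← mul_pow]; congr 1; ring
  have hhalf : (2⁻¹ : ℝ) ^ k / 2 = 2⁻¹ ^ (k + 1) := by rw [pow_succ, div_eq_mul_inv]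
  have hgain' : (‖B‖ * spectralCost N γ ((2 * R) ^ k)) ^ 2 ≤ Real.exp (θ * R ^ k) := by
    refine le_trans ?_ hgain
    rw [mul_pow]
    gcongr
    exact le_mul_of_one_le_right (sq_nonneg _) (one_le_pow₀ one_le_two)
  have hl : 0 < (2 * R) ^ k := by positivity
  have hctl := hasContractingControl_of_volume_ge (hlam := hlam) (hE.inter measurableSet_Icc) hrk hθ
    inter_subset_right hvol hl.le (mul_pos hN (Real.exp_pos _)) (hB _ hl)
    (by rwa [hx, inv_pow, inv_inv]) (by rwa [hx]) (by rwa [hx])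
  rw [hx, hhalf] at hctl
  refine ⟨_, inter_subset_inter_right E fun s hs => ⟨hs.1, hs.2.trans_lt ?_⟩,
    hE.inter measurableSet_Icc, hctl⟩
  rw [← hhalf]
  nlinarith [hθ.2]

lemma exists_nullControl_of_eventually_hasContractingControl {E : Set ℝ} (hE : MeasurableSet E)
    {T : ℝ} {a K q : ℕ → ℝ} (ha : Monotone a) (ha₀ : ∀ᶠ k in atTop, 0 ≤ a k) (haT : ∀ k, a k ≤ T)
    (hctl : ∀ᶠ k in atTop, ∃ F ⊆ E ∩ Ico (a k) (a (k + 1)), MeasurableSet F ∧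
      HasContractingControl e hlam B F (a k) (a (k + 1)) (K k) (q k))
    (hK : ∀ k, 0 ≤ K k) (hq : ∀ᶠ k in atTop, q k ≤ 1 / 2)
    (hKq : ∀ᶠ k in atTop, K (k + 1) * q k ≤ 1) :
    ∃ C > 0, ∀ y₀, ∃ u : ℝ → U, StronglyMeasurable u ∧ (∀ t, ‖u t‖ ≤ C * ‖y₀‖) ∧
      controlledState e hlam B E 0 T y₀ u = 0 := by
  obtain ⟨m, hm⟩ := eventually_atTop.1 (ha₀.and (hctl.and (hq.and hKq)))
  choose ham hctl hqm hKqm using fun k => hm (m + k) (m.le_add_right k)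
  choose F hFE hF hctl using hctl
  refine ⟨max 1 (K m), by positivity, fun y₀ => ?_⟩
  obtain ⟨u, hu, hu_le, hu₀, hnull⟩ := exists_nullControl_of_hasContractingControl
    (a := fun k => a (m + k)) (fun i j hij => ha (by lia)) (fun k => haT _) hF
    (fun k => (hFE k).trans inter_subset_right) hctl hqm (fun k => hK _) (le_max_right 1 (K m))
    (fun k => (hKqm k).trans (le_max_left _ _)) (decaySemigroup e hlam (a m) y₀)
  refine ⟨u, hu, fun t => (hu_le t).trans ?_, ?_⟩
  · gcongr
    exact norm_decaySemigroup_apply_le e hlam _ _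
  · have hsub : ⋃ k, F k ⊆ E := iUnion_subset fun k => (hFE k).trans inter_subset_left
    rw [controlledState, add_zero,
      decaySemigroup_decaySemigroup e hlam (sub_nonneg.2 (haT m)) (show 0 ≤ a m from ham 0),
      sub_add_cancel] at hnull
    rw [controlledState, sub_zero, ← hnull]
    congr 1
    exact setIntegral_eq_of_subset_of_forall_sdiff_eq_zero hE hsub fun t ht => by
      rw [hu₀ t ht.2, map_zero, map_zero]

theorem stmt_9_general (e : HilbertBasis ι ℝ H) (hlam : ∀ i, 0 ≤ lam i) (B : H →L[ℝ] U) {N γ : ℝ}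
    (hN : 0 < N) (hγ : γ < 1)
    (hB : ∀ l > 0, ∀ x ∈ lowFrequencySpace e lam l, ‖x‖ ≤ spectralCost N γ l * ‖B x‖)
    {T : ℝ} {E : Set ℝ} (hE : MeasurableSet E) (hEsub : E ⊆ Ioo 0 T) (hEpos : 0 < volume E) :
    ∃ C > 0, ∀ y₀, ∃ u : ℝ → U, StronglyMeasurable u ∧ (∀ t, ‖u t‖ ≤ C * ‖y₀‖) ∧
      controlledState e hlam B E 0 T y₀ u = 0 := by
  obtain ⟨R, hR, hRγ⟩ := exists_one_lt_rpow_two_mul_lt hγ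
  -- This `θ` makes `3θR + 5θ < 1/2`, so each contraction absorbs the cost of the next step.
  set θ := 1 / (6 * R + 12) with hθ_def
  have hθ₀ : 0 < θ := by positivity
  have hθR : 6 * (θ * R) + 12 * θ = 1 := by rw [hθ_def]; field_simp
  have hθR₀ : θ < θ * R := (lt_mul_iff_one_lt_right hθ₀).2 hR
  have : NeBot (ae (volume.restrict E)) := ae_restrict_neBot.2 hEpos.ne'
  obtain ⟨t, ht, hdens⟩ := ((ae_restrict_mem hE).and
    (ae_eventually_le_volume_real_inter_Icc E hθ₀)).exists
  have hgeom : Tendsto (fun k : ℕ => (2⁻¹ : ℝ) ^ k) atTop (𝓝 0) :=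
    tendsto_pow_atTop_nhds_zero_of_lt_one (by norm_num) (by norm_num)
  have hRk : Tendsto (fun k : ℕ => (1 / 2 - 5 * θ) * R ^ k) atTop atTop :=
    (tendsto_pow_atTop_atTop_of_one_lt hR).const_mul_atTop (by linarith)
  refine exists_nullControl_of_eventually_hasContractingControl hE (a := fun k => t - 2⁻¹ ^ k)
    (fun i j hij => sub_le_sub_left (pow_le_pow_of_le_one (by norm_num) (by norm_num) hij) t)
    ?_ (fun k => (sub_le_self t (by positivity)).trans (hEsub ht).2.le)
    (eventually_exists_hasContractingControl hE hN hB hR hRγ ⟨hθ₀, by linarith⟩ hdens)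
    (fun k => (Real.exp_pos _).le) ?_ (.of_forall fun k => ?_)
  · filter_upwards [hgeom.eventually_le_const (hEsub ht).1] with k hk using sub_nonneg.2 hk
  · exact (Real.tendsto_exp_neg_atTop_nhds_zero.comp hRk).eventually_le_const one_half_pos
  · rw [← Real.exp_add, Real.exp_le_one_iff, pow_succ]
    nlinarith [pow_pos (one_pos.trans hR) k]

end NullControl

theorem stmt_9 {H U : Type*} [NormedAddCommGroup H] [InnerProductSpace ℝ H] [CompleteSpace H]
    [NormedAddCommGroup U] [InnerProductSpace ℝ U] [CompleteSpace U]
    (e : HilbertBasis ℕ ℝ H) (lam : ℕ → ℝ) (hlam : ∀ j, 0 < lam j)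
    (B : H →L[ℝ] U) (N γ : ℝ) (hN : 0 < N) (hγ : γ ∈ Set.Ioo (0:ℝ) 1)
    (hspec : ∀ l > 0, ∀ f : H,
      ‖specProj e lam l f‖ ≤ N * Real.exp (N * l ^ γ) * ‖B (specProj e lam l f)‖)
    (T : ℝ) (hT : 0 < T)
    (E : Set ℝ) (hE : MeasurableSet E) (hEsub : E ⊆ Set.Ioo 0 T) (hEpos : 0 < volume E) :
    ∃ C > 0, ∀ y₀ : H, ∃ u : ℝ → U,
      AEStronglyMeasurable u (volume.restrict (Set.Ioo 0 T)) ∧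
      (∀ᵐ t ∂(volume.restrict (Set.Ioo 0 T)), ‖u t‖ ≤ C * ‖y₀‖) ∧
      diagSemigroup e lam T y₀ +
        ∫ t in Set.Ioo (0:ℝ) T,
          E.indicator
            (fun s => diagSemigroup e lam (T - s) ((ContinuousLinearMap.adjoint B) (u s))) t
        = 0 := by
  have hlam' : ∀ j, 0 ≤ lam j := fun j => (hlam j).le
  obtain ⟨C, hC, hctl⟩ := stmt_9_general e hlam' B hN hγ.2
    (fun l hl x hx => by simpa only [specProj_eq_self hx, spectralCost] using hspec l hl x)
    hE hEsub hEpos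
  refine ⟨C, hC, fun y₀ => ?_⟩
  obtain ⟨u, hu, hu_le, hnull⟩ := hctl y₀
  refine ⟨u, hu.aestronglyMeasurable, ae_of_all _ hu_le, ?_⟩
  rw [controlledState, sub_zero] at hnull
  rw [setIntegral_indicator hE, inter_eq_self_of_subset_right hEsub,
    diagSemigroup_eq_decaySemigroup hlam' hT.le, setIntegral_congr_fun hE fun t ht =>
      diagSemigroup_eq_decaySemigroup hlam' (sub_nonneg.2 (hEsub ht).2.le) _]
  exact hnull
end

section
/- Let x₀ ∈ (0,1) and R ∈ (0,1] satisfy (x₀ − 4R, x₀ + 4R) ⊆ (0,1), and let G ⊆ (x₀ − R, x₀ + R) be a Lebesgue measurable set with |G| > 0. Then there exists a constant C > 0 such that for every λ > 0 and every finitely supported sequence (a_j)_{j≥1} of real numbers, the function f(x) := Σ_{j ≥ 1, j⁴π⁴ ≤ λ} a_j sin(jπx) satisfies ( ∫_0^1 f(x)² dx )^{1/2} ≤ C e^{C λ^{1/4}} ∫_G |f(x)| dx. -/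
open MeasureTheory Real

/-!
On the circle a sine sum of order `n` has the modulus of a complex polynomial of degree `2n`,
since `2i e^{inθ} sin(jθ) = e^{i(n+j)θ} - e^{i(n-j)θ}`. A set of positive measure contains `2n + 1`
points whose mutual distances are comparable to those of equally spaced points and at which, by
Markov's inequality, the modulus is at most twice its mean. Lagrange interpolation at these points
bounds the supremum by the mean times `A ^ (2n)`: the factor `1 / (2n)!` from the denominators of
the Lagrange basis absorbs the factor `(2n + 1) ^ (2n)` from the spacing `∼ 1 / (2n + 1)`. Finally
`n ≤ λ ^ (1 / 4)`.
-/

lemma prod_erase_dist_eq_factorial_mul_factorial (i m : ℕ) :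
    ∏ k ∈ (Finset.range (i + m + 1)).erase i, dist i k = (i.factorial : ℝ) * m.factorial := by
  induction m with
  | zero =>
    have h_erase : (Finset.range (i + 0 + 1)).erase i = Finset.range i := by grind
    rw [h_erase, ← Nat.descFactorial_self, Nat.descFactorial_eq_prod_range, Nat.cast_prod,
      Nat.factorial_zero, Nat.cast_one, mul_one]
    refine Finset.prod_congr rfl fun k hk ↦ ?_
    have hki : k ≤ i := (Finset.mem_range.1 hk).le
    rw [Nat.dist_eq, ← Nat.cast_sub hki, Nat.abs_cast]
  | succ m ih =>
    have h_erase : (Finset.range (i + (m + 1) + 1)).erase i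
        = insert (i + m + 1) ((Finset.range (i + m + 1)).erase i) := by grind
    have h_dist : dist i (i + m + 1) = (m + 1 : ℝ) := by
      rw [dist_comm, Nat.dist_eq, abs_of_nonneg] <;> push_cast <;> linarith
    rw [h_erase, Finset.prod_insert (by simp), ih, h_dist, Nat.factorial_succ]
    push_cast
    ring

section Interpolation

variable {𝕜 : Type*} [NormedField 𝕜] {n : ℕ} {y : ℕ → 𝕜} {z : 𝕜} {d D : ℝ}

lemma norm_eval_lagrangeBasis_le (hd : 0 < d)
    (h_sep : ∀ i ≤ n, ∀ k ≤ n, d * dist i k ≤ dist (y i) (y k))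
    (hz : ∀ k ≤ n, dist z (y k) ≤ D) {i : ℕ} (hi : i ≤ n) :
    ‖(Lagrange.basis (Finset.range (n + 1)) y i).eval z‖
      ≤ (D / d) ^ n / n.factorial * n.choose i := by
  have h_divisor : ∀ k ∈ (Finset.range (n + 1)).erase i,
      ‖(Lagrange.basisDivisor (y i) (y k)).eval z‖ ≤ (D / d) * (dist i k)⁻¹ := by
    intro k hk
    obtain ⟨hki, hk⟩ := Finset.mem_erase.1 hk
    have hkn : k ≤ n := Finset.mem_range_succ_iff.1 hk
    have h_pos : 0 < dist i k := dist_pos.2 hki.symm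
    calc ‖(Lagrange.basisDivisor (y i) (y k)).eval z‖
        = (dist (y i) (y k))⁻¹ * dist z (y k) := by simp [Lagrange.basisDivisor, dist_eq_norm]
      _ ≤ (d * dist i k)⁻¹ * D := by
          gcongr
          exacts [h_sep i hi k hkn, hz k hkn]
      _ = (D / d) * (dist i k)⁻¹ := by rw [mul_inv]; ring
  obtain ⟨m, rfl⟩ := Nat.exists_eq_add_of_le hi
  have h_choose : ((i + m).choose i * i.factorial * m.factorial : ℝ) = (i + m).factorial := by
    rw [Nat.choose_symm_add]
    exact_mod_cast Nat.add_choose_mul_factorial_mul_factorial i m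
  calc ‖(Lagrange.basis (Finset.range (i + m + 1)) y i).eval z‖
      ≤ ∏ k ∈ (Finset.range (i + m + 1)).erase i, (D / d) * (dist i k)⁻¹ := by
        rw [Lagrange.basis, Polynomial.eval_prod, norm_prod]
        exact Finset.prod_le_prod (fun _ _ ↦ norm_nonneg _) h_divisor
    _ = (D / d) ^ (i + m) * ((i.factorial : ℝ) * m.factorial)⁻¹ := by
        rw [Finset.prod_mul_distrib, Finset.prod_inv_distrib, Finset.prod_const,
          prod_erase_dist_eq_factorial_mul_factorial,
          Finset.card_erase_of_mem (Finset.mem_range_succ_iff.2 hi), Finset.card_range,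
          Nat.succ_sub_one]
    _ = (D / d) ^ (i + m) / (i + m).factorial * (i + m).choose i := by
        rw [← h_choose]
        have := Nat.choose_pos hi
        field_simp

lemma norm_eval_le_of_separated_nodes (hd : 0 < d)
    (h_sep : ∀ i ≤ n, ∀ k ≤ n, d * dist i k ≤ dist (y i) (y k))
    (hz : ∀ k ≤ n, dist z (y k) ≤ D) {p : Polynomial 𝕜} (hp : p.natDegree ≤ n) {M : ℝ}
    (hM : ∀ i ≤ n, ‖p.eval (y i)‖ ≤ M) :
    ‖p.eval z‖ ≤ M * ((2 * D / d) ^ n / n.factorial) := by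
  have h_inj : Set.InjOn y (Finset.range (n + 1)) := by
    intro i hi k hk hik
    have h_le := h_sep i (Finset.mem_range_succ_iff.1 hi) k (Finset.mem_range_succ_iff.1 hk)
    rw [hik, dist_self] at h_le
    exact dist_le_zero.1 (nonpos_of_mul_nonpos_right h_le hd)
  have h_deg : p.degree < (Finset.range (n + 1)).card := by
    rw [Finset.card_range]
    exact (Polynomial.degree_le_of_natDegree_le hp).trans_lt (by exact_mod_cast n.lt_succ_self)
  have h_sum_choose : ∑ i ∈ Finset.range (n + 1), (n.choose i : ℝ) = 2 ^ n := by
    exact_mod_cast Nat.sum_range_choose n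
  calc ‖p.eval z‖
      = ‖∑ i ∈ Finset.range (n + 1),
          p.eval (y i) * (Lagrange.basis (Finset.range (n + 1)) y i).eval z‖ := by
        conv_lhs => rw [Lagrange.eq_interpolate h_inj h_deg]
        simp only [Lagrange.interpolate_apply, Polynomial.eval_finsetSum, Polynomial.eval_mul,
          Polynomial.eval_C]
    _ ≤ ∑ i ∈ Finset.range (n + 1), M * ((D / d) ^ n / n.factorial * n.choose i) := by
        refine norm_sum_le_of_le _ fun i hi ↦ ?_
        have hin : i ≤ n := Finset.mem_range_succ_iff.1 hi
        rw [norm_mul]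
        exact mul_le_mul (hM i hin) (norm_eval_lagrangeBasis_le hd h_sep hz hin) (norm_nonneg _)
          ((norm_nonneg _).trans (hM i hin))
    _ = M * ((2 * D / d) ^ n / n.factorial) := by
        rw [← Finset.mul_sum, ← Finset.mul_sum, h_sum_choose, mul_div_assoc 2, mul_pow]
        ring

end Interpolation

lemma exists_mem_volume_lt_volume_inter_Ici {F : Set ℝ} (h_bdd : BddBelow F) {h : ℝ} (hh : 0 ≤ h)
    {v : ENNReal} (hv : v + ENNReal.ofReal h < volume F) :
    ∃ y ∈ F, v < volume (F ∩ Set.Ici (y + h)) := by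
  obtain ⟨ε, hε, h_slack⟩ := ENNReal.lt_iff_exists_add_pos_lt.1 hv
  have h_ne : F.Nonempty := nonempty_of_measure_ne_zero (bot_le.trans_lt hv).ne'
  obtain ⟨y, hyF, hy⟩ :=
    exists_lt_of_csInf_lt h_ne (lt_add_of_pos_right (sInf F) (NNReal.coe_pos.2 hε))
  have h_cover : F ⊆ (F ∩ Set.Ici (y + h)) ∪ Set.Ico (sInf F) (sInf F + (h + ε)) := by
    intro t ht
    rcases le_or_gt (y + h) t with hty | hty
    · exact Or.inl ⟨ht, hty⟩
    · have h_lt : t < sInf F + (h + ε) := by linarith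
      exact Or.inr ⟨csInf_le h_bdd ht, h_lt⟩
  have h_le : volume F ≤ volume (F ∩ Set.Ici (y + h)) + (ENNReal.ofReal h + ε) := by
    refine (measure_mono h_cover).trans ((measure_union_le _ _).trans_eq ?_)
    rw [Real.volume_Ico, add_sub_cancel_left, ENNReal.ofReal_add hh ε.coe_nonneg,
      ENNReal.ofReal_coe_nnreal]
  rw [add_assoc] at h_slack
  exact ⟨y, hyF, lt_of_add_lt_add_right (h_slack.trans_le h_le)⟩

lemma exists_seq_mem_mul_sub_le {h : ℝ} (hh : 0 ≤ h) (n : ℕ) {F : Set ℝ} (h_bdd : BddBelow F)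
    (h_vol : ENNReal.ofReal (n * h) < volume F) :
    ∃ x : ℕ → ℝ, (∀ i ≤ n, x i ∈ F) ∧
      ∀ i k, i ≤ k → k ≤ n → h * ((k : ℝ) - i) ≤ x k - x i := by
  induction n generalizing F with
  | zero =>
    obtain ⟨y, hy⟩ : F.Nonempty := nonempty_of_measure_ne_zero (bot_le.trans_lt h_vol).ne'
    refine ⟨fun _ ↦ y, fun _ _ ↦ hy, fun i k hik hk ↦ ?_⟩
    obtain rfl : i = k := by omega
    simp
  | succ n ih =>
    have h_split : ENNReal.ofReal (n * h) + ENNReal.ofReal h < volume F := by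
      rwa [← ENNReal.ofReal_add (by positivity) hh, ← add_one_mul, ← Nat.cast_succ]
    obtain ⟨y, hyF, hy⟩ := exists_mem_volume_lt_volume_inter_Ici h_bdd hh h_split
    obtain ⟨x, hxF, hx⟩ := ih (h_bdd.mono Set.inter_subset_left) hy
    refine ⟨fun i ↦ Nat.casesOn i y x, ?_, ?_⟩
    · rintro (_ | i) hi
      exacts [hyF, (hxF i (by omega)).1]
    · rintro (_ | i) (_ | k) hik hk
      · simp
      · have h_gap : y + h ≤ x 0 := (hxF 0 n.zero_le).2
        have h_rest := hx 0 k k.zero_le (by omega)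
        suffices h * ((k + 1 : ℕ) - (0 : ℕ)) ≤ x k - y by exact this
        push_cast at h_rest ⊢
        linarith
      · omega
      · have h_rest := hx i k (by omega) (by omega)
        push_cast
        linarith

lemma exists_separated_seq_mem {h : ℝ} (hh : 0 ≤ h) {n : ℕ} {F : Set ℝ} (h_bdd : BddBelow F)
    (h_vol : ENNReal.ofReal (n * h) < volume F) :
    ∃ x : ℕ → ℝ, (∀ i ≤ n, x i ∈ F) ∧ ∀ i ≤ n, ∀ k ≤ n, h * dist i k ≤ dist (x i) (x k) := by
  obtain ⟨x, hxF, hx⟩ := exists_seq_mem_mul_sub_le hh n h_bdd h_vol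
  refine ⟨x, hxF, fun i hi k hk ↦ ?_⟩
  wlog hik : i ≤ k generalizing i k
  · rw [dist_comm i, dist_comm (x i)]
    exact this k hk i hi (by omega)
  have h_cast : (i : ℝ) ≤ k := by exact_mod_cast hik
  rw [dist_comm i, Nat.dist_eq, abs_of_nonneg (sub_nonneg.2 h_cast), dist_comm (x i), Real.dist_eq]
  exact (hx i k hik hk).trans (le_abs_self _)

section Measure

variable {α : Type*} [MeasurableSpace α] {μ : Measure α} {f : α → ℝ}

lemma half_measureReal_univ_le_measureReal_le_two_mul_average [IsFiniteMeasure μ]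
    (hf : Integrable f μ) (hf_nonneg : 0 ≤ᵐ[μ] f) :
    μ.real Set.univ / 2 ≤ μ.real {x | f x ≤ 2 * ⨍ t, f t ∂μ} := by
  have h_nonneg : 0 ≤ ∫ t, f t ∂μ := integral_nonneg_of_ae hf_nonneg
  have h_cover : μ.real Set.univ ≤
      μ.real {x | f x ≤ 2 * ⨍ t, f t ∂μ} + μ.real {x | 2 * ⨍ t, f t ∂μ < f x} := by
    refine (measureReal_mono fun x _ ↦ ?_).trans (measureReal_union_le _ _)
    exact le_or_gt (f x) _
  suffices μ.real {x | 2 * ⨍ t, f t ∂μ < f x} ≤ μ.real Set.univ / 2 by linarith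
  rcases h_nonneg.eq_or_lt' with h_zero | h_pos
  · have h_ae : f =ᵐ[μ] 0 := (integral_eq_zero_iff_of_nonneg_ae hf_nonneg hf).1 h_zero
    have h_null : μ {x | 2 * ⨍ t, f t ∂μ < f x} = 0 := by
      rw [average_eq, h_zero, smul_zero, mul_zero]
      exact measure_mono_null (fun x hx ↦ ne_of_gt hx) h_ae
    rw [measureReal_def, h_null, ENNReal.toReal_zero]
    positivity
  · have h_markov := mul_meas_ge_le_integral_of_nonneg hf_nonneg hf (2 * ⨍ t, f t ∂μ)
    have h_mono : μ.real {x | 2 * ⨍ t, f t ∂μ < f x} ≤ μ.real {x | 2 * ⨍ t, f t ∂μ ≤ f x} :=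
      measureReal_mono fun x (hx : _ < f x) ↦ hx.le
    have h_mass : 0 < μ.real Set.univ := by
      refine measureReal_nonneg.lt_of_ne' fun h ↦ h_pos.ne' ?_
      rw [measureReal_eq_zero_iff, Measure.measure_univ_eq_zero] at h
      rw [h, integral_zero_measure]
    rw [average_eq, smul_eq_mul] at h_markov h_mono ⊢
    have h_bound := (le_div_iff₀' (by positivity)).2 h_markov
    refine h_mono.trans (h_bound.trans_eq ?_)
    field_simp

lemma half_measureReal_le_measureReal_inter_le_two_mul_setAverage {s : Set α} (hs : μ s ≠ ⊤)
    (hf_meas : Measurable f) (hf : IntegrableOn f s μ) (hf_nonneg : 0 ≤ f) :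
    μ.real s / 2 ≤ μ.real (s ∩ {x | f x ≤ 2 * ⨍ t in s, f t ∂μ}) := by
  have : IsFiniteMeasure (μ.restrict s) := ⟨by simpa using hs.lt_top⟩
  have h_half := half_measureReal_univ_le_measureReal_le_two_mul_average hf (ae_of_all _ hf_nonneg)
  rwa [measureReal_restrict_apply_univ,
    measureReal_restrict_apply (measurableSet_le hf_meas measurable_const), Set.inter_comm]
    at h_half

lemma integral_sq_rpow_half_le [IsProbabilityMeasure μ] {B : ℝ} (hB : ∀ x, |f x| ≤ B) :
    (∫ x, f x ^ 2 ∂μ) ^ ((1 : ℝ) / 2) ≤ B := by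
  have : Nonempty α := μ.nonempty_of_neZero
  have hB_nonneg : 0 ≤ B := (abs_nonneg _).trans (hB (Classical.arbitrary α))
  rw [← Real.sqrt_eq_rpow, Real.sqrt_le_left hB_nonneg]
  calc ∫ x, f x ^ 2 ∂μ ≤ ∫ _, B ^ 2 ∂μ :=
        integral_mono_of_nonneg (ae_of_all _ fun _ ↦ sq_nonneg _) (integrable_const _)
          (ae_of_all _ fun x ↦ sq_le_sq.2 ((hB x).trans (le_abs_self B)))
    _ = B ^ 2 := by simp

end Measure

lemma exists_volume_inter_Ioc_intCast_ne_zero {G : Set ℝ} (hG : volume G ≠ 0) :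
    ∃ k : ℤ, volume (G ∩ Set.Ioc (k : ℝ) (k + 1)) ≠ 0 := by
  by_contra! h_null
  apply hG
  rw [← Set.inter_univ G, ← iUnion_Ioc_intCast ℝ, Set.inter_iUnion]
  exact measure_iUnion_null h_null

lemma succ_mul_pow_div_factorial_le (n : ℕ) {t : ℝ} (ht : 0 ≤ t) :
    ((n + 1) * t) ^ n / n.factorial ≤ exp 1 * (t * exp 1) ^ n := by
  have h_exp : ((n : ℝ) + 1) ^ n / n.factorial ≤ exp 1 * exp 1 ^ n :=
    (pow_div_factorial_le_exp _ (by positivity) n).trans_eq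
      (by rw [← pow_succ', ← exp_nat_mul, Nat.cast_succ, mul_one])
  calc ((n + 1) * t) ^ n / n.factorial = (n + 1) ^ n / n.factorial * t ^ n := by
        rw [mul_pow, mul_div_right_comm]
    _ ≤ exp 1 * exp 1 ^ n * t ^ n := by gcongr
    _ = exp 1 * (t * exp 1) ^ n := by rw [mul_pow]; ring

lemma two_mul_dist_le_dist_circleExp {x y : ℝ} (hxy : dist x y ≤ 1) :
    2 * dist x y ≤ dist (Circle.exp (π * x) : ℂ) (Circle.exp (π * y)) := by
  have h_chord : dist (Circle.exp (π * x) : ℂ) (Circle.exp (π * y)) =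
      2 * |sin (π * (x - y) / 2)| := by
    have h_factor : (Circle.exp (π * x) : ℂ) - Circle.exp (π * y) =
        Circle.exp (π * y) * (Complex.exp (Complex.I * (π * (x - y) : ℝ)) - 1) := by
      rw [mul_sub_one, Circle.coe_exp, Circle.coe_exp, ← Complex.exp_add]
      push_cast
      ring_nf
    rw [dist_eq_norm, h_factor, norm_mul, Circle.norm_coe, one_mul,
      Complex.norm_exp_I_mul_ofReal_sub_one, norm_mul, Real.norm_ofNat, Real.norm_eq_abs]
  have h_abs : |π * (x - y) / 2| = π / 2 * dist x y := by
    rw [abs_div, abs_mul, abs_of_pos pi_pos, abs_two, Real.dist_eq]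
    ring
  have h_jordan := mul_abs_le_abs_sin (x := π * (x - y) / 2)
    (h_abs.trans_le (mul_le_of_le_one_right (by positivity) hxy))
  rw [h_abs, ← mul_assoc, div_mul_div_cancel₀' two_ne_zero, div_self pi_ne_zero, one_mul]
    at h_jordan
  rw [h_chord]
  gcongr

section Circle

variable {q : Polynomial ℂ} {N : ℕ} {c : ℝ}

lemma norm_eval_circle_le_of_norm_eval_le_on (hq : q.natDegree ≤ N) {F : Set ℝ}
    (hF : F ⊆ Set.Icc c (c + 1)) {h : ℝ} (hh : 0 < h) (h_vol : ENNReal.ofReal (N * h) < volume F)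
    {M : ℝ} (hM : ∀ x ∈ F, ‖q.eval (Circle.exp (π * x) : ℂ)‖ ≤ M) (w : Circle) :
    ‖q.eval (w : ℂ)‖ ≤ M * ((2 / h) ^ N / N.factorial) := by
  obtain ⟨x, hxF, hx⟩ := exists_separated_seq_mem hh.le (bddBelow_Icc.mono hF) h_vol
  have h_sep : ∀ i ≤ N, ∀ k ≤ N,
      2 * h * dist i k ≤ dist (Circle.exp (π * x i) : ℂ) (Circle.exp (π * x k)) := by
    intro i hi k hk
    have h_dist : dist (x i) (x k) ≤ 1 :=
      (Real.dist_le_of_mem_Icc (hF (hxF i hi)) (hF (hxF k hk))).trans_eq (by ring)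
    linarith [hx i hi k hk, two_mul_dist_le_dist_circleExp h_dist]
  have h_diam : ∀ k ≤ N, dist (w : ℂ) (Circle.exp (π * x k)) ≤ 2 := fun k _ ↦
    (dist_le_norm_add_norm _ _).trans_eq (by rw [Circle.norm_coe, Circle.norm_coe]; norm_num)
  have h_lagrange := norm_eval_le_of_separated_nodes (by positivity) h_sep h_diam hq
    fun i hi ↦ hM _ (hxF i hi)
  rwa [mul_div_mul_left _ _ two_ne_zero] at h_lagrange

lemma norm_eval_circle_le_setIntegral (hq : q.natDegree ≤ N) {E : Set ℝ}
    (hE : E ⊆ Set.Icc c (c + 1)) (hE_pos : volume E ≠ 0) (w : Circle) :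
    ‖q.eval (w : ℂ)‖ ≤ 2 * exp 1 / volume.real E * (4 * exp 1 / volume.real E) ^ N *
      ∫ x in E, ‖q.eval (Circle.exp (π * x) : ℂ)‖ := by
  set f : ℝ → ℝ := fun x ↦ ‖q.eval (Circle.exp (π * x) : ℂ)‖
  have hf_cont : Continuous f := by
    have := q.continuous
    fun_prop
  have hE_fin : volume E ≠ ⊤ := measure_ne_top_of_subset hE measure_Icc_lt_top.ne
  set g := volume.real E
  have hg_pos : 0 < g := ENNReal.toReal_pos hE_pos hE_fin
  set F := E ∩ {x | f x ≤ 2 * ⨍ t in E, f t}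
  have hF_half : g / 2 ≤ volume.real F :=
    half_measureReal_le_measureReal_inter_le_two_mul_setAverage hE_fin hf_cont.measurable
      (hf_cont.integrableOn_Icc.mono_set hE) fun _ ↦ norm_nonneg _
  have h_vol : ENNReal.ofReal (N * (g / (2 * (N + 1)))) < volume F := by
    rw [ENNReal.ofReal_lt_iff_lt_toReal (by positivity)
      (measure_ne_top_of_subset Set.inter_subset_left hE_fin)]
    refine lt_of_lt_of_le ?_ hF_half
    rw [← sub_pos, show g / 2 - N * (g / (2 * (N + 1))) = g / (2 * (N + 1)) by field_simp; ring]
    positivity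
  calc ‖q.eval (w : ℂ)‖
      ≤ 2 * (⨍ t in E, f t) * ((2 / (g / (2 * (N + 1)))) ^ N / N.factorial) :=
        norm_eval_circle_le_of_norm_eval_le_on hq (Set.inter_subset_left.trans hE)
          (by positivity) h_vol (fun x hx ↦ hx.2) w
    _ = 2 * ((∫ t in E, f t) / g) * (((N + 1) * (4 / g)) ^ N / N.factorial) := by
        rw [setAverage_eq, smul_eq_mul, inv_mul_eq_div]
        congr 3
        field_simp
        norm_num
    _ ≤ 2 * ((∫ t in E, f t) / g) * (exp 1 * (4 / g * exp 1) ^ N) := by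
        gcongr
        exact succ_mul_pow_div_factorial_le N (by positivity)
    _ = 2 * exp 1 / g * (4 * exp 1 / g) ^ N * ∫ t in E, f t := by
        rw [div_mul_eq_mul_div 4]
        ring

end Circle

lemma exists_polynomial_norm_eval_circle_eq_abs_sum_sin (b : ℕ → ℝ) (n : ℕ) :
    ∃ q : Polynomial ℂ, q.natDegree ≤ 2 * n ∧ ∀ θ : ℝ,
      ‖q.eval (Circle.exp θ : ℂ)‖ = |∑ j ∈ Finset.range (n + 1), b j * sin (j * θ)| := by
  refine ⟨∑ j ∈ Finset.range (n + 1), Polynomial.C (b j * Complex.I / 2) *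
    (Polynomial.X ^ (n - j) - Polynomial.X ^ (n + j)), ?_, fun θ ↦ ?_⟩
  · refine Polynomial.natDegree_sum_le_of_forall_le _ _ fun j hj ↦ ?_
    have hjn : j ≤ n := Finset.mem_range_succ_iff.1 hj
    refine (Polynomial.natDegree_C_mul_le _ _).trans
      ((Polynomial.natDegree_sub_le_iff_left ?_).2 ?_) <;> rw [Polynomial.natDegree_X_pow] <;> omega
  · have h_term : ∀ j ∈ Finset.range (n + 1),
        b j * Complex.I / 2 * ((Circle.exp θ : ℂ) ^ (n - j) - (Circle.exp θ : ℂ) ^ (n + j)) =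
          (Circle.exp θ : ℂ) ^ n * (b j * sin (j * θ) : ℝ) := by
      intro j hj
      have hjn : j ≤ n := Finset.mem_range_succ_iff.1 hj
      have h_low : (Circle.exp θ : ℂ) ^ (n - j) =
          (Circle.exp θ : ℂ) ^ n * Complex.exp (-(j * θ) * Complex.I) := by
        rw [Circle.coe_exp, ← Complex.exp_nat_mul, ← Complex.exp_nat_mul, ← Complex.exp_add,
          Nat.cast_sub hjn]
        ring_nf
      have h_high : (Circle.exp θ : ℂ) ^ (n + j) =
          (Circle.exp θ : ℂ) ^ n * Complex.exp (j * θ * Complex.I) := by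
        rw [pow_add, Circle.coe_exp, ← Complex.exp_nat_mul _ j]
        ring_nf
      rw [h_low, h_high, Complex.ofReal_mul, Complex.ofReal_sin, Complex.ofReal_mul,
        Complex.ofReal_natCast]
      linear_combination -((Circle.exp θ : ℂ) ^ n * b j / 2) * Complex.two_sin (j * θ)
    simp only [Polynomial.eval_finsetSum, Polynomial.eval_mul, Polynomial.eval_C,
      Polynomial.eval_sub, Polynomial.eval_pow, Polynomial.eval_X]
    rw [Finset.sum_congr rfl h_term, ← Finset.mul_sum, norm_mul, norm_pow, Circle.norm_coe,
      one_pow, one_mul, ← Complex.ofReal_sum, Complex.norm_real, Real.norm_eq_abs]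

lemma abs_sum_sin_le_setIntegral (b : ℕ → ℝ) (n : ℕ) {c : ℝ} {E : Set ℝ}
    (hE : E ⊆ Set.Icc c (c + 1)) (hE_pos : volume E ≠ 0) (z : ℝ) :
    |∑ j ∈ Finset.range (n + 1), b j * sin (j * π * z)| ≤
      2 * exp 1 / volume.real E * (4 * exp 1 / volume.real E) ^ (2 * n) *
        ∫ x in E, |∑ j ∈ Finset.range (n + 1), b j * sin (j * π * x)| := by
  obtain ⟨q, hq_deg, hq⟩ := exists_polynomial_norm_eval_circle_eq_abs_sum_sin b n
  have h_circle := norm_eval_circle_le_setIntegral hq_deg hE hE_pos (Circle.exp (π * z))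
  simpa only [hq, ← mul_assoc] using h_circle

lemma integrable_sum_sin {μ : Measure ℝ} [IsFiniteMeasure μ] (b : ℕ → ℝ) (s : Finset ℕ) :
    Integrable (fun x ↦ ∑ j ∈ s, b j * sin (j * π * x)) μ :=
  integrable_finsetSum _ fun j _ ↦
    (Integrable.of_bound (by fun_prop) 1 (ae_of_all _ fun _ ↦ abs_sin_le_one _)).const_mul (b j)

lemma exists_abs_sum_sin_le_mul_pow_mul_setIntegral {G : Set ℝ} (hG_pos : volume G ≠ 0)
    (hG_fin : volume G ≠ ⊤) :
    ∃ K > 0, ∃ A ≥ 1, ∀ (b : ℕ → ℝ) (n : ℕ) (z : ℝ),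
      |∑ j ∈ Finset.range (n + 1), b j * sin (j * π * z)| ≤
        K * A ^ n * ∫ x in G, |∑ j ∈ Finset.range (n + 1), b j * sin (j * π * x)| := by
  obtain ⟨k, hE_pos⟩ := exists_volume_inter_Ioc_intCast_ne_zero hG_pos
  set E := G ∩ Set.Ioc (k : ℝ) (k + 1)
  have hE : E ⊆ Set.Icc (k : ℝ) (k + 1) := Set.inter_subset_right.trans Set.Ioc_subset_Icc_self
  have hE_fin : volume E ≠ ⊤ := measure_ne_top_of_subset Set.inter_subset_left hG_fin
  have hg_pos : 0 < volume.real E := ENNReal.toReal_pos hE_pos hE_fin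
  have hg_le : volume.real E ≤ 1 := (measureReal_mono hE measure_Icc_lt_top.ne).trans_eq (by simp)
  have h_base : 1 ≤ 4 * exp 1 / volume.real E :=
    (one_le_div hg_pos).2 (by linarith [exp_one_gt_d9])
  have : IsFiniteMeasure (volume.restrict G) := ⟨by simpa using hG_fin.lt_top⟩
  refine ⟨2 * exp 1 / volume.real E, by positivity, (4 * exp 1 / volume.real E) ^ 2,
    one_le_pow₀ h_base, fun b n z ↦ ?_⟩
  rw [← pow_mul]
  refine (abs_sum_sin_le_setIntegral b n hE hE_pos z).trans ?_
  exact mul_le_mul_of_nonneg_left (setIntegral_mono_set (integrable_sum_sin b _).abs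
    (ae_of_all _ fun _ ↦ abs_nonneg _) Set.inter_subset_left.eventuallyLE) (by positivity)

lemma tsum_sin_eq_sum_range_floor (l : ℝ) (a : ℕ → ℝ) (x : ℝ) :
    (∑' j : ℕ, if 1 ≤ j ∧ (j : ℝ) ^ 4 * π ^ 4 ≤ l then a j * sin (j * π * x) else 0) =
      ∑ j ∈ Finset.range (⌊l ^ ((1 : ℝ) / 4)⌋₊ + 1),
        (if 1 ≤ j ∧ (j : ℝ) ^ 4 * π ^ 4 ≤ l then a j else 0) * sin (j * π * x) := by
  simp only [ite_mul, zero_mul]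
  refine tsum_eq_sum fun j hj ↦ if_neg fun ⟨_, hjl⟩ ↦ hj ?_
  have h_pow_le : (j : ℝ) ^ 4 ≤ l :=
    (le_mul_of_one_le_right (by positivity) (one_le_pow₀ (by linarith [pi_gt_three]))).trans hjl
  have h_root : ((j : ℝ) ^ 4) ^ ((1 : ℝ) / 4) = j := by
    simpa using pow_rpow_inv_natCast j.cast_nonneg four_ne_zero
  rw [Finset.mem_range_succ_iff]
  refine Nat.le_floor ?_
  rw [← h_root]
  gcongr

lemma pow_le_exp_log_mul {A t : ℝ} {n : ℕ} (hA : 1 ≤ A) (hn : n ≤ t) :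
    A ^ n ≤ exp (log A * t) := by
  rw [exp_mul, exp_log (by linarith), ← rpow_natCast]
  exact rpow_le_rpow_of_exponent_le hA hn

theorem stmt_11_general {G : Set ℝ} (hG_pos : volume G ≠ 0) (hG_fin : volume G ≠ ⊤) :
    ∃ C > 0, ∀ l > 0, ∀ a : ℕ → ℝ,
      (∫ x in Set.Ioo (0:ℝ) 1,
          (∑' j : ℕ, if 1 ≤ j ∧ (j : ℝ) ^ 4 * π ^ 4 ≤ l
            then a j * Real.sin (j * π * x) else 0) ^ 2) ^ ((1:ℝ)/2) ≤
        C * Real.exp (C * l ^ ((1:ℝ)/4)) *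
          ∫ x in G,
            |∑' j : ℕ, if 1 ≤ j ∧ (j : ℝ) ^ 4 * π ^ 4 ≤ l
              then a j * Real.sin (j * π * x) else 0| := by
  obtain ⟨K, hK, A, hA, h_sup⟩ := exists_abs_sum_sin_le_mul_pow_mul_setIntegral hG_pos hG_fin
  refine ⟨max K (log A), lt_max_of_lt_left hK, fun l hl a ↦ ?_⟩
  simp only [tsum_sin_eq_sum_range_floor]
  have : IsProbabilityMeasure (volume.restrict (Set.Ioo (0 : ℝ) 1)) := ⟨by simp⟩
  refine integral_sq_rpow_half_le fun z ↦ (h_sup _ _ z).trans ?_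
  have h_pow : A ^ ⌊l ^ ((1 : ℝ) / 4)⌋₊ ≤ exp (max K (log A) * l ^ ((1 : ℝ) / 4)) := by
    refine (pow_le_exp_log_mul hA (Nat.floor_le (by positivity))).trans ?_
    gcongr
    exact le_max_right K (log A)
  gcongr
  exact le_max_left K (log A)

theorem stmt_11 (x₀ R : ℝ) (hx₀ : x₀ ∈ Set.Ioo (0:ℝ) 1) (hR : R ∈ Set.Ioc (0:ℝ) 1)
    (hball : Set.Ioo (x₀ - 4 * R) (x₀ + 4 * R) ⊆ Set.Ioo (0:ℝ) 1)
    (G : Set ℝ) (hG : MeasurableSet G) (hGsub : G ⊆ Set.Ioo (x₀ - R) (x₀ + R))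
    (hGpos : 0 < volume G) :
    ∃ C > 0, ∀ l > 0, ∀ a : ℕ → ℝ, (Function.support a).Finite →
      (∫ x in Set.Ioo (0:ℝ) 1,
          (∑' j : ℕ, if 1 ≤ j ∧ (j : ℝ) ^ 4 * π ^ 4 ≤ l
            then a j * Real.sin (j * π * x) else 0) ^ 2) ^ ((1:ℝ)/2) ≤
        C * Real.exp (C * l ^ ((1:ℝ)/4)) *
          ∫ x in G,
            |∑' j : ℕ, if 1 ≤ j ∧ (j : ℝ) ^ 4 * π ^ 4 ≤ l
              then a j * Real.sin (j * π * x) else 0| := by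
  obtain ⟨C, hC, h⟩ := stmt_11_general hGpos.ne' (measure_ne_top_of_subset hGsub (by simp))
  exact ⟨C, hC, fun l hl a _ ↦ h l hl a⟩
end

section
/- Let x₀ ∈ (0,1) and R ∈ (0,1] satisfy (x₀ − 4R, x₀ + 4R) ⊆ (0,1), let G ⊆ (x₀ − R, x₀ + R) be a Lebesgue measurable set with |G| > 0, let T > 0, and let E ⊆ (0,T) be a Lebesgue measurable set with |E| > 0. Then there exists a constant C > 0 such that for every square-summable real sequence (a_j)_{j≥1}, the function z(t,x) := Σ_{j≥1} a_j e^{−j²π²(T−t)} sin(jπx) satisfies ( ∫_0^1 z(0,x)² dx )^{1/2} ≤ C ∫_E ( ∫_G z(t,x)² dx )^{1/2} dt. -/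
open MeasureTheory Real

/-!
A trigonometric polynomial of degree `N` that is bounded on a set of positive measure has
coefficients bounded with a loss exponential in `N`: the set contains equally well separated nodes,
and Lagrange interpolation at their images on the unit circle recovers the coefficients. The heat
flow damps the frequencies above `N` by `exp (-π² N² σ)` over a time `σ`, so every solution obeys an
interpolation inequality between two times with a free parameter `N`. Choose a density point `L` of
`E`. On the dyadic times `L - r / 2 ^ m` the choice `N ∼ 2 ^ m` makes the damping exponent, of order
`2 ^ m`, beat the loss; with weights `exp (-β 2 ^ m)` the inequalities telescope as `m → ∞`.
-/

section Separation

theorem exists_add_le_add_one_of_lt_volume {δ : ℝ} (hδ : 0 < δ) (n : ℕ) {A : Set ℝ}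
    (hA : BddBelow A) (hvol : ENNReal.ofReal (n * δ) < volume A) :
    ∃ p : ℕ → ℝ, (∀ k ≤ n, p k ∈ A) ∧ ∀ k < n, p k + δ ≤ p (k + 1) := by
  induction n generalizing A with
  | zero =>
    obtain ⟨x, hx⟩ := nonempty_of_measure_ne_zero (pos_of_gt hvol).ne'
    exact ⟨fun _ ↦ x, fun _ _ ↦ hx, fun k hk ↦ absurd hk k.not_lt_zero⟩
  | succ n ih =>
    obtain ⟨v, hv, hvA⟩ := exists_between hvol
    have hv_top : v ≠ ⊤ := hvA.ne_top
    have hv_real : (n + 1) * δ < v.toReal := by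
      simpa using (ENNReal.ofReal_lt_iff_lt_toReal (by positivity) hv_top).1 hv
    have hne : A.Nonempty := nonempty_of_measure_ne_zero (pos_of_gt hvol).ne'
    obtain ⟨x, hxA, hx⟩ := exists_lt_of_csInf_lt hne
      (show sInf A < sInf A + (v.toReal - (n + 1) * δ) by linarith)
    have hcover : A ⊆ Set.Ico (sInf A) (x + δ) ∪ A ∩ Set.Ici (x + δ) := fun y hy ↦
      (lt_or_ge y (x + δ)).imp (fun h ↦ ⟨csInf_le hA hy, h⟩) fun h ↦ ⟨hy, h⟩
    have hrest : ENNReal.ofReal (n * δ) < volume (A ∩ Set.Ici (x + δ)) := by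
      by_contra! hle
      have hvol_le : volume A ≤ ENNReal.ofReal (x + δ - sInf A + n * δ) := by
        rw [ENNReal.ofReal_add (by linarith [csInf_le hA hxA]) (by positivity), ← Real.volume_Ico]
        exact (measure_mono hcover).trans ((measure_union_le _ _).trans (by gcongr))
      linarith [(ENNReal.lt_ofReal_iff_toReal_lt hv_top).1 (hvA.trans_le hvol_le)]
    obtain ⟨p, hpA, hp⟩ := ih (hA.mono Set.inter_subset_left) hrest
    refine ⟨fun k ↦ k.casesOn x p, ?_, ?_⟩
    · rintro (_ | k) hk
      exacts [hxA, (hpA k (by lia)).1]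
    · rintro (_ | k) hk
      exacts [(hpA 0 (by lia)).2, hp k (by lia)]

theorem mul_abs_sub_le_abs_sub {δ : ℝ} {n : ℕ} {p : ℕ → ℝ}
    (hp : ∀ k < n, p k + δ ≤ p (k + 1)) {k l : ℕ} (hk : k ≤ n) (hl : l ≤ n) :
    δ * |(k : ℝ) - l| ≤ |p k - p l| := by
  have hmono : MonotoneOn (fun k ↦ p k - δ * k) (Set.Iic n) := by
    refine monotoneOn_of_le_add_one Set.ordConnected_Iic fun k _ _ hk ↦ ?_
    push_cast
    linarith [hp k hk]
  wlog hlk : l ≤ k generalizing k l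
  · rw [abs_sub_comm, abs_sub_comm (p k)]
    exact this hl hk (le_of_not_ge hlk)
  rw [abs_of_nonneg (sub_nonneg.2 (Nat.cast_le.2 hlk))]
  exact le_trans (by linarith [hmono hl hk hlk]) (le_abs_self _)

end Separation

section LagrangeBasis

open Finset Polynomial
open scoped Nat

theorem prod_erase_range_abs_sub (k m : ℕ) :
    ∏ l ∈ (range (k + m + 1)).erase k, |(k : ℝ) - l| = k ! * m ! := by
  have hsplit : (range (k + m + 1)).erase k = range k ∪ Ico (k + 1) (k + 1 + m) := by
    ext l; simp only [mem_erase, mem_range, mem_union, mem_Ico]; lia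
  have hdisj : Disjoint (range k) (Ico (k + 1) (k + 1 + m)) :=
    disjoint_left.2 fun l hl hl' ↦ by simp only [mem_range, mem_Ico] at hl hl'; lia
  rw [hsplit, prod_union hdisj, ← prod_range_add_one_eq_factorial k, ← prod_range_reflect,
    ← prod_range_add_one_eq_factorial m, prod_Ico_eq_prod_range, Nat.add_sub_cancel_left]
  push_cast
  congr 1
  · refine prod_congr rfl fun l hl ↦ ?_
    have hl : l + 1 ≤ k := mem_range.1 hl
    rw [Nat.sub_sub, add_comm 1 l, Nat.cast_sub hl]
    push_cast
    rw [abs_of_nonneg] <;> [ring; (have : (l : ℝ) + 1 ≤ k := mod_cast hl; linarith)]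
  · refine prod_congr rfl fun l _ ↦ ?_
    rw [abs_sub_comm, abs_of_nonneg] <;> push_cast <;> [ring; (ring_nf; positivity)]

theorem factorial_div_two_pow_le_prod_abs_sub {n k : ℕ} (hk : k ≤ n) :
    (n ! : ℝ) / 2 ^ n ≤ ∏ l ∈ (range (n + 1)).erase k, |(k : ℝ) - l| := by
  obtain ⟨m, rfl⟩ := Nat.exists_eq_add_of_le hk
  rw [prod_erase_range_abs_sub, div_le_iff₀ (by positivity)]
  have hchoose : (k + m)! ≤ k ! * m ! * 2 ^ (k + m) := by
    rw [← Nat.add_choose_mul_factorial_mul_factorial k m, mul_assoc, mul_comm]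
    gcongr
    exact Nat.choose_le_two_pow _ _
  exact_mod_cast hchoose

variable {𝕜 ι : Type*} [NormedField 𝕜]

theorem norm_coeff_nodal_le_two_pow (s : Finset ι) {v : ι → 𝕜} (hv : ∀ i ∈ s, ‖v i‖ ≤ 1) (i : ℕ) :
    ‖(Lagrange.nodal s v).coeff i‖ ≤ 2 ^ #s := by
  have hroots : ∀ z ∈ (Lagrange.nodal s v).roots, ‖z‖ ≤ 1 := by
    intro z hz
    rw [mem_roots Lagrange.nodal_ne_zero, IsRoot.def, Lagrange.eval_nodal, prod_eq_zero_iff] at hz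
    obtain ⟨j, hj, hzj⟩ := hz
    exact sub_eq_zero.1 hzj ▸ hv j hj
  have hsplits : (Lagrange.nodal s v).Splits := Splits.prod fun j _ ↦ Splits.X_sub_C (v j)
  have h := coeff_le_of_roots_le (f := RingHom.id 𝕜) i (Lagrange.nodal_monic (s := s) (v := v))
    (by rwa [Polynomial.map_id]) (by rwa [Polynomial.map_id])
  rw [Polynomial.map_id, one_pow, one_mul, Lagrange.natDegree_nodal] at h
  exact h.trans (mod_cast Nat.choose_le_two_pow _ _)

variable [DecidableEq ι]

theorem norm_coeff_lagrange_basis_le {s : Finset ι} {v : ι → 𝕜} (hv : ∀ i ∈ s, ‖v i‖ ≤ 1) (k : ι)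
    (i : ℕ) :
    ‖(Lagrange.basis s v k).coeff i‖ ≤
      2 ^ #(s.erase k) / ∏ l ∈ s.erase k, ‖v k - v l‖ := by
  have hbasis : Lagrange.basis s v k =
      C (∏ l ∈ s.erase k, (v k - v l))⁻¹ * Lagrange.nodal (s.erase k) v := by
    simp only [Lagrange.basis, Lagrange.basisDivisor, Lagrange.nodal_eq, prod_mul_distrib,
      ← map_prod, prod_inv_distrib]
  rw [hbasis, coeff_C_mul, norm_mul, norm_inv, norm_prod, mul_comm, ← div_eq_mul_inv]
  gcongr
  exact norm_coeff_nodal_le_two_pow _ (fun l hl ↦ hv l (mem_of_mem_erase hl)) i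

theorem norm_coeff_le_of_norm_eval_le {s : Finset ι} {v : ι → 𝕜} (hinj : Set.InjOn v s)
    {P : 𝕜[X]} (hP : P.degree < #s) {M B : ℝ} (hM : ∀ k ∈ s, ‖P.eval (v k)‖ ≤ M) {i : ℕ}
    (hB : ∀ k ∈ s, ‖(Lagrange.basis s v k).coeff i‖ ≤ B) :
    ‖P.coeff i‖ ≤ #s * (M * B) := by
  rw [Lagrange.eq_interpolate hinj hP, Lagrange.interpolate_apply, finsetSum_coeff, ← nsmul_eq_mul]
  refine (norm_sum_le _ _).trans (sum_le_card_nsmul _ _ _ fun k hk ↦ ?_)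
  rw [coeff_C_mul, norm_mul]
  exact mul_le_mul (hM k hk) (hB k hk) (norm_nonneg _) ((norm_nonneg _).trans (hM k hk))

theorem norm_coeff_le_of_separated_nodes {n : ℕ} {v : ℕ → 𝕜} {c : ℝ} (hc : 0 < c)
    (hv : ∀ k ≤ n, ‖v k‖ ≤ 1)
    (hsep : ∀ k ≤ n, ∀ l ≤ n, c * |(k : ℝ) - l| ≤ ‖v k - v l‖) {P : 𝕜[X]}
    (hP : P.degree < (n + 1 : ℕ)) {M : ℝ} (hM : ∀ k ≤ n, ‖P.eval (v k)‖ ≤ M) (i : ℕ) :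
    ‖P.coeff i‖ ≤ (n + 1) * (M * ((4 / c) ^ n / n !)) := by
  have hmem {k : ℕ} : k ∈ range (n + 1) ↔ k ≤ n := mem_range_succ_iff
  have hinj : Set.InjOn v (range (n + 1)) := by
    intro k hk l hl hkl
    have h := hsep k (hmem.1 hk) l (hmem.1 hl)
    rw [hkl, sub_self, norm_zero] at h
    exact_mod_cast sub_eq_zero.1 (abs_nonpos_iff.1 (nonpos_of_mul_nonpos_right h hc))
  have hbasis : ∀ k ∈ range (n + 1),
      ‖(Lagrange.basis (range (n + 1)) v k).coeff i‖ ≤ (4 / c) ^ n / n ! := by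
    intro k hk
    have hcard : #((range (n + 1)).erase k) = n := by simp [card_erase_of_mem hk]
    have hprod : c ^ n * (n ! / 2 ^ n) ≤ ∏ l ∈ (range (n + 1)).erase k, ‖v k - v l‖ := by
      calc c ^ n * (n ! / 2 ^ n)
          ≤ c ^ n * ∏ l ∈ (range (n + 1)).erase k, |(k : ℝ) - l| := by
            gcongr
            exact factorial_div_two_pow_le_prod_abs_sub (hmem.1 hk)
        _ = ∏ l ∈ (range (n + 1)).erase k, c * |(k : ℝ) - l| := by
            rw [prod_mul_distrib, prod_const, hcard]
        _ ≤ _ := prod_le_prod (fun l _ ↦ by positivity) fun l hl ↦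
            hsep k (hmem.1 hk) l (hmem.1 (mem_of_mem_erase hl))
    calc _ ≤ _ := norm_coeff_lagrange_basis_le (fun l hl ↦ hv l (hmem.1 hl)) k i
      _ ≤ 2 ^ n / (c ^ n * (n ! / 2 ^ n)) := by rw [hcard]; gcongr
      _ = (4 / c) ^ n / n ! := by
        rw [show (4 : ℝ) = 2 * 2 by norm_num, div_pow, mul_pow]
        field_simp
  have h := norm_coeff_le_of_norm_eval_le hinj (by simpa using hP) (fun k hk ↦ hM k (hmem.1 hk))
    hbasis
  rwa [card_range, Nat.cast_succ] at h

end LagrangeBasis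

section TuranRemez

open Polynomial
open scoped Nat

theorem two_mul_abs_sub_le_norm_exp_sub_exp {x y : ℝ} (h : |x - y| ≤ 1) :
    2 * |x - y| ≤
      ‖Complex.exp (Complex.I * (π * x : ℝ)) - Complex.exp (Complex.I * (π * y : ℝ))‖ := by
  have hfactor : Complex.exp (Complex.I * (π * x : ℝ)) - Complex.exp (Complex.I * (π * y : ℝ)) =
      Complex.exp (Complex.I * (π * y : ℝ)) *
        (Complex.exp (Complex.I * (π * (x - y) : ℝ)) - 1) := by
    rw [mul_sub_one, ← Complex.exp_add]
    push_cast
    ring_nf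
  rw [hfactor, norm_mul, Complex.norm_exp_I_mul_ofReal, one_mul,
    Complex.norm_exp_I_mul_ofReal_sub_one, norm_mul, Real.norm_two, Real.norm_eq_abs]
  have habs : |π * (x - y) / 2| = π / 2 * |x - y| := by
    rw [mul_div_right_comm, abs_mul, abs_of_pos (by positivity)]
  have hjordan := Real.mul_abs_le_abs_sin (x := π * (x - y) / 2)
    (habs ▸ mul_le_of_le_one_right (by positivity) h)
  have hcancel : 2 / π * (π / 2 * |x - y|) = |x - y| := by field_simp
  rw [habs, hcancel] at hjordan
  gcongr

theorem norm_coeff_le_of_le_volume {n : ℕ} {P : ℂ[X]} (hP : P.degree < (n + 1 : ℕ)) {m : ℝ}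
    (hm : 0 < m) {A : Set ℝ} (hA : A ⊆ Set.Icc 0 1) (hvol : ENNReal.ofReal m ≤ volume A) {M : ℝ}
    (hM : ∀ x ∈ A, ‖P.eval (Complex.exp (Complex.I * (π * x : ℝ)))‖ ≤ M) (i : ℕ) :
    ‖P.coeff i‖ ≤ (n + 1) * (M * ((2 / m) ^ n * exp (n + 1))) := by
  set δ : ℝ := m / (n + 1) with hδ
  have hδ_pos : 0 < δ := by positivity
  have hvol' : ENNReal.ofReal (n * δ) < volume A := by
    refine ((ENNReal.ofReal_lt_ofReal_iff hm).2 ?_).trans_le hvol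
    rw [hδ, mul_div_left_comm]
    exact mul_lt_of_lt_one_right hm ((div_lt_one (by positivity)).2 (lt_add_one _))
  obtain ⟨p, hpA, hp⟩ := exists_add_le_add_one_of_lt_volume hδ_pos n (bddBelow_Icc.mono hA) hvol'
  have hsep : ∀ k ≤ n, ∀ l ≤ n, 2 * δ * |(k : ℝ) - l| ≤
      ‖Complex.exp (Complex.I * (π * p k : ℝ)) - Complex.exp (Complex.I * (π * p l : ℝ))‖ := by
    intro k hk l hl
    have hdist : |p k - p l| ≤ 1 := by
      simpa using abs_sub_le_of_le_of_le (hA (hpA k hk)).1 (hA (hpA k hk)).2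
        (hA (hpA l hl)).1 (hA (hpA l hl)).2
    refine le_trans ?_ (two_mul_abs_sub_le_norm_exp_sub_exp hdist)
    rw [mul_assoc]
    gcongr
    exact mul_abs_sub_le_abs_sub hp hk hl
  have hM_nonneg : 0 ≤ M := (norm_nonneg _).trans (hM _ (hpA 0 n.zero_le))
  have hconst : (4 / (2 * δ)) ^ n / n ! ≤ (2 / m) ^ n * exp (n + 1) := by
    have hbase : 4 / (2 * δ) = 2 / m * (n + 1) := by
      rw [hδ]
      field_simp
      norm_num
    calc (4 / (2 * δ)) ^ n / n ! = (2 / m) ^ n * (((n : ℝ) + 1) ^ n / n !) := by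
          rw [hbase, mul_pow, mul_div_assoc]
      _ ≤ _ := by
          gcongr
          exact Real.pow_div_factorial_le_exp _ (by positivity) n
  refine (norm_coeff_le_of_separated_nodes (by positivity : 0 < 2 * δ)
    (v := fun k ↦ Complex.exp (Complex.I * (π * p k : ℝ)))
    (fun k _ ↦ (Complex.norm_exp_I_mul_ofReal _).le) hsep hP
    (fun k hk ↦ hM _ (hpA k hk)) i).trans ?_
  gcongr

/-- The polynomial `∑_{j ≤ N} b_j (X ^ (N + j) - X ^ (N - j)) / 2i`, which at `exp (iπx)` takes the
value `exp (iπNx) * ∑_{j ≤ N} b_j sin (jπx)`. -/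
noncomputable def sinePolynomial (b : ℕ → ℝ) (N : ℕ) : ℂ[X] :=
  ∑ j ∈ Finset.range (N + 1), C (b j / (2 * Complex.I)) * (X ^ (N + j) - X ^ (N - j))

theorem degree_sinePolynomial_lt (b : ℕ → ℝ) (N : ℕ) :
    (sinePolynomial b N).degree < (2 * N + 1 : ℕ) := by
  rw [← mem_degreeLT]
  refine Submodule.sum_mem _ fun j hj ↦ ?_
  have hj : j ≤ N := Finset.mem_range_succ_iff.1 hj
  rw [← smul_eq_C_mul]
  refine Submodule.smul_mem _ _ (Submodule.sub_mem _ ?_ ?_) <;>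
  · rw [mem_degreeLT, degree_X_pow]
    exact_mod_cast (by lia)

theorem coeff_sinePolynomial (b : ℕ → ℝ) {N j : ℕ} (hj : j ≠ 0) (hjN : j ≤ N) :
    (sinePolynomial b N).coeff (N + j) = b j / (2 * Complex.I) := by
  have hcoeff (k : ℕ) :
      (C (b k / (2 * Complex.I)) * (X ^ (N + k) - X ^ (N - k))).coeff (N + j) =
        if k = j then b k / (2 * Complex.I) else 0 := by
    have hlow : N + j ≠ N - k := by lia
    simp only [coeff_C_mul, coeff_sub, coeff_X_pow, hlow, if_false, sub_zero, add_right_inj,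
      mul_ite, mul_one, mul_zero, eq_comm]
  rw [sinePolynomial, finsetSum_coeff, Finset.sum_congr rfl fun k _ ↦ hcoeff k,
    Finset.sum_ite_eq' _ j, if_pos (Finset.mem_range_succ_iff.2 hjN)]

theorem sin_eq_exp_pow_sub_inv (j : ℕ) (x : ℝ) :
    (sin (j * π * x) : ℂ) =
      (Complex.exp (Complex.I * (π * x : ℝ)) ^ j - (Complex.exp (Complex.I * (π * x : ℝ)) ^ j)⁻¹) /
        (2 * Complex.I) := by
  have harg : (j : ℂ) * (Complex.I * (π * x : ℝ)) = (j * π * x : ℝ) * Complex.I := by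
    push_cast
    ring
  rw [← Complex.exp_nat_mul, ← Complex.exp_neg, harg, ← neg_mul, eq_div_iff (by simp),
    Complex.ofReal_sin, Complex.sin]
  linear_combination (Complex.exp (-(j * π * x : ℝ) * Complex.I) -
    Complex.exp ((j * π * x : ℝ) * Complex.I)) * Complex.I_sq

theorem eval_sinePolynomial (b : ℕ → ℝ) (N : ℕ) (x : ℝ) :
    (sinePolynomial b N).eval (Complex.exp (Complex.I * (π * x : ℝ))) =
      Complex.exp (Complex.I * (π * x : ℝ)) ^ N *
        (∑ j ∈ Finset.range (N + 1), b j * sin (j * π * x) : ℝ) := by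
  rw [sinePolynomial, eval_finsetSum, Complex.ofReal_sum, Finset.mul_sum]
  refine Finset.sum_congr rfl fun j hj ↦ ?_
  rw [Complex.ofReal_mul (b j), sin_eq_exp_pow_sub_inv, eval_mul, eval_C, eval_sub, eval_pow,
    eval_pow, eval_X, pow_sub₀ _ (Complex.exp_ne_zero _) (Finset.mem_range_succ_iff.1 hj), pow_add]
  ring

theorem abs_le_of_abs_sum_mul_sin_le {N : ℕ} {b : ℕ → ℝ} {m : ℝ} (hm : 0 < m) {A : Set ℝ}
    (hA : A ⊆ Set.Icc 0 1) (hvol : ENNReal.ofReal m ≤ volume A) {M : ℝ}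
    (hM : ∀ x ∈ A, |∑ j ∈ Finset.range (N + 1), b j * sin (j * π * x)| ≤ M) {j : ℕ} (hj : j ≠ 0)
    (hjN : j ≤ N) :
    |b j| ≤ 2 * ((2 * N + 1) * (M * ((2 / m) ^ (2 * N) * exp (2 * N + 1)))) := by
  have hval : ∀ x ∈ A,
      ‖(sinePolynomial b N).eval (Complex.exp (Complex.I * (π * x : ℝ)))‖ ≤ M := fun x hx ↦ by
    rw [eval_sinePolynomial, norm_mul, norm_pow, Complex.norm_exp_I_mul_ofReal, one_pow, one_mul,
      Complex.norm_real]
    exact hM x hx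
  have h := norm_coeff_le_of_le_volume (degree_sinePolynomial_lt b N) hm hA hvol hval (N + j)
  rw [coeff_sinePolynomial b hj hjN, norm_div, norm_mul, Complex.norm_real, Complex.norm_I,
    Complex.norm_ofNat, mul_one, Real.norm_eq_abs, div_le_iff₀' two_pos] at h
  exact_mod_cast h

theorem exists_mul_pow_mul_exp_le_exp {κ : ℝ} (hκ : 0 < κ) :
    ∃ K > 0, ∀ N : ℕ, (N + 1) * (2 * ((2 * N + 1) * (κ ^ (2 * N) * exp (2 * N + 1)))) ≤
      exp (K * (N + 1)) := by
  refine ⟨6 + 2 * |log κ|, by positivity, fun N ↦ ?_⟩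
  have hpoly : (2 * N + 1 : ℝ) ≤ exp (2 * N) := add_one_le_exp _
  have hpoly' : 2 * (N + 1 : ℝ) ≤ exp (2 * N + 1) := by linarith [add_one_le_exp (2 * N + 1 : ℝ)]
  have hpow : κ ^ (2 * N) ≤ exp (2 * N * |log κ|) := by
    rw [← rpow_natCast, rpow_def_of_pos hκ, mul_comm]
    push_cast
    gcongr
    exact le_abs_self _
  calc (N + 1) * (2 * ((2 * N + 1) * (κ ^ (2 * N) * exp (2 * N + 1))))
      = 2 * (N + 1) * (2 * N + 1) * κ ^ (2 * N) * exp (2 * N + 1) := by ring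
    _ ≤ exp (2 * N + 1) * exp (2 * N) * exp (2 * N * |log κ|) * exp (2 * N + 1) := by gcongr
    _ = exp (2 * N + 1 + 2 * N + 2 * N * |log κ| + (2 * N + 1)) := by simp only [exp_add]
    _ ≤ exp ((6 + 2 * |log κ|) * (N + 1)) := exp_le_exp.2 (by nlinarith [abs_nonneg (log κ)])

theorem exists_sum_abs_le_exp_mul {m : ℝ} (hm : 0 < m) :
    ∃ K > 0, ∀ (N : ℕ) (b : ℕ → ℝ), b 0 = 0 → ∀ A ⊆ Set.Icc (0 : ℝ) 1,
      ENNReal.ofReal m ≤ volume A → ∀ M : ℝ,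
      (∀ x ∈ A, |∑ j ∈ Finset.range (N + 1), b j * sin (j * π * x)| ≤ M) →
      ∑ j ∈ Finset.range (N + 1), |b j| ≤ exp (K * (N + 1)) * M := by
  obtain ⟨K, hK, hexp⟩ := exists_mul_pow_mul_exp_le_exp (show 0 < 2 / m by positivity)
  refine ⟨K, hK, fun N b hb A hA hvol M hM ↦ ?_⟩
  have hM_nonneg : 0 ≤ M := by
    obtain ⟨x, hx⟩ := nonempty_of_measure_ne_zero ((ENNReal.ofReal_pos.2 hm).trans_le hvol).ne'
    exact (abs_nonneg _).trans (hM x hx)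
  have hcoeff : ∀ j ∈ Finset.range (N + 1),
      |b j| ≤ 2 * ((2 * N + 1) * (M * ((2 / m) ^ (2 * N) * exp (2 * N + 1)))) := by
    intro j hj
    rcases eq_or_ne j 0 with rfl | hj0
    · rw [hb, abs_zero]
      positivity
    · exact abs_le_of_abs_sum_mul_sin_le hm hA hvol hM hj0 (Finset.mem_range_succ_iff.1 hj)
  calc ∑ j ∈ Finset.range (N + 1), |b j|
      ≤ (N + 1) * (2 * ((2 * N + 1) * (M * ((2 / m) ^ (2 * N) * exp (2 * N + 1))))) := by
        simpa using Finset.sum_le_card_nsmul _ _ _ hcoeff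
    _ = (N + 1) * (2 * ((2 * N + 1) * ((2 / m) ^ (2 * N) * exp (2 * N + 1)))) * M := by ring
    _ ≤ exp (K * (N + 1)) * M := by gcongr; exact hexp N

end TuranRemez

section Telescoping

open Filter Topology

theorem ae_restrict_eventually_mul_le_measureReal_inter_Ioo {E : Set ℝ} {η κ : ℝ} (hη : η < κ)
    (hκ : κ ≤ 2) :
    ∀ᵐ x ∂volume.restrict E, ∀ᶠ ρ in 𝓝[>] 0,
      η * ρ ≤ volume.real (E ∩ Set.Ioo (x - ρ) (x - ρ + κ * ρ)) := by
  filter_upwards [Besicovitch.ae_tendsto_measure_inter_div volume E] with x hx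
  have hdensity : Tendsto (fun ρ ↦ volume.real (E ∩ Metric.closedBall x ρ) /
      volume.real (Metric.closedBall x ρ)) (𝓝[>] 0) (𝓝 1) := by
    simpa only [Function.comp_def, ENNReal.toReal_div, ENNReal.toReal_one] using!
      (ENNReal.tendsto_toReal ENNReal.one_ne_top).comp hx
  filter_upwards [hdensity.eventually_const_lt (show 1 - (κ - η) / 2 < 1 by linarith),
    self_mem_nhdsWithin] with ρ hρ (hρ_pos : 0 < ρ)
  rw [Real.volume_real_closedBall hρ_pos.le, lt_div_iff₀ (by positivity)] at hρ
  have hcover : E ∩ Metric.closedBall x ρ ⊆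
      E ∩ Set.Ioo (x - ρ) (x - ρ + κ * ρ) ∪ ({x - ρ} ∪ Set.Icc (x - ρ + κ * ρ) (x + ρ)) := by
    rintro y ⟨hyE, hy⟩
    rw [Real.closedBall_eq_Icc] at hy
    rcases hy.1.eq_or_lt with h | h
    · exact .inr (.inl h.symm)
    · exact (lt_or_ge y (x - ρ + κ * ρ)).imp (fun h' ↦ ⟨hyE, h, h'⟩) fun h' ↦ .inr ⟨h', hy.2⟩
  have hfin : volume (E ∩ Set.Ioo (x - ρ) (x - ρ + κ * ρ) ∪
      ({x - ρ} ∪ Set.Icc (x - ρ + κ * ρ) (x + ρ))) ≠ ⊤ := by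
    refine measure_union_ne_top ((measure_mono Set.inter_subset_right).trans_lt
      measure_Ioo_lt_top).ne (measure_union_ne_top (by simp) measure_Icc_lt_top.ne)
  have hrest : volume.real ({x - ρ} ∪ Set.Icc (x - ρ + κ * ρ) (x + ρ)) ≤ 2 * ρ - κ * ρ := by
    refine (measureReal_union_le _ _).trans_eq ?_
    rw [measureReal_def, Real.volume_singleton, Real.volume_real_Icc_of_le (by nlinarith)]
    simp only [ENNReal.toReal_zero]
    ring
  have hle := (measureReal_mono (μ := volume) hcover hfin).trans (measureReal_union_le _ _)
  linarith

theorem le_setIntegral_of_le_setIntegral_add {α : Type*} [MeasurableSpace α] {μ : Measure α}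
    {E : Set α} {J : ℕ → Set α} {f : α → ℝ} {u : ℕ → ℝ} (hJ : ∀ m, MeasurableSet (J m))
    (hdisj : Pairwise (Function.onFun Disjoint J)) (hJE : ∀ m, J m ⊆ E) (hf : IntegrableOn f E μ)
    (hf_nonneg : ∀ x, 0 ≤ f x) (hu : ∀ m, u m ≤ ∫ x in J m, f x ∂μ + u (m + 1))
    (hlim : Tendsto u atTop (𝓝 0)) : u 0 ≤ ∫ x in E, f x ∂μ := by
  have hpartial : ∀ n, u 0 - u n ≤ ∫ x in E, f x ∂μ := fun n ↦
    calc u 0 - u n = ∑ m ∈ Finset.range n, (u m - u (m + 1)) := (Finset.sum_range_sub' u n).symm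
      _ ≤ ∑ m ∈ Finset.range n, ∫ x in J m, f x ∂μ :=
        Finset.sum_le_sum fun m _ ↦ by linarith [hu m]
      _ = ∫ x in ⋃ m ∈ Finset.range n, J m, f x ∂μ :=
        (integral_biUnion_finset _ (fun m _ ↦ hJ m) (hdisj.set_pairwise _)
          fun m _ ↦ hf.mono_set (hJE m)).symm
      _ ≤ ∫ x in E, f x ∂μ := setIntegral_mono_set hf (.of_forall hf_nonneg)
        (Set.iUnion₂_subset fun m _ ↦ hJE m).eventuallyLE
  simpa using le_of_tendsto' (hlim.const_sub (u 0)) hpartial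

/-- The interpolation inequality obtained by splitting a solution at every frequency `N`: the
observation `O s` controls the low frequencies at cost `exp (K (N + 1))`, while the high frequencies
of the state `A s` are those of `A s'`, `s' > s`, damped by `exp (-c N² (s' - s))`. -/
def FrequencyInterpolation (K c : ℝ) (A O : ℝ → ℝ) (E : Set ℝ) (T : ℝ) : Prop :=
  ∀ s ∈ E, ∀ s' ∈ Set.Ioo s T, ∀ N : ℕ,
    A s ≤ exp (K * (N + 1)) * (O s + exp (-(c * N ^ 2 * (s' - s))) * A s')

variable {K c S T : ℝ} {E : Set ℝ}

theorem FrequencyInterpolation.sub_mul_measureReal_le {A O : ℝ → ℝ}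
    (h : FrequencyInterpolation K c A O E T) (hc : 0 ≤ c) (hA : ∀ t, 0 ≤ A t)
    (hmono : MonotoneOn A (Set.Ico S T)) {J : Set ℝ} (hJ : MeasurableSet J) (hJE : J ⊆ E)
    (hO : IntegrableOn O J) {l d l' : ℝ} (hl : S ≤ l)
    (hJl : J ⊆ Set.Ioo l (l' - d)) (hd : 0 ≤ d) (hl' : l' < T) (N : ℕ) :
    (A l - exp (K * (N + 1) - c * N ^ 2 * d) * A l') * volume.real J ≤
      exp (K * (N + 1)) * ∫ t in J, O t := by
  have hpoint : ∀ s ∈ J,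
      A l - exp (K * (N + 1) - c * N ^ 2 * d) * A l' ≤ exp (K * (N + 1)) * O s := by
    intro s hs
    obtain ⟨hls, hsl'⟩ := hJl hs
    have hA_le : A l ≤ A s := hmono ⟨hl, by linarith⟩ ⟨by linarith, by linarith⟩ hls.le
    have hexp : exp (-(c * N ^ 2 * (l' - s))) * A l' ≤ exp (-(c * N ^ 2 * d)) * A l' := by
      gcongr
      exacts [hA l', by linarith]
    have hint := h s (hJE hs) l' ⟨by linarith, hl'⟩ N
    have hscaled := mul_le_mul_of_nonneg_left hexp (exp_pos (K * (N + 1))).le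
    rw [sub_eq_add_neg (K * _), exp_add]
    linarith
  have hJ_fin : volume J ≠ ⊤ := ((measure_mono hJl).trans_lt measure_Ioo_lt_top).ne
  have hint := setIntegral_mono_on (integrableOn_const hJ_fin) (hO.const_mul _) hJ hpoint
  rwa [setIntegral_const, integral_const_mul, smul_eq_mul, mul_comm] at hint

theorem exists_nat_mul_add_one_le_mul_sq (K : ℝ) {q : ℝ} (hq : 0 < q) :
    ∃ n : ℕ, 2 * K * (n + 1) + 1 ≤ q * n ^ 2 := by
  obtain ⟨n, hn⟩ := exists_nat_ge (max 1 ((4 * |K| + 1) / q))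
  have hn1 : (1 : ℝ) ≤ n := (le_max_left _ _).trans hn
  have hnq : 4 * |K| + 1 ≤ n * q := (div_le_iff₀ hq).1 ((le_max_right _ _).trans hn)
  refine ⟨n, ?_⟩
  calc 2 * K * (n + 1) + 1 ≤ 2 * |K| * (n + n) + n := by
        gcongr
        exact le_abs_self K
    _ = (4 * |K| + 1) * n := by ring
    _ ≤ n * q * n := by gcongr
    _ = q * n ^ 2 := by ring

theorem exp_weight_mul_exp_le_inv {n p : ℝ} (hK : 0 ≤ K) (hp : 1 ≤ p) :
    exp (-((K * (n + 1) + 1) * p)) * exp (K * (n * p + 1)) ≤ p⁻¹ := by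
  rw [← exp_add, ← inv_inv (exp _), ← exp_neg]
  have hp_le : p ≤ exp (-(-((K * (n + 1) + 1) * p) + K * (n * p + 1))) :=
    calc p ≤ exp p := by linarith [add_one_le_exp p]
      _ ≤ _ := exp_le_exp.2 (by nlinarith)
  gcongr

theorem exp_weight_mul_exp_sub_le_exp_weight {n p q : ℝ} (hK : 0 ≤ K) (hp : 1 ≤ p)
    (hq : 2 * K * (n + 1) + 1 ≤ q * n ^ 2) :
    exp (-((K * (n + 1) + 1) * p)) * exp (K * (n * p + 1) - q * n ^ 2 * p) ≤
      exp (-((K * (n + 1) + 1) * (p * 2))) := by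
  rw [← exp_add]
  have hqp := mul_le_mul_of_nonneg_right hq (zero_le_one.trans hp)
  have hKp := mul_le_mul_of_nonneg_left hp hK
  exact exp_le_exp.2 (by linarith)

theorem FrequencyInterpolation.weighted_le_add {A O : ℝ → ℝ}
    (h : FrequencyInterpolation K c A O E T) (hK : 0 ≤ K) (hc : 0 ≤ c) (hA : ∀ t, 0 ≤ A t)
    (hmono : MonotoneOn A (Set.Ico S T)) (hO : IntegrableOn O E) (hO_nonneg : ∀ t, 0 ≤ O t)
    {J : Set ℝ} (hJ : MeasurableSet J) (hJE : J ⊆ E) {r l l' : ℝ} {m n : ℕ} (hr : 0 < r)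
    (hl : S ≤ l) (hJl : J ⊆ Set.Ioo l (l' - r / 2 ^ m / 4)) (hl' : l' < T)
    (hvol : r / 2 ^ m / 8 ≤ volume.real J) (hn : 2 * K * (n + 1) + 1 ≤ c * r / 4 * n ^ 2) :
    exp (-((K * (n + 1) + 1) * 2 ^ m)) * A l ≤
      8 / r * (∫ t in J, O t) + exp (-((K * (n + 1) + 1) * 2 ^ (m + 1))) * A l' := by
  have hp : (1 : ℝ) ≤ 2 ^ m := one_le_pow₀ one_le_two
  set w := exp (-((K * (n + 1) + 1) * 2 ^ m))
  set I := ∫ t in J, O t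
  set e := exp (K * (n * 2 ^ m + 1))
  set e' := exp (K * (n * 2 ^ m + 1) - c * r / 4 * n ^ 2 * 2 ^ m)
  have hI : 0 ≤ I := setIntegral_nonneg hJ fun t _ ↦ hO_nonneg t
  have hint : (A l - e' * A l') * volume.real J ≤ e * I := by
    have hdamp : c * ((n * 2 ^ m : ℕ) : ℝ) ^ 2 * (r / 2 ^ m / 4) = c * r / 4 * n ^ 2 * 2 ^ m := by
      push_cast
      field_simp
    have := h.sub_mul_measureReal_le hc hA hmono hJ hJE (hO.mono_set hJE) hl hJl (by positivity)
      hl' (n * 2 ^ m)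
    rw [hdamp] at this
    push_cast at this
    exact this
  have hdiff : A l - e' * A l' ≤ 8 / r * 2 ^ m * (e * I) := by
    rcases le_total (A l - e' * A l') 0 with hneg | hpos
    · exact hneg.trans (by positivity)
    · calc A l - e' * A l' = 8 / r * 2 ^ m * ((A l - e' * A l') * (r / 2 ^ m / 8)) := by field_simp
        _ ≤ 8 / r * 2 ^ m * (e * I) := mul_le_mul_of_nonneg_left
          ((mul_le_mul_of_nonneg_left hvol hpos).trans hint) (by positivity)
  have hobs : w * e ≤ (2 ^ m)⁻¹ := exp_weight_mul_exp_le_inv hK hp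
  have htail : w * e' ≤ exp (-((K * (n + 1) + 1) * 2 ^ (m + 1))) :=
    pow_succ (2 : ℝ) m ▸ exp_weight_mul_exp_sub_le_exp_weight hK hp hn
  calc w * A l ≤ w * (8 / r * 2 ^ m * (e * I) + e' * A l') := by gcongr; linarith
    _ = w * e * (8 / r * 2 ^ m * I) + w * e' * A l' := by ring
    _ ≤ (2 ^ m)⁻¹ * (8 / r * 2 ^ m * I) + exp (-((K * (n + 1) + 1) * 2 ^ (m + 1))) * A l' := by
      gcongr
      exact hA l'
    _ = _ := by field_simp

theorem exists_forall_dyadic_le_measureReal_inter_Ioo (hE : MeasurableSet E)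
    (hES : E ⊆ Set.Ioo S T) (hE_pos : 0 < volume E) :
    ∃ L < T, ∃ r > 0, S ≤ L - r ∧ ∀ m : ℕ, r / 2 ^ m / 8 ≤
      volume.real (E ∩ Set.Ioo (L - r / 2 ^ m) (L - r / 2 ^ m + 1 / 4 * (r / 2 ^ m))) := by
  have : (ae (volume.restrict E)).NeBot := ae_neBot.2 (Measure.restrict_eq_zero.not.2 hE_pos.ne')
  obtain ⟨L, hL, hLE⟩ := ((ae_restrict_eventually_mul_le_measureReal_inter_Ioo (E := E)
    (show (1 / 8 : ℝ) < 1 / 4 by norm_num) (by norm_num)).and (ae_restrict_mem hE)).exists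
  obtain ⟨hSL, hLT⟩ := hES hLE
  obtain ⟨r, hr_pos, hr⟩ := mem_nhdsGT_iff_exists_Ioc_subset.1
    (hL.and (Ioc_mem_nhdsGT (sub_pos.2 hSL)))
  refine ⟨L, hLT, r, hr_pos, ?_, fun m ↦ ?_⟩
  · linarith [(hr (Set.right_mem_Ioc.2 hr_pos)).2.2]
  · have hr_pos : 0 < r := hr_pos
    have hmem : r / 2 ^ m ∈ Set.Ioc 0 r :=
      ⟨by positivity, div_le_self hr_pos.le (one_le_pow₀ one_le_two)⟩
    exact (by ring : r / 2 ^ m / 8 = 1 / 8 * (r / 2 ^ m)).trans_le (hr hmem).1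

theorem le_mul_setIntegral_of_dyadic_weighted_le_add {A O : ℝ → ℝ} {l : ℕ → ℝ} {J : ℕ → Set ℝ}
    {B C β : ℝ} (hβ : 0 < β) (hC : 0 ≤ C) (hA : ∀ t, 0 ≤ A t) (hAB : ∀ m, A (l m) ≤ B)
    (hO : IntegrableOn O E) (hO_nonneg : ∀ t, 0 ≤ O t) (hl : Monotone l)
    (hJ : ∀ m, MeasurableSet (J m)) (hJE : ∀ m, J m ⊆ E)
    (hJl : ∀ m, J m ⊆ Set.Ioo (l m) (l (m + 1)))
    (hstep : ∀ m, exp (-(β * 2 ^ m)) * A (l m) ≤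
      C * (∫ t in J m, O t) + exp (-(β * 2 ^ (m + 1))) * A (l (m + 1))) :
    A (l 0) ≤ exp β * C * ∫ t in E, O t := by
  have hlim : Tendsto (fun m ↦ exp (-(β * 2 ^ m)) * A (l m)) atTop (𝓝 0) := by
    have hexp : Tendsto (fun m : ℕ ↦ exp (-(β * 2 ^ m)) * B) atTop (𝓝 (0 * B)) :=
      (tendsto_exp_neg_atTop_nhds_zero.comp
        ((tendsto_pow_atTop_atTop_of_one_lt one_lt_two).const_mul_atTop hβ)).mul_const _
    exact squeeze_zero (fun m ↦ mul_nonneg (exp_pos _).le (hA _))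
      (fun m ↦ mul_le_mul_of_nonneg_left (hAB m) (exp_pos _).le) (zero_mul B ▸ hexp)
  have hdisj : Pairwise (Function.onFun Disjoint J) :=
    hl.pairwise_disjoint_on_Ioo_succ.mono fun i j hij ↦ hij.mono (hJl i) (hJl j)
  have htelescope := le_setIntegral_of_le_setIntegral_add (f := fun t ↦ C * O t)
    (u := fun m ↦ exp (-(β * 2 ^ m)) * A (l m)) hJ hdisj hJE (hO.const_mul C)
    (fun t ↦ mul_nonneg hC (hO_nonneg t))
    (fun m ↦ (integral_const_mul C O).symm ▸ hstep m) hlim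
  calc A (l 0) = exp β * (exp (-(β * 2 ^ 0)) * A (l 0)) := by simp [← mul_assoc, ← exp_add]
    _ ≤ exp β * ∫ t in E, C * O t := by gcongr
    _ = exp β * C * ∫ t in E, O t := by rw [integral_const_mul, mul_assoc]

theorem exists_forall_le_mul_setIntegral_of_frequencyInterpolation (hK : 0 ≤ K) (hc : 0 < c)
    (hE : MeasurableSet E) (hES : E ⊆ Set.Ioo S T) (hE_pos : 0 < volume E) :
    ∃ C > 0, ∀ A O : ℝ → ℝ, FrequencyInterpolation K c A O E T → (∀ t, 0 ≤ A t) →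
      MonotoneOn A (Set.Ico S T) → IntegrableOn O E → (∀ t, 0 ≤ O t) →
      A S ≤ C * ∫ t in E, O t := by
  obtain ⟨L, hLT, r, hr, hSL, hdense⟩ := exists_forall_dyadic_le_measureReal_inter_Ioo hE hES hE_pos
  obtain ⟨n, hn⟩ := exists_nat_mul_add_one_le_mul_sq K (show 0 < c * r / 4 by positivity)
  refine ⟨exp (K * (n + 1) + 1) * (8 / r), by positivity, fun A O h hA hmono hO hO_nonneg ↦ ?_⟩
  set l : ℕ → ℝ := fun m ↦ L - r / 2 ^ m with hl
  set J : ℕ → Set ℝ := fun m ↦ E ∩ Set.Ioo (l m) (l m + 1 / 4 * (r / 2 ^ m))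
  have hl_lt (m) : l m < L := sub_lt_self _ (by positivity)
  have hl_succ (m) : l m + 1 / 2 * (r / 2 ^ m) = l (m + 1) := by
    simp only [hl, pow_succ]
    field_simp
    ring
  have hl_mono : Monotone l := monotone_nat_of_le_succ fun m ↦
    (hl_succ m).symm ▸ le_add_of_nonneg_right (by positivity)
  have hl_zero : S ≤ l 0 := by simpa [hl] using hSL
  have hl_mem (m) : l m ∈ Set.Ico S T := ⟨hl_zero.trans (hl_mono m.zero_le), (hl_lt m).trans hLT⟩
  have hJl (m) : J m ⊆ Set.Ioo (l m) (l (m + 1) - r / 2 ^ m / 4) := by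
    rw [← hl_succ]
    exact Set.inter_subset_right.trans (Set.Ioo_subset_Ioo_right (by linarith))
  have hJ (m) : MeasurableSet (J m) := hE.inter measurableSet_Ioo
  calc A S ≤ A (l 0) := hmono ⟨le_rfl, hl_zero.trans_lt (hl_mem 0).2⟩ (hl_mem 0) hl_zero
    _ ≤ exp (K * (n + 1) + 1) * (8 / r) * ∫ t in E, O t :=
      le_mul_setIntegral_of_dyadic_weighted_le_add (B := A L) (by positivity) (by positivity) hA
        (fun m ↦ hmono (hl_mem m) ⟨(hl_mem m).1.trans (hl_lt m).le, hLT⟩ (hl_lt m).le)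
        hO hO_nonneg hl_mono hJ (fun m ↦ Set.inter_subset_left)
        (fun m ↦ (hJl m).trans (Set.Ioo_subset_Ioo_right (sub_le_self _ (by positivity))))
        fun m ↦ h.weighted_le_add hK hc.le hA hmono hO hO_nonneg (hJ m) Set.inter_subset_left hr
          (hl_mem m).1 (hJl m) (hl_mem _).2 (hdense m) hn

end Telescoping

section SineSeries

theorem measureReal_univ_div_two_le_measureReal_le_two_mul_average {α : Type*} [MeasurableSpace α]
    {μ : Measure α} [IsFiniteMeasure μ] {f : α → ℝ} (hf : Integrable f μ) (hf_nonneg : 0 ≤ᵐ[μ] f) :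
    μ.real Set.univ / 2 ≤ μ.real {x | f x ≤ 2 * ⨍ y, f y ∂μ} := by
  set a := ⨍ y, f y ∂μ
  have hintegral : μ.real Set.univ * a = ∫ x, f x ∂μ := measure_smul_average μ f
  have hlarge : μ.real {x | 2 * a < f x} ≤ μ.real Set.univ / 2 := by
    have ha : 0 ≤ a := integral_nonneg_of_ae (hf_nonneg.filter_mono (Measure.ae_smul_measure_le _))
    rcases ha.eq_or_lt' with ha | ha
    · rw [ha, mul_zero, eq_comm, integral_eq_zero_iff_of_nonneg_ae hf_nonneg hf] at hintegral
      have hnull : μ {x | 2 * a < f x} = 0 := by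
        rw [ha, mul_zero]
        exact measure_mono_null (fun x hx ↦ ne_of_gt hx) hintegral
      rw [measureReal_def, hnull, ENNReal.toReal_zero]
      positivity
    · have hmarkov := mul_meas_ge_le_integral_of_nonneg hf_nonneg hf (2 * a)
      have hmono : μ.real {x | 2 * a < f x} ≤ μ.real {x | 2 * a ≤ f x} :=
        measureReal_mono fun x (hx : 2 * a < f x) ↦ hx.le
      nlinarith
  have hcover : μ.real Set.univ ≤ μ.real {x | f x ≤ 2 * a} + μ.real {x | 2 * a < f x} :=
    (measureReal_mono fun x _ ↦ le_or_gt (f x) (2 * a)).trans (measureReal_union_le _ _)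
  linarith

/-- The norm of `f` in `L²(G)`, as a real number; it is `0` if `f ^ 2` is not integrable on `G`. -/
noncomputable def l2NormOn (G : Set ℝ) (f : ℝ → ℝ) : ℝ := √(∫ x in G, f x ^ 2)

variable {G : Set ℝ} {b : ℕ → ℝ}

theorem l2NormOn_nonneg (G : Set ℝ) (f : ℝ → ℝ) : 0 ≤ l2NormOn G f := Real.sqrt_nonneg _

theorem l2NormOn_le_of_abs_le {f : ℝ → ℝ} {M : ℝ} (hG : volume G ≤ 1) (hM : 0 ≤ M)
    (hf : ∀ x, |f x| ≤ M) : l2NormOn G f ≤ M := by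
  refine Real.sqrt_le_iff.2 ⟨hM, (le_abs_self _).trans ?_⟩
  have hsq : ∀ x ∈ G, ‖f x ^ 2‖ ≤ M ^ 2 := fun x _ ↦ by
    simpa only [norm_pow] using pow_le_pow_left₀ (norm_nonneg _) (hf x) 2
  calc |∫ x in G, f x ^ 2| ≤ M ^ 2 * volume.real G :=
        norm_setIntegral_le_of_norm_le_const (hG.trans_lt ENNReal.one_lt_top) hsq
    _ ≤ M ^ 2 := mul_le_of_le_one_right (sq_nonneg M) (ENNReal.toReal_mono ENNReal.one_ne_top hG)

theorem measureReal_div_two_le_measureReal_abs_le_l2NormOn {f : ℝ → ℝ} (hG : MeasurableSet G)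
    (hG_fin : volume G ≠ ⊤) (hf : IntegrableOn (fun x ↦ f x ^ 2) G) :
    volume.real G / 2 ≤
      volume.real {x ∈ G | |f x| ≤ √(2 / volume.real G) * l2NormOn G f} := by
  have : IsFiniteMeasure (volume.restrict G) := ⟨by simpa using hG_fin.lt_top⟩
  have hmarkov := measureReal_univ_div_two_le_measureReal_le_two_mul_average hf
    (.of_forall fun x ↦ sq_nonneg (f x))
  rw [measureReal_restrict_apply_univ, measureReal_restrict_apply' hG, setAverage_eq,
    smul_eq_mul, ← mul_assoc, ← div_eq_mul_inv] at hmarkov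
  refine hmarkov.trans (measureReal_mono (fun x hx ↦ ⟨hx.2, ?_⟩) ?_)
  · rw [l2NormOn, ← Real.sqrt_mul (by positivity)]
    exact Real.abs_le_sqrt hx.1
  · exact measure_ne_top_of_subset (fun x hx ↦ hx.1) hG_fin

/-- The sum of the Fourier sine series `∑ b j sin (jπx)` on `(0, 1)` (`0` where it diverges). -/
noncomputable def sineSeries (b : ℕ → ℝ) (x : ℝ) : ℝ := ∑' j : ℕ, b j * sin (j * π * x)

theorem norm_mul_sin_le (b : ℕ → ℝ) (x : ℝ) (j : ℕ) : ‖b j * sin (j * π * x)‖ ≤ |b j| := by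
  rw [norm_mul]
  exact mul_le_of_le_one_right (abs_nonneg _) (abs_sin_le_one _)

theorem continuous_sineSeries (hb : Summable fun j ↦ |b j|) : Continuous (sineSeries b) :=
  continuous_tsum (fun j ↦ by fun_prop) hb fun j x ↦ norm_mul_sin_le b x j

theorem abs_sineSeries_le_tsum (hb : Summable fun j ↦ |b j|) (x : ℝ) :
    |sineSeries b x| ≤ ∑' j, |b j| :=
  tsum_of_norm_bounded hb.hasSum (norm_mul_sin_le b x)

theorem abs_sum_range_mul_sin_le (hb : Summable fun j ↦ |b j|) (x : ℝ) (M : ℕ) :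
    |∑ j ∈ Finset.range M, b j * sin (j * π * x)| ≤ |sineSeries b x| + ∑' j, |b (j + M)| := by
  have hsummable := Summable.of_norm_bounded hb (norm_mul_sin_le b x)
  have htail := tsum_of_norm_bounded ((summable_nat_add_iff M).2 hb).hasSum
    fun j ↦ norm_mul_sin_le b x (j + M)
  rw [eq_sub_of_add_eq (hsummable.sum_add_tsum_nat_add M)]
  exact (abs_sub _ _).trans (add_le_add_right htail _)

theorem exists_forall_tsum_abs_le_exp_mul_l2NormOn_add (hG : MeasurableSet G)
    (hG01 : G ⊆ Set.Icc 0 1) (hG_pos : 0 < volume G) :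
    ∃ K > 0, ∀ b : ℕ → ℝ, b 0 = 0 → Summable (fun j ↦ |b j|) → ∀ N : ℕ,
      ∑' j, |b j| ≤
        exp (K * (N + 1)) * (l2NormOn G (sineSeries b) + ∑' j, |b (j + (N + 1))|) := by
  have hG_fin : volume G ≠ ⊤ := measure_ne_top_of_subset hG01 measure_Icc_lt_top.ne
  have hm : 0 < volume.real G / 2 := half_pos (ENNReal.toReal_pos hG_pos.ne' hG_fin)
  obtain ⟨K, hK, hpoly⟩ := exists_sum_abs_le_exp_mul hm
  set q := √(2 / volume.real G)
  have hq : 0 ≤ q := Real.sqrt_nonneg _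
  refine ⟨K + (q + 1), by positivity, fun b hb_zero hb N ↦ ?_⟩
  set O := l2NormOn G (sineSeries b)
  set tail := ∑' j, |b (j + (N + 1))|
  have hO : 0 ≤ O := l2NormOn_nonneg _ _
  have htail : 0 ≤ tail := tsum_nonneg fun j ↦ abs_nonneg _
  have hsq : IntegrableOn (fun x ↦ sineSeries b x ^ 2) G :=
    (((continuous_sineSeries hb).pow 2).integrableOn_Icc (μ := volume)).mono_set hG01
  have hvol := ENNReal.ofReal_le_of_le_toReal
    (measureReal_div_two_le_measureReal_abs_le_l2NormOn hG hG_fin hsq)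
  have hlow := hpoly N b hb_zero _ (fun x hx ↦ hG01 hx.1) hvol (q * O + tail) fun x hx ↦
    (abs_sum_range_mul_sin_le hb x (N + 1)).trans (by gcongr; exact hx.2)
  have hexp : 1 ≤ exp (K * (N + 1)) := one_le_exp (by positivity)
  have hq_le : q + 2 ≤ exp ((q + 1) * (N + 1)) := by
    nlinarith [add_one_le_exp ((q + 1) * (N + 1)), mul_nonneg hq N.cast_nonneg,
      N.cast_nonneg (α := ℝ)]
  calc ∑' j, |b j| = ∑ j ∈ Finset.range (N + 1), |b j| + tail :=
        (hb.sum_add_tsum_nat_add (N + 1)).symm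
    _ ≤ exp (K * (N + 1)) * (q * O + tail) + exp (K * (N + 1)) * tail := by
      gcongr
      exact le_mul_of_one_le_left htail hexp
    _ = exp (K * (N + 1)) * (q * O + 2 * tail) := by ring
    _ ≤ exp (K * (N + 1)) * (exp ((q + 1) * (N + 1)) * (O + tail)) := by
      gcongr
      nlinarith
    _ = exp ((K + (q + 1)) * (N + 1)) * (O + tail) := by rw [← mul_assoc, ← exp_add, ← add_mul]

end SineSeries

section HeatFlow

/-- The sine coefficients, at time `τ`, of the solution of the heat equation on `(0, 1)` with
Dirichlet boundary conditions and initial coefficients `a`; the solution of the backward equation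
with terminal coefficients `a` at time `T` has at time `t` the coefficients
`heatCoeff a (T - t)`. -/
noncomputable def heatCoeff (a : ℕ → ℝ) (τ : ℝ) (j : ℕ) : ℝ :=
  a j * exp (-(j : ℝ) ^ 2 * π ^ 2 * τ)

variable {a : ℕ → ℝ} {σ τ T : ℝ} {E G : Set ℝ}

theorem heatCoeff_eq_zero {j : ℕ} (h : a j = 0) : heatCoeff a τ j = 0 := by
  rw [heatCoeff, h, zero_mul]

theorem abs_heatCoeff_add (a : ℕ → ℝ) (σ τ : ℝ) (j : ℕ) :
    |heatCoeff a (σ + τ) j| = exp (-(π ^ 2 * j ^ 2 * σ)) * |heatCoeff a τ j| := by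
  rw [← abs_of_pos (exp_pos (-(π ^ 2 * _ * _))), ← abs_mul, heatCoeff, heatCoeff, mul_left_comm,
    ← exp_add]
  ring_nf

theorem exp_neg_sq_mul_sq_mul_le_inv_sqrt_mul_inv {x : ℝ} (hx : 0 < x) (hτ : 0 < τ) :
    exp (-x ^ 2 * π ^ 2 * τ) ≤ (√τ)⁻¹ * x⁻¹ := by
  rw [← mul_inv, ← inv_inv (exp _), ← exp_neg]
  refine inv_anti₀ (by positivity) ?_
  calc √τ * x ≤ (√τ * x) ^ 2 + 1 := by nlinarith [sq_nonneg (√τ * x - 1)]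
    _ = 1 * (x ^ 2 * τ) + 1 := by rw [mul_pow, Real.sq_sqrt hτ.le]; ring
    _ ≤ π ^ 2 * (x ^ 2 * τ) + 1 := by
      gcongr
      nlinarith [pi_gt_three]
    _ ≤ exp (π ^ 2 * (x ^ 2 * τ)) := add_one_le_exp _
    _ = exp (-(-x ^ 2 * π ^ 2 * τ)) := by ring_nf

theorem abs_heatCoeff_le_inv_sqrt_mul (ha_zero : a 0 = 0) (hτ : 0 < τ) (j : ℕ) :
    |heatCoeff a τ j| ≤ (√τ)⁻¹ * (|a j| * (j : ℝ)⁻¹) := by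
  rcases j.eq_zero_or_pos with rfl | hj
  · simp [heatCoeff_eq_zero ha_zero]
  · calc |heatCoeff a τ j| = |a j| * exp (-(j : ℝ) ^ 2 * π ^ 2 * τ) := by
          rw [heatCoeff, abs_mul, abs_of_pos (exp_pos _)]
      _ ≤ |a j| * ((√τ)⁻¹ * (j : ℝ)⁻¹) := by
        gcongr
        exact exp_neg_sq_mul_sq_mul_le_inv_sqrt_mul_inv (Nat.cast_pos.2 hj) hτ
      _ = (√τ)⁻¹ * (|a j| * (j : ℝ)⁻¹) := by ring

theorem summable_abs_mul_inv_nat (ha : Summable fun j ↦ a j ^ 2) :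
    Summable fun j : ℕ ↦ |a j| * (j : ℝ)⁻¹ := by
  have hinv : Summable fun j : ℕ ↦ (j : ℝ)⁻¹ ^ 2 := by
    simpa only [inv_pow] using Real.summable_nat_pow_inv.2 one_lt_two
  refine Summable.of_nonneg_of_le (fun _ ↦ by positivity) (fun j ↦ ?_) (ha.add hinv)
  rw [← sq_abs (a j)]
  nlinarith [two_mul_le_add_sq |a j| (j : ℝ)⁻¹, sq_nonneg (|a j|), sq_nonneg ((j : ℝ)⁻¹)]

theorem summable_abs_heatCoeff (ha : Summable fun j ↦ a j ^ 2) (ha_zero : a 0 = 0) (hτ : 0 < τ) :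
    Summable fun j ↦ |heatCoeff a τ j| :=
  .of_nonneg_of_le (fun _ ↦ abs_nonneg _) (abs_heatCoeff_le_inv_sqrt_mul ha_zero hτ)
    ((summable_abs_mul_inv_nat ha).mul_left _)

theorem tsum_abs_heatCoeff_le_inv_sqrt_mul (ha : Summable fun j ↦ a j ^ 2) (ha_zero : a 0 = 0)
    (hτ : 0 < τ) : ∑' j, |heatCoeff a τ j| ≤ (√τ)⁻¹ * ∑' j : ℕ, |a j| * (j : ℝ)⁻¹ := by
  rw [← tsum_mul_left]
  exact (summable_abs_heatCoeff ha ha_zero hτ).tsum_le_tsum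
    (abs_heatCoeff_le_inv_sqrt_mul ha_zero hτ) ((summable_abs_mul_inv_nat ha).mul_left _)

theorem tsum_abs_heatCoeff_nat_add_le (hsum : Summable fun j ↦ |heatCoeff a τ j|) (hσ : 0 ≤ σ)
    (M : ℕ) : ∑' j, |heatCoeff a (σ + τ) (j + M)| ≤
      exp (-(π ^ 2 * M ^ 2 * σ)) * ∑' j, |heatCoeff a τ j| := by
  have hle (j : ℕ) : |heatCoeff a (σ + τ) (j + M)| ≤
      exp (-(π ^ 2 * M ^ 2 * σ)) * |heatCoeff a τ (j + M)| := by
    rw [abs_heatCoeff_add]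
    gcongr
    exact M.le_add_left j
  have htail := ((summable_nat_add_iff M).2 hsum).mul_left (exp (-(π ^ 2 * M ^ 2 * σ)))
  calc ∑' j, |heatCoeff a (σ + τ) (j + M)|
      ≤ ∑' j, exp (-(π ^ 2 * M ^ 2 * σ)) * |heatCoeff a τ (j + M)| :=
        (Summable.of_nonneg_of_le (fun j ↦ abs_nonneg _) hle htail).tsum_le_tsum hle htail
    _ = exp (-(π ^ 2 * M ^ 2 * σ)) * ∑' j, |heatCoeff a τ (j + M)| := tsum_mul_left
    _ ≤ exp (-(π ^ 2 * M ^ 2 * σ)) * ∑' j, |heatCoeff a τ j| := by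
      refine mul_le_mul_of_nonneg_left ?_ (exp_pos _).le
      exact tsum_comp_le_tsum_of_inj hsum (fun j ↦ abs_nonneg _) (add_left_injective M)

theorem monotoneOn_tsum_abs_heatCoeff_sub (ha : Summable fun j ↦ a j ^ 2) (ha_zero : a 0 = 0)
    (T : ℝ) : MonotoneOn (fun t ↦ ∑' j, |heatCoeff a (T - t) j|) (Set.Iio T) := by
  intro s _ s' hs' hss'
  have hle := tsum_abs_heatCoeff_nat_add_le (summable_abs_heatCoeff ha ha_zero (sub_pos.2 hs'))
    (sub_nonneg.2 hss') 0
  simpa [add_comm] using hle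

theorem measurable_l2NormOn_sineSeries_heatCoeff (a : ℕ → ℝ) (G : Set ℝ) :
    Measurable fun τ ↦ l2NormOn G (sineSeries (heatCoeff a τ)) := by
  have hjoint : Measurable fun q : ℝ × ℝ ↦ sineSeries (heatCoeff a q.1) q.2 ^ 2 := by
    refine Measurable.pow_const (Measurable.tsum fun j ↦ ?_) 2
    unfold heatCoeff
    fun_prop
  exact (hjoint.stronglyMeasurable.integral_prod_right' (ν := volume.restrict G)).measurable.sqrt

theorem integrableOn_inv_sqrt_sub {S T : ℝ} (hST : S ≤ T) :
    IntegrableOn (fun t ↦ (√(T - t))⁻¹) (Set.Ioo S T) := by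
  have hrpow : IntervalIntegrable (fun x : ℝ ↦ x ^ (-(1 / 2) : ℝ)) volume 0 (T - S) :=
    intervalIntegral.intervalIntegrable_rpow' (by norm_num)
  have hsub := (hrpow.comp_sub_left T).symm
  rw [sub_sub_cancel, sub_zero, intervalIntegrable_iff_integrableOn_Ioo_of_le hST] at hsub
  refine hsub.congr_fun (fun t ht ↦ ?_) measurableSet_Ioo
  simp only [Real.rpow_neg (sub_nonneg.2 ht.2.le), Real.sqrt_eq_rpow]

theorem integrableOn_l2NormOn_sineSeries_heatCoeff_sub {S : ℝ} (ha : Summable fun j ↦ a j ^ 2)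
    (ha_zero : a 0 = 0) (hG : volume G ≤ 1) (hST : S ≤ T) :
    IntegrableOn (fun t ↦ l2NormOn G (sineSeries (heatCoeff a (T - t)))) (Set.Ioo S T) := by
  refine ((integrableOn_inv_sqrt_sub hST).mul_const (∑' j : ℕ, |a j| * (j : ℝ)⁻¹)).mono'
    ((measurable_l2NormOn_sineSeries_heatCoeff a G).comp
      (measurable_const.sub measurable_id)).aestronglyMeasurable ?_
  filter_upwards [ae_restrict_mem measurableSet_Ioo] with t ht
  have hτ : 0 < T - t := sub_pos.2 ht.2
  rw [Real.norm_of_nonneg (l2NormOn_nonneg _ _)]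
  exact (l2NormOn_le_of_abs_le hG (tsum_nonneg fun j ↦ abs_nonneg _)
    (abs_sineSeries_le_tsum (summable_abs_heatCoeff ha ha_zero hτ))).trans
    (tsum_abs_heatCoeff_le_inv_sqrt_mul ha ha_zero hτ)

theorem exists_forall_frequencyInterpolation_heatCoeff (hG : MeasurableSet G)
    (hG01 : G ⊆ Set.Icc 0 1) (hG_pos : 0 < volume G) :
    ∃ K > 0, ∀ a : ℕ → ℝ, a 0 = 0 → Summable (fun j ↦ a j ^ 2) → ∀ T,
      FrequencyInterpolation K (π ^ 2) (fun t ↦ ∑' j, |heatCoeff a (T - t) j|)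
        (fun t ↦ l2NormOn G (sineSeries (heatCoeff a (T - t)))) (Set.Iio T) T := by
  obtain ⟨K, hK, hlow⟩ := exists_forall_tsum_abs_le_exp_mul_l2NormOn_add hG hG01 hG_pos
  refine ⟨K, hK, fun a ha_zero ha T s hs s' hs' N ↦ ?_⟩
  have htail := tsum_abs_heatCoeff_nat_add_le
    (summable_abs_heatCoeff ha ha_zero (sub_pos.2 hs'.2)) (sub_pos.2 hs'.1).le (N + 1)
  rw [add_comm, sub_add_sub_cancel] at htail
  refine (hlow _ (heatCoeff_eq_zero ha_zero)
    (summable_abs_heatCoeff ha ha_zero (sub_pos.2 hs)) N).trans ?_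
  gcongr
  refine htail.trans ?_
  have hσ : 0 ≤ s' - s := sub_nonneg.2 hs'.1.le
  gcongr
  exact N.le_succ

theorem exists_forall_l2NormOn_heatCoeff_le_mul_setIntegral (hG : MeasurableSet G)
    (hG01 : G ⊆ Set.Icc 0 1) (hG_pos : 0 < volume G) (hE : MeasurableSet E)
    (hET : E ⊆ Set.Ioo 0 T) (hE_pos : 0 < volume E) :
    ∃ C > 0, ∀ a : ℕ → ℝ, a 0 = 0 → Summable (fun j ↦ a j ^ 2) →
      l2NormOn (Set.Ioo 0 1) (sineSeries (heatCoeff a T)) ≤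
        C * ∫ t in E, l2NormOn G (sineSeries (heatCoeff a (T - t))) := by
  obtain ⟨K, hK, hinterp⟩ := exists_forall_frequencyInterpolation_heatCoeff hG hG01 hG_pos
  obtain ⟨C, hC, hobs⟩ := exists_forall_le_mul_setIntegral_of_frequencyInterpolation hK.le
    (show 0 < π ^ 2 by positivity) hE hET hE_pos
  obtain ⟨t, ht⟩ := nonempty_of_measure_ne_zero hE_pos.ne'
  have hT : 0 < T := (hET ht).1.trans (hET ht).2
  refine ⟨C, hC, fun a ha_zero ha ↦ ?_⟩
  have hsum_nonneg (t) : 0 ≤ ∑' j, |heatCoeff a t j| := tsum_nonneg fun j ↦ abs_nonneg _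
  calc l2NormOn (Set.Ioo 0 1) (sineSeries (heatCoeff a T))
      ≤ ∑' j, |heatCoeff a T j| := l2NormOn_le_of_abs_le (by simp) (hsum_nonneg T)
        (abs_sineSeries_le_tsum (summable_abs_heatCoeff ha ha_zero hT))
    _ = ∑' j, |heatCoeff a (T - 0) j| := by rw [sub_zero]
    _ ≤ C * ∫ t in E, l2NormOn G (sineSeries (heatCoeff a (T - t))) :=
      hobs _ _ (fun s hs ↦ hinterp a ha_zero ha T s (hET hs).2) (fun t ↦ hsum_nonneg _)
        ((monotoneOn_tsum_abs_heatCoeff_sub ha ha_zero T).mono fun t ht ↦ ht.2)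
        ((integrableOn_l2NormOn_sineSeries_heatCoeff_sub ha ha_zero
          ((measure_mono hG01).trans (by simp)) hT.le).mono_set hET)
        fun t ↦ l2NormOn_nonneg _ _

end HeatFlow

theorem stmt_13_general {G E : Set ℝ} {T : ℝ} (hG : MeasurableSet G) (hG01 : G ⊆ Set.Icc 0 1)
    (hG_pos : 0 < volume G) (hE : MeasurableSet E) (hET : E ⊆ Set.Ioo 0 T)
    (hE_pos : 0 < volume E) :
    ∃ C > 0, ∀ a : ℕ → ℝ, Summable (fun j => a j ^ 2) →
      (∫ x in Set.Ioo (0:ℝ) 1,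
          (∑' j : ℕ, if 1 ≤ j
            then a j * Real.exp (-(j : ℝ) ^ 2 * π ^ 2 * (T - 0)) * Real.sin (j * π * x)
            else 0) ^ 2) ^ ((1:ℝ)/2) ≤
        C * ∫ t in E,
          (∫ x in G,
            (∑' j : ℕ, if 1 ≤ j
              then a j * Real.exp (-(j : ℝ) ^ 2 * π ^ 2 * (T - t)) * Real.sin (j * π * x)
              else 0) ^ 2) ^ ((1:ℝ)/2) := by
  obtain ⟨C, hC, hobs⟩ :=
    exists_forall_l2NormOn_heatCoeff_le_mul_setIntegral hG hG01 hG_pos hE hET hE_pos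
  refine ⟨C, hC, fun a ha ↦ ?_⟩
  have ha' : Summable fun j ↦ (if 1 ≤ j then a j else 0) ^ 2 :=
    ha.of_nonneg_of_le (fun j ↦ sq_nonneg _) fun j ↦ by split_ifs <;> simp [sq_nonneg]
  simpa only [l2NormOn, sineSeries, heatCoeff, Real.sqrt_eq_rpow, ite_mul, zero_mul, sub_zero]
    using hobs (fun j ↦ if 1 ≤ j then a j else 0) (by simp) ha'

theorem stmt_13 (x₀ R : ℝ) (hx₀ : x₀ ∈ Set.Ioo (0:ℝ) 1) (hR : R ∈ Set.Ioc (0:ℝ) 1)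
    (hball : Set.Ioo (x₀ - 4 * R) (x₀ + 4 * R) ⊆ Set.Ioo (0:ℝ) 1)
    (G : Set ℝ) (hG : MeasurableSet G) (hGsub : G ⊆ Set.Ioo (x₀ - R) (x₀ + R))
    (hGpos : 0 < volume G)
    (T : ℝ) (hT : 0 < T)
    (E : Set ℝ) (hE : MeasurableSet E) (hEsub : E ⊆ Set.Ioo 0 T) (hEpos : 0 < volume E) :
    ∃ C > 0, ∀ a : ℕ → ℝ, Summable (fun j => a j ^ 2) →
      (∫ x in Set.Ioo (0:ℝ) 1,
          (∑' j : ℕ, if 1 ≤ j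
            then a j * Real.exp (-(j : ℝ) ^ 2 * π ^ 2 * (T - 0)) * Real.sin (j * π * x)
            else 0) ^ 2) ^ ((1:ℝ)/2) ≤
        C * ∫ t in E,
          (∫ x in G,
            (∑' j : ℕ, if 1 ≤ j
              then a j * Real.exp (-(j : ℝ) ^ 2 * π ^ 2 * (T - t)) * Real.sin (j * π * x)
              else 0) ^ 2) ^ ((1:ℝ)/2) := by
  have hG01 : G ⊆ Set.Icc 0 1 := calc
    G ⊆ Set.Ioo (x₀ - R) (x₀ + R) := hGsub
    _ ⊆ Set.Ioo (x₀ - 4 * R) (x₀ + 4 * R) :=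
      Set.Ioo_subset_Ioo (by linarith [hR.1]) (by linarith [hR.1])
    _ ⊆ Set.Ioo 0 1 := hball
    _ ⊆ Set.Icc 0 1 := Set.Ioo_subset_Icc_self
  exact stmt_13_general hG hG01 hGpos hE hEsub hEpos
end
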